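/- arXiv:1502.03365 — 2 statements merged into one kernel-verified Lean document; each statement's English description precedes it below -/
import Mathlib

section
/- Consider the labeled stochastic block model 𝒢(n, a/n, b/n, μ, ν) with true type assignment σ and a weight function w : 𝓛 → [−1,1]. Set α = (1/2)·Σ_ℓ w(ℓ)·(a·μ(ℓ) + b·ν(ℓ)) and β = (1/2)·Σ_ℓ w(ℓ)·(a·μ(ℓ) − b·ν(ℓ)). Let G' be obtained from G by removing all edges incident to vertices of degree larger than (3/2)·(a+b)/2, let W' be the weighted adjacency matrix of G', let D' = W' − (α/n)·J where J is the all-one matrix, and let x̂ be a maximizer of |xᵀ D' x| over unit vectors x ∈ ℝ^n. There exist constants C₀ and C (not depending on a, b, μ, ν) such that: if a > b > C₀ and β² > C·(a+b), then asymptotically almost surely Q(σ, sign(x̂)) > 0, where sign(x̂) ∈ {±1}^n takes the componentwise sign of x̂. -/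
open Finset Filter Real

namespace LSBM

/-- Ordered pairs `u < v` of vertices. -/
abbrev Pairs (n : ℕ) := {p : Fin n × Fin n // p.1 < p.2}

/-- A labeled-graph configuration: each pair `u < v` carries `none` (no edge)
or `some ℓ` (an edge with label `ℓ`). -/
abbrev EdgeConf (n : ℕ) (L : Type*) := Pairs n → Option L

variable {L : Type*}

/-- The label (if any) on the edge between `u` and `v`. -/
def getLabel {n : ℕ} (E : EdgeConf n L) (u v : Fin n) : Option L :=
  if h : u < v then E ⟨(u, v), h⟩ else if h' : v < u then E ⟨(v, u), h'⟩ else none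

/-- Per-pair mass under the labeled stochastic block model. -/
noncomputable def sbmPairMass (n : ℕ) (a b : ℝ) (μ ν : L → ℝ) (same : Bool) : Option L → ℝ
  | none => if same then 1 - a / n else 1 - b / n
  | some ℓ => if same then (a / n) * μ ℓ else (b / n) * ν ℓ

/-- Joint mass of a (type assignment, labeled graph) outcome under the labeled SBM. -/
noncomputable def sbmMass (n : ℕ) (a b : ℝ) (μ ν : L → ℝ)
    (x : (Fin n → Bool) × EdgeConf n L) : ℝ :=
  (1 / 2 : ℝ) ^ n *
    ∏ p : Pairs n, sbmPairMass n a b μ ν (x.1 p.1.1 == x.1 p.1.2) (x.2 p)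

/-- Probability of an event under the labeled SBM (joint in types and graph). -/
noncomputable def sbmProb [Fintype L] (n : ℕ) (a b : ℝ) (μ ν : L → ℝ)
    (A : Set ((Fin n → Bool) × EdgeConf n L)) : ℝ :=
  ∑ x : (Fin n → Bool) × EdgeConf n L, A.indicator (sbmMass n a b μ ν) x

/-- Probability of a labeled-graph event under the labeled SBM (marginal over types). -/
noncomputable def sbmGraphProb [Fintype L] (n : ℕ) (a b : ℝ) (μ ν : L → ℝ)
    (A : Set (EdgeConf n L)) : ℝ :=
  sbmProb n a b μ ν {x | x.2 ∈ A}

/-- Conditional (given the type assignment `σ`) probability of a labeled-graph event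
under the labeled SBM. -/
noncomputable def sbmCondProb [Fintype L] (n : ℕ) (a b : ℝ) (μ ν : L → ℝ)
    (σ : Fin n → Bool) (A : Set (EdgeConf n L)) : ℝ :=
  ∑ E : EdgeConf n L, A.indicator
    (fun E' => ∏ p : Pairs n, sbmPairMass n a b μ ν (σ p.1.1 == σ p.1.2) (E' p)) E

/-- Conditional (given `σ`) expectation of a function of the labeled graph. -/
noncomputable def sbmCondExp [Fintype L] (n : ℕ) (a b : ℝ) (μ ν : L → ℝ)
    (σ : Fin n → Bool) (f : EdgeConf n L → ℝ) : ℝ :=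
  ∑ E : EdgeConf n L,
    (∏ p : Pairs n, sbmPairMass n a b μ ν (σ p.1.1 == σ p.1.2) (E p)) * f E

/-- Per-pair mass under the labeled Erdős–Rényi model. -/
noncomputable def erPairMass (n : ℕ) (a b : ℝ) (μ ν : L → ℝ) : Option L → ℝ
  | none => 1 - (a + b) / (2 * n)
  | some ℓ => ((a + b) / (2 * n)) * ((a * μ ℓ + b * ν ℓ) / (a + b))

/-- Mass of a labeled graph under the labeled Erdős–Rényi model. -/
noncomputable def erMass [Fintype L] (n : ℕ) (a b : ℝ) (μ ν : L → ℝ) (E : EdgeConf n L) : ℝ :=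
  ∏ p : Pairs n, erPairMass n a b μ ν (E p)

/-- Probability of a labeled-graph event under the labeled Erdős–Rényi model. -/
noncomputable def erProb [Fintype L] (n : ℕ) (a b : ℝ) (μ ν : L → ℝ)
    (A : Set (EdgeConf n L)) : ℝ :=
  ∑ E : EdgeConf n L, A.indicator (erMass n a b μ ν) E

/-- Expectation of a function of the labeled graph under the labeled Erdős–Rényi model. -/
noncomputable def erExp [Fintype L] (n : ℕ) (a b : ℝ) (μ ν : L → ℝ)
    (f : EdgeConf n L → ℝ) : ℝ :=
  ∑ E : EdgeConf n L, erMass n a b μ ν E * f E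

/-- `μ` is a probability distribution on the (finite) label set. -/
def IsProbVec [Fintype L] (μ : L → ℝ) : Prop := (∀ ℓ, 0 ≤ μ ℓ) ∧ ∑ ℓ, μ ℓ = 1

/-- The reconstruction-threshold parameter `τ`. -/
noncomputable def tau [Fintype L] (a b : ℝ) (μ ν : L → ℝ) : ℝ :=
  ∑ ℓ, (a * μ ℓ - b * ν ℓ) ^ 2 / (2 * (a * μ ℓ + b * ν ℓ))

/-- The weighted adjacency matrix `W` with `W u v = A u v * w (L u v)`. -/
def Wmat {n : ℕ} (w : L → ℝ) (E : EdgeConf n L) : Matrix (Fin n) (Fin n) ℝ :=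
  fun u v => match getLabel E u v with
    | none => 0
    | some ℓ => w ℓ

/-- The ±1 vector associated with a Boolean type assignment (`true ↦ +1`). -/
def signVec {n : ℕ} (σ : Fin n → Bool) : Fin n → ℝ := fun u => if σ u then 1 else -1

/-- `x` is a vector with entries in `{±1}`. -/
def IsSignVec {n : ℕ} (x : Fin n → ℝ) : Prop := ∀ u, x u = 1 ∨ x u = -1

/-- Componentwise sign of a real vector. -/
noncomputable def signR {n : ℕ} (x : Fin n → ℝ) : Fin n → ℝ :=
  fun u => if 0 ≤ x u then 1 else -1

open Classical in
/-- Hamming distance between two vectors. -/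
noncomputable def hamming {n : ℕ} (x y : Fin n → ℝ) : ℕ :=
  (univ.filter fun u => x u ≠ y u).card

/-- The overlap `Q(x, y) = 1/2 - (1/n) min(d(x,y), d(x,-y))`. -/
noncomputable def overlap (n : ℕ) (x y : Fin n → ℝ) : ℝ :=
  1 / 2 - (1 / n) * min (hamming x y : ℝ) (hamming x (-y) : ℝ)

open Classical in
/-- The weight of the cut induced by a ±1 assignment `σ`:
`∑_{(u,v) : u < v, σ_u ≠ σ_v} W_{uv}`. -/
noncomputable def cutWeight {n : ℕ} (w : L → ℝ) (E : EdgeConf n L) (σ : Fin n → ℝ) : ℝ :=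
  ∑ p : Pairs n, if σ p.1.1 ≠ σ p.1.2 then Wmat w E p.1.1 p.1.2 else 0

/-- The quadratic form `xᵀ M x`. -/
def quadForm {n : ℕ} (M : Matrix (Fin n) (Fin n) ℝ) (x : Fin n → ℝ) : ℝ :=
  ∑ u, ∑ v, x u * M u v * x v

/-- The entrywise inner product `⟨A, B⟩ = ∑_{u,v} A u v * B u v`. -/
def mInner {n : ℕ} (A B : Matrix (Fin n) (Fin n) ℝ) : ℝ :=
  ∑ u, ∑ v, A u v * B u v

/-- The degree of a vertex. -/
def degree {n : ℕ} (E : EdgeConf n L) (u : Fin n) : ℕ :=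
  (univ.filter fun v => (getLabel E u v).isSome).card

open Classical in
/-- The weighted adjacency matrix of the graph obtained by removing all edges incident
to vertices of degree larger than `(3/2)·(a+b)/2`. -/
noncomputable def prunedW {n : ℕ} (a b : ℝ) (w : L → ℝ) (E : EdgeConf n L) :
    Matrix (Fin n) (Fin n) ℝ :=
  fun u v =>
    if (degree E u : ℝ) ≤ (3 / 2) * ((a + b) / 2) ∧
       (degree E v : ℝ) ≤ (3 / 2) * ((a + b) / 2)
    then Wmat w E u v else 0

/-- The conditional (given `σ`) entrywise expectation `E[W | σ]` of the weighted
adjacency matrix. -/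
noncomputable def condEW {n : ℕ} [Fintype L] (a b : ℝ) (μ ν w : L → ℝ)
    (σ : Fin n → Bool) : Matrix (Fin n) (Fin n) ℝ :=
  fun u v =>
    if u = v then 0
    else if σ u = σ v then (a / n) * ∑ ℓ, μ ℓ * w ℓ
    else (b / n) * ∑ ℓ, ν ℓ * w ℓ

/-- The matrix `D' = W' - (α/n) J` used in the spectral method, where
`α = (1/2)·∑_ℓ w(ℓ)(aμ(ℓ)+bν(ℓ))` and `J` is the all-one matrix. -/
noncomputable def Dmat {n : ℕ} [Fintype L] (a b : ℝ) (μ ν w : L → ℝ)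
    (E : EdgeConf n L) : Matrix (Fin n) (Fin n) ℝ :=
  fun u v => prunedW a b w E u v - ((1 / 2) * ∑ ℓ, w ℓ * (a * μ ℓ + b * ν ℓ)) / n

/-- The spectral norm (ℓ²-operator norm) of a real square matrix. -/
noncomputable def specNorm {n : ℕ} (M : Matrix (Fin n) (Fin n) ℝ) : ℝ :=
  ‖Matrix.toEuclideanCLM (𝕜 := ℝ) M‖

/-- The number of `k`-cycles carrying the label sequence `ℓ`, in the canonical
orientation: starting from the minimal-index vertex of the cycle toward its
neighbor of smaller index. -/
def cycleCount [DecidableEq L] (n k : ℕ) (E : EdgeConf n L) (ℓ : Fin k → L) : ℕ :=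
  if hk : 0 < k then
    haveI : NeZero k := ⟨hk.ne'⟩
    (univ.filter fun c : Fin k → Fin n =>
      Function.Injective c ∧ (∀ i, c 0 ≤ c i) ∧
      c 1 < c ⟨k - 1, Nat.sub_lt hk one_pos⟩ ∧
      ∀ i : Fin k, getLabel E (c i) (c (i + 1)) = some (ℓ i)).card
  else 0

/-- The Poisson probability mass function. -/
noncomputable def poissonPMF (m : ℝ) (j : ℕ) : ℝ :=
  Real.exp (-m) * m ^ j / (Nat.factorial j)

/-- The mean cycle count `λ([ℓ]_k)` under the labeled Erdős–Rényi model. -/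
noncomputable def lamER [Fintype L] (a b : ℝ) (μ ν : L → ℝ) {k : ℕ} (ℓ : Fin k → L) : ℝ :=
  (1 / ((2 : ℝ) ^ (k + 1) * k)) * ∏ i, (a * μ (ℓ i) + b * ν (ℓ i))

/-- The mean cycle count `ξ([ℓ]_k)` under the labeled SBM. -/
noncomputable def xiSBM [Fintype L] (a b : ℝ) (μ ν : L → ℝ) {k : ℕ} (ℓ : Fin k → L) : ℝ :=
  (1 / ((2 : ℝ) ^ (k + 1) * k)) *
    (∏ i, (a * μ (ℓ i) + b * ν (ℓ i)) + ∏ i, (a * μ (ℓ i) - b * ν (ℓ i)))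

/-- The per-pair likelihood-ratio factor `W_{uv}(G, L, σ)` (SBM versus labeled
Erdős–Rényi), as a function of the pair status (`same` type or not) and the
edge/label information on the pair. -/
noncomputable def likPair (n : ℕ) (a b : ℝ) (μ ν : L → ℝ) (same : Bool) :
    Option L → ℝ
  | some ℓ =>
      if same then 2 * a * μ ℓ / (a * μ ℓ + b * ν ℓ)
      else 2 * b * ν ℓ / (a * μ ℓ + b * ν ℓ)
  | none =>
      if same then (1 - a / n) / (1 - (a + b) / (2 * n))
      else (1 - b / n) / (1 - (a + b) / (2 * n))

/-- The likelihood ratio `Y_n = ℙ_n / ℙ'_n` of the labeled SBM with respect to the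
labeled Erdős–Rényi model. -/
noncomputable def Ylik [Fintype L] (n : ℕ) (a b : ℝ) (μ ν : L → ℝ)
    (E : EdgeConf n L) : ℝ :=
  (1 / 2 : ℝ) ^ n * ∑ σ : Fin n → Bool,
    ∏ p : Pairs n, likPair n a b μ ν (σ p.1.1 == σ p.1.2) (E p)


section Prob
variable {ι Ω : Type*} [Fintype ι] [DecidableEq ι] [Fintype Ω]

noncomputable def Pr (q : ι → Ω → ℝ) (A : Set (ι → Ω)) : ℝ :=
  ∑ E : ι → Ω, A.indicator (fun E' => ∏ p, q p (E' p)) E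

lemma Pr_mono (q : ι → Ω → ℝ) (hq : ∀ p o, 0 ≤ q p o) {A B : Set (ι → Ω)} (h : A ⊆ B) :
    Pr q A ≤ Pr q B := by
  unfold Pr
  refine Finset.sum_le_sum fun E _ => ?_
  exact Set.indicator_le_indicator_of_subset h (fun E => Finset.prod_nonneg fun p _ => hq _ _) E

lemma Pr_nonneg (q : ι → Ω → ℝ) (hq : ∀ p o, 0 ≤ q p o) (A : Set (ι → Ω)) : 0 ≤ Pr q A :=
  Finset.sum_nonneg fun E _ => Set.indicator_nonneg (fun E _ => Finset.prod_nonneg fun p _ => hq _ _) E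

lemma Pr_biUnion_le (q : ι → Ω → ℝ) (hq : ∀ p o, 0 ≤ q p o) {κ : Type*} (s : Finset κ)
    (A : κ → Set (ι → Ω)) : Pr q {E | ∃ k ∈ s, E ∈ A k} ≤ ∑ k ∈ s, Pr q (A k) := by
  unfold Pr
  rw [Finset.sum_comm]
  refine Finset.sum_le_sum fun E _ => ?_
  by_cases h : E ∈ {E | ∃ k ∈ s, E ∈ A k}
  · obtain ⟨k, hk, hE⟩ := h
    rw [Set.indicator_of_mem (show E ∈ {E | ∃ k ∈ s, E ∈ A k} from ⟨k, hk, hE⟩)]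
    have := Finset.single_le_sum (f := fun k => (A k).indicator (fun E' => ∏ p, q p (E' p)) E)
      (fun k _ => Set.indicator_nonneg (fun E _ => Finset.prod_nonneg fun p _ => hq _ _) E) hk
    simpa [Set.indicator_of_mem hE] using this
  · rw [Set.indicator_of_notMem h]
    exact Finset.sum_nonneg fun k _ =>
      Set.indicator_nonneg (fun E _ => Finset.prod_nonneg fun p _ => hq _ _) E

lemma Pr_union_le (q : ι → Ω → ℝ) (hq : ∀ p o, 0 ≤ q p o) (A B : Set (ι → Ω)) :
    Pr q (A ∪ B) ≤ Pr q A + Pr q B := by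
  unfold Pr
  rw [← Finset.sum_add_distrib]
  refine Finset.sum_le_sum fun E _ => ?_
  have hp : 0 ≤ ∏ p, q p (E p) := Finset.prod_nonneg fun p _ => hq _ _
  by_cases hA : E ∈ A <;> by_cases hB : E ∈ B <;> simp [Set.indicator, hA, hB, hp]

lemma Pr_univ (q : ι → Ω → ℝ) (hs : ∀ p, ∑ o, q p o = 1) : Pr q Set.univ = 1 := by
  have h := Finset.prod_univ_sum (fun _ : ι => (Finset.univ : Finset Ω)) q
  simp only [hs, Fintype.piFinset_univ, Finset.prod_const_one] at h
  simp [Pr, ← h]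

lemma Pr_compl (q : ι → Ω → ℝ) (hs : ∀ p, ∑ o, q p o = 1) (A : Set (ι → Ω)) :
    Pr q A = 1 - Pr q Aᶜ := by
  rw [← Pr_univ q hs]
  unfold Pr
  rw [← Finset.sum_sub_distrib]
  refine Finset.sum_congr rfl fun E _ => ?_
  by_cases hA : E ∈ A <;> simp [Set.indicator, hA]

lemma Pr_markov (q : ι → Ω → ℝ) (hq : ∀ p o, 0 ≤ q p o) (f : ι → Ω → ℝ) (t : ℝ) :
    Pr q {E | t ≤ ∑ p, f p (E p)} ≤ exp (-t) * ∏ p, ∑ o, q p o * exp (f p o) := by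
  have h := Finset.prod_univ_sum (fun _ : ι => (Finset.univ : Finset Ω))
    (fun p o => q p o * exp (f p o))
  rw [h, Fintype.piFinset_univ, Finset.mul_sum]
  unfold Pr
  refine Finset.sum_le_sum fun E _ => ?_
  have hp : 0 ≤ ∏ p, q p (E p) := Finset.prod_nonneg fun p _ => hq _ _
  rw [Finset.prod_mul_distrib, ← exp_sum]
  by_cases hE : E ∈ {E | t ≤ ∑ p, f p (E p)}
  · rw [Set.indicator_of_mem hE]
    have : (1:ℝ) ≤ exp (-t) * exp (∑ p, f p (E p)) := by
      rw [← exp_add]; apply one_le_exp; have : t ≤ ∑ p, f p (E p) := hE; linarith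
    nlinarith
  · rw [Set.indicator_of_notMem hE]; positivity

/-- centered exponential moment for one coordinate -/
lemma mgf_one (q g : Ω → ℝ) (hq : ∀ o, 0 ≤ q o) (hs : ∑ o, q o = 1) (hg : ∀ o, |g o| ≤ 1)
    (pb : ℝ) (hpb : ∑ o, q o * g o ^ 2 ≤ pb) (t : ℝ) (ht : |t| ≤ 1/2) :
    ∑ o, q o * exp (t * (g o - ∑ o', q o' * g o')) ≤ exp (t^2 * pb) := by
  set m := ∑ o', q o' * g o' with hm
  have hm1 : |m| ≤ 1 := by
    calc |m| ≤ ∑ o, |q o * g o| := Finset.abs_sum_le_sum_abs _ _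
      _ ≤ ∑ o, q o := by
        refine Finset.sum_le_sum fun o _ => ?_
        rw [abs_mul, abs_of_nonneg (hq o)]
        exact mul_le_of_le_one_right (hq o) (hg o)
      _ = 1 := hs
  have h1 : ∀ o, q o * exp (t * (g o - m)) ≤
      q o + t * (q o * g o) - t * m * q o + t^2 * (q o * g o^2) - 2 * t^2 * m * (q o * g o)
        + t^2 * m^2 * q o := by
    intro o
    have h2 : |t * (g o - m)| ≤ 1 := by
      rw [abs_mul]
      have : |g o - m| ≤ 2 := by
        have := abs_sub (g o) m; have := hg o; linarith
      nlinarith [abs_nonneg t, abs_nonneg (g o - m)]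
    have h3 := (abs_le.1 (Real.abs_exp_sub_one_sub_id_le h2)).2
    have h4 : exp (t * (g o - m)) ≤ 1 + t * (g o - m) + (t * (g o - m))^2 := by linarith
    have := mul_le_mul_of_nonneg_left h4 (hq o)
    nlinarith
  calc _ ≤ ∑ o, (q o + t * (q o * g o) - t * m * q o + t^2 * (q o * g o^2)
        - 2 * t^2 * m * (q o * g o) + t^2 * m^2 * q o) := Finset.sum_le_sum fun o _ => h1 o
    _ = 1 + t^2 * (∑ o, q o * g o^2) - t^2 * m^2 := by
      simp only [Finset.sum_add_distrib, Finset.sum_sub_distrib, ← Finset.mul_sum, hs, ← hm]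
      ring
    _ ≤ 1 + t^2 * pb := by
      have := mul_le_mul_of_nonneg_left hpb (sq_nonneg t)
      have : 0 ≤ t^2 * m^2 := by positivity
      linarith
    _ ≤ exp (t^2 * pb) := by have := add_one_le_exp (t^2*pb); linarith

lemma bernstein (q : ι → Ω → ℝ) (hq : ∀ p o, 0 ≤ q p o) (hs : ∀ p, ∑ o, q p o = 1)
    (g : Ω → ℝ) (hg : ∀ o, |g o| ≤ 1) (pb : ℝ) (hpb : ∀ p, ∑ o, q p o * g o ^ 2 ≤ pb)
    (c : ι → ℝ) (th : ℝ) (hth : ∀ p, |th * c p| ≤ 1/2) (t : ℝ) (hth0 : 0 < th) :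
    Pr q {E | t ≤ ∑ p, c p * (g (E p) - ∑ o, q p o * g o)} ≤
      exp (- (th * t) + th^2 * pb * ∑ p, c p ^ 2) := by
  have h := Pr_markov q hq (fun p o => (th * c p) * (g o - ∑ o', q p o' * g o')) (th * t)
  have hset : {E : ι → Ω | t ≤ ∑ p, c p * (g (E p) - ∑ o, q p o * g o)} =
      {E | th * t ≤ ∑ p, (th * c p) * (g (E p) - ∑ o', q p o' * g o')} := by
    ext E
    simp only [Set.mem_ofPred_eq, mul_assoc, ← Finset.mul_sum]
    rw [mul_le_mul_iff_right₀ hth0]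
  rw [hset]
  refine h.trans ?_
  rw [exp_add]
  refine mul_le_mul_of_nonneg_left ?_ (exp_pos _).le
  calc _ ≤ ∏ p, exp ((th * c p)^2 * pb) := by
        refine Finset.prod_le_prod (fun p _ => Finset.sum_nonneg fun o _ =>
          mul_nonneg (hq _ _) (exp_pos _).le) fun p _ => ?_
        exact mgf_one (q p) g (hq p) (hs p) hg pb (hpb p) _ (hth p)
    _ = _ := by
        rw [← exp_sum, Finset.mul_sum]
        congr 1
        refine Finset.sum_congr rfl fun p _ => by ring

/-- Chernoff for 0/1 sums with weights at most two -/
lemma chernoff (q : ι → Ω → ℝ) (hq : ∀ p o, 0 ≤ q p o) (hs : ∀ p, ∑ o, q p o = 1)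
    (g : Ω → ℝ) (hg : ∀ o, g o = 0 ∨ g o = 1) (pb : ℝ) (hpb : ∀ p, ∑ o, q p o * g o ≤ pb)
    (c : ι → ℝ) (hc : ∀ p, c p = 0 ∨ (1 ≤ c p ∧ c p ≤ 2)) (th : ℝ) (hth0 : 0 ≤ th) (t : ℝ) :
    Pr q {E | t ≤ ∑ p, c p * g (E p)} ≤
      exp (- (th * t) + pb * exp (2 * th) * ∑ p, c p) := by
  have h := Pr_markov q hq (fun p o => th * (c p * g o)) (th * t)
  have hsub : {E : ι → Ω | t ≤ ∑ p, c p * g (E p)} ⊆ {E | th * t ≤ ∑ p, th * (c p * g (E p))} := by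
    intro E hE
    simp only [Set.mem_ofPred_eq, ← Finset.mul_sum] at hE ⊢
    exact mul_le_mul_of_nonneg_left hE hth0
  refine (Pr_mono q hq hsub).trans (h.trans ?_)
  rw [exp_add]
  refine mul_le_mul_of_nonneg_left ?_ (exp_pos _).le
  calc _ ≤ ∏ p, exp (pb * exp (2 * th) * c p) := by
        refine Finset.prod_le_prod (fun p _ => Finset.sum_nonneg fun o _ =>
          mul_nonneg (hq _ _) (exp_pos _).le) fun p _ => ?_
        have e1 : ∀ o, q p o * exp (th * (c p * g o)) =
            q p o + (exp (th * c p) - 1) * (q p o * g o) := by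
          intro o; rcases hg o with h | h <;> simp [h]; ring
        have e2 : ∑ o, q p o * exp (th * (c p * g o)) = 1 + (exp (th * c p) - 1) * ∑ o, q p o * g o := by
          simp only [e1, Finset.sum_add_distrib, ← Finset.mul_sum, hs]
        rw [e2]
        have hpb0 : 0 ≤ ∑ o, q p o * g o := Finset.sum_nonneg fun o _ =>
          mul_nonneg (hq _ _) (by rcases hg o with h | h <;> simp [h])
        have e3 : exp (th * c p) - 1 ≤ exp (2 * th) * c p := by
          rcases hc p with h | ⟨h1, h2⟩
          · simp [h]
          · have : exp (th * c p) ≤ exp (2 * th) := exp_le_exp.2 (by nlinarith)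
            nlinarith [exp_pos (2*th)]
        have e3' : 0 ≤ exp (2 * th) * c p := by
          rcases hc p with h | ⟨h1, h2⟩
          · simp [h]
          · have := exp_pos (2*th); nlinarith
        have e4 : (exp (th * c p) - 1) * ∑ o, q p o * g o ≤ pb * exp (2 * th) * c p := by
          nlinarith [hpb p]
        have := add_one_le_exp (pb * exp (2 * th) * c p)
        linarith
    _ = _ := by rw [← exp_sum, Finset.mul_sum]

end Prob

lemma geo_trunc (r B : ℝ) (hr : 2 ≤ r) (hB : 0 ≤ B) (n : ℕ) :
    ∑ i ∈ range n, (if r^i ≤ B then r^i else 0) ≤ 2 * B := by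
  have h0 : ∀ n : ℕ, ∑ i ∈ range n, (if r^i ≤ B then r^i else 0) ≤ r^n := by
    intro n
    induction n with
    | zero => simp
    | succ k ih =>
      rw [sum_range_succ, pow_succ]
      have : (0:ℝ) ≤ r^k := by positivity
      split_ifs <;> nlinarith
  induction n with
  | zero => simpa using hB
  | succ k ih =>
    rw [sum_range_succ]
    split_ifs with h
    · have := h0 k; linarith
    · linarith

/-- the key scalar inequality -/
lemma key_scalar (c rho al ai lam : ℝ) (j : ℕ) (hc : 0 < c) (hr0 : 0 < rho) (hr2 : rho < 2)
    (hal : 0 < al) (hai0 : 0 < ai) (hai : ai ≤ 1)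
    (hlam : lam = c * rho^2 * 16^j / (ai * al)) (hlam1 : exp 8 < lam)
    (hd : c * log lam ≤ 28 * (rho^2 * al * log (exp 1 * 16^j / al))) :
    c ≤ rho * (1000 * al + (1/4)^j) := by
  by_contra hcon
  push Not at hcon
  have hlog8 : 8 < log lam := by
    rw [Real.lt_log_iff_exp_lt ((exp_pos _).trans hlam1)]; exact hlam1
  set y : ℝ := (1/4)^j / al with hy
  have hy0 : 0 < y := by positivity
  have hc' : rho * al * (1000 + y) < c := by
    have : rho * al * (1000 + y) = rho * (1000 * al + (1/4)^j) := by
      rw [hy]; field_simp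
    rw [this]; exact hcon
  have hlogsplit : log (exp 1 * 16^j / al) = 1 + log y + j * log 64 := by
    have : exp 1 * 16^j / al = exp 1 * (y * 64^j) := by
      rw [hy]
      have : (16:ℝ)^j = (1/4)^j * 64^j := by rw [← mul_pow]; norm_num
      rw [this]; ring
    rw [this, log_mul (exp_pos _).ne' (by positivity), log_mul hy0.ne' (by positivity), log_exp,
      log_pow]; ring
  rw [hlogsplit] at hd
  have h1 : (1000 + y) * log lam < 28 * rho * (1 + log y + j * log 64) := by
    have h2 : rho * al * (1000 + y) * log lam < c * log lam :=
      mul_lt_mul_of_pos_right hc' (by linarith)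
    have h3 : rho * al * ((1000 + y) * log lam) < rho * al * (28 * rho * (1 + log y + j * log 64)) := by
      calc _ = rho * al * (1000 + y) * log lam := by ring
        _ < c * log lam := h2
        _ ≤ _ := hd
        _ = _ := by ring
    exact lt_of_mul_lt_mul_left h3 (by positivity)
  have hlog64 : log 64 = 3 * log 4 := by
    rw [show (64:ℝ) = 4^3 by norm_num, log_pow]; norm_num
  have hlog4 : 0 < log 4 := log_pos (by norm_num)
  have hlog4' : log 4 < 2 := by
    rw [Real.log_lt_iff_lt_exp (by norm_num)]
    have := Real.add_one_lt_exp (show (1:ℝ) ≠ 0 by norm_num)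
    have h2 : exp 2 = exp 1 * exp 1 := by rw [← exp_add]; norm_num
    rw [h2]; nlinarith
  have hlogy : log y ≤ y / 8 + 7 := by
    have h := log_le_sub_one_of_pos (show 0 < y/8 by positivity)
    rw [log_div hy0.ne' (by norm_num)] at h
    have : log 8 ≤ 8 := by have := log_le_sub_one_of_pos (show (0:ℝ)<8 by norm_num); linarith
    linarith
  -- 28 rho (1 + log y) ≤ 56*(8+y/8) = 448 + 7 y
  have h5 : 28 * rho * (1 + log y) ≤ 56 * (8 + y/8) := by nlinarith
  have h6 : (1000 + y) * log lam ≥ 1000 * log lam + 8 * y := by nlinarith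
  have h7 : 1000 * log lam < 448 + 28 * (rho * j) * log 64 := by nlinarith
  have hj0 : (0:ℝ) ≤ j := by positivity
  by_cases hcase : 1 ≤ rho^3 * 4^j
  · have h8 : (4:ℝ)^j ≤ lam := by
      have e1 : rho * (1000) * rho^2 * 16^j ≤ lam := by
        rw [hlam, le_div_iff₀ (by positivity)]
        have e2 : rho * al * 1000 ≤ c := by
          have : 0 < rho * al * y := by positivity
          nlinarith
        calc rho * 1000 * rho^2 * 16^j * (ai * al) = (rho * al * 1000) * (rho^2 * 16^j) * ai := by ring
          _ ≤ (rho * al * 1000) * (rho^2 * 16^j) * 1 := by gcongr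
          _ ≤ c * (rho^2 * 16^j) * 1 := by gcongr
          _ = _ := by ring
      have e3 : rho * (1000) * rho^2 * 16^j = 1000 * (rho^3 * 4^j) * 4^j := by
        rw [show (16:ℝ) = 4*4 by norm_num, mul_pow]; ring
      rw [e3] at e1
      have : (0:ℝ) < 4^j := by positivity
      nlinarith
    have h9 : j * log 4 ≤ log lam := by
      rw [← log_pow]; exact log_le_log (by positivity) h8
    rw [hlog64] at h7
    have : rho * j * log 4 ≤ 2 * (j * log 4) := by
      have : 0 ≤ (j:ℝ) * log 4 := by positivity
      nlinarith
    nlinarith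
  · push Not at hcase
    have h8 : rho * j ≤ 1 := by
      have e1 : ((j:ℝ))^3 ≤ 4^j := by
        have : ∀ j : ℕ, j^3 ≤ 4^j := by
          intro j
          induction j with
          | zero => simp
          | succ k ih =>
            rcases Nat.lt_or_ge k 2 with h | h
            · interval_cases k <;> norm_num
            · rw [pow_succ 4]; nlinarith [Nat.mul_le_mul h h, Nat.mul_le_mul (Nat.mul_le_mul h h) h, Nat.mul_le_mul_right (k*k) h, Nat.mul_le_mul_right k h]
        exact_mod_cast this j
      have e2 : (rho * j)^3 < 1 := by
        rw [mul_pow]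
        calc rho^3 * (j:ℝ)^3 ≤ rho^3 * 4^j := by gcongr
          _ < 1 := hcase
      by_contra h; push Not at h
      have := one_lt_pow₀ h (show 3 ≠ 0 by norm_num)
      linarith
    rw [hlog64] at h7
    nlinarith

lemma level_bound (n : ℕ) (hn : 0 < n) (d : ℝ) (hd : 1 ≤ d) (Ni Nj e : ℝ) (hNi : 0 < Ni)
    (hNj : 0 < Nj) (he : 0 ≤ e) (i j : ℕ) (hi : Ni * 16^i ≤ n)
    (h1 : (4:ℝ)^i < 4 * √d * 4^j) (h2 : √d < 16 * 4^(i+j))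
    (hdisc : e ≤ exp 8 * (d * Ni * Nj / n) ∨
      e * log (e / (d * Ni * Nj / n)) ≤ 28 * (Nj * log (exp 1 * n / Nj))) :
    4^(i+j) * e ≤ n * √d * (16 * exp 8 * (16^i * Ni / n) * (16^j * Nj / n) +
      (2^i / (2^j * √√d)) * (1000 * (16^j * Nj / n) + (1/4)^j)) := by
  have hn' : (0:ℝ) < n := by exact_mod_cast hn
  set s := √d with hs
  have hs0 : 0 < s := Real.sqrt_pos.2 (by linarith)
  have hss : s * s = d := Real.mul_self_sqrt (by linarith)
  set δ := √s with hδ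
  have hδ0 : 0 < δ := Real.sqrt_pos.2 hs0
  have hδδ : δ * δ = s := Real.mul_self_sqrt hs0.le
  have p4 : (4:ℝ)^(i+j) = 4^i * 4^j := pow_add _ _ _
  have p16i : (16:ℝ)^i = 4^i * 4^i := by rw [← mul_pow]; norm_num
  have p16j : (16:ℝ)^j = 4^j * 4^j := by rw [← mul_pow]; norm_num
  have p4i : (4:ℝ)^i = 2^i * 2^i := by rw [← mul_pow]; norm_num
  have p4j : (4:ℝ)^j = 2^j * 2^j := by rw [← mul_pow]; norm_num
  have hP1 : 0 ≤ 16 * exp 8 * (16^i * Ni / n) * (16^j * Nj / n) := by positivity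
  have hP2 : 0 ≤ (2^i / (2^j * δ)) * (1000 * (16^j * Nj / n) + (1/4)^j) := by positivity
  by_cases hc1 : e ≤ exp 8 * (d * Ni * Nj / n)
  · have : 4^(i+j) * e ≤ n * s * (16 * exp 8 * (16^i * Ni / n) * (16^j * Nj / n)) := by
      calc 4^(i+j) * e ≤ 4^(i+j) * (exp 8 * (d * Ni * Nj / n)) := by gcongr
        _ = s * (4^(i+j) * (exp 8 * (s * Ni * Nj / n))) := by rw [← hss]; ring
        _ ≤ (16 * 4^(i+j)) * (4^(i+j) * (exp 8 * (s * Ni * Nj / n))) := by gcongr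
        _ = _ := by rw [p4, p16i, p16j]; field_simp
    have : 0 ≤ n * s * ((2^i / (2^j * δ)) * (1000 * (16^j * Nj / n) + (1/4)^j)) := by positivity
    linarith
  · have hd2 := hdisc.resolve_left hc1
    push Not at hc1
    have he0 : 0 < e := lt_of_le_of_lt (by positivity) hc1
    have hmu : 0 < d * Ni * Nj / n := by positivity
    set c : ℝ := 4^(i+j) * e / (n * s) with hc
    set rho : ℝ := 2^i / (2^j * δ) with hrho
    have hrho0 : 0 < rho := by positivity
    have hrho2 : rho^2 = 4^i / (4^j * s) := by
      rw [hrho, div_pow, mul_pow, sq δ, hδδ, p4i, p4j]; ring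
    have hr2 : rho < 2 := by
      have : rho^2 < 2^2 := by
        rw [hrho2, div_lt_iff₀ (by positivity)]; linarith
      exact lt_of_pow_lt_pow_left₀ 2 (by norm_num) this
    have hlam : e / (d * Ni * Nj / n) =
        c * rho^2 * 16^j / ((16^i * Ni / n) * (16^j * Nj / n)) := by
      rw [hrho2, hc, p4, p16i, p16j, ← hss]; field_simp
    have key := key_scalar c rho (16^j * Nj / n) (16^i * Ni / n) (e / (d * Ni * Nj / n)) j
      (by positivity) hrho0 hr2 (by positivity) (by positivity)
      (by rw [div_le_one hn']; linarith) hlam (by rw [lt_div_iff₀ hmu]; exact hc1)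
      (by
        have e1 : exp 1 * 16^j / (16^j * Nj / n) = exp 1 * n / Nj := by field_simp
        rw [e1, hrho2]
        calc c * log (e / (d * Ni * Nj / n))
            = 4^(i+j) / (n * s) * (e * log (e / (d * Ni * Nj / n))) := by rw [hc]; ring
          _ ≤ 4^(i+j) / (n * s) * (28 * (Nj * log (exp 1 * n / Nj))) := by gcongr
          _ = _ := by rw [p4, p16j]; field_simp)
    have e3 : 4^(i+j) * e = n * s * c := by rw [hc]; field_simp
    rw [e3]
    have : n * s * c ≤ n * s * (rho * (1000 * (16^j * Nj / n) + (1/4)^j)) := by gcongr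
    have h0 : 0 ≤ n * s * (16 * exp 8 * (16^i * Ni / n) * (16^j * Nj / n)) := by positivity
    linarith

noncomputable def lev {n : ℕ} (X : Fin n → ℝ) (i : ℕ) : Finset (Fin n) :=
  univ.filter fun u => (4:ℝ)^i ≤ X u

lemma exists_level (x : ℝ) (hx : 1 ≤ x) : ∃ i : ℕ, (4:ℝ)^i ≤ x ∧ x < 4 * 4^i := by
  obtain ⟨i, h1, h2⟩ := exists_nat_pow_near hx (show (1:ℝ) < 4 by norm_num)
  exact ⟨i, h1, by rw [pow_succ] at h2; linarith⟩

lemma sum_alpha {n : ℕ} (hn : 0 < n) (X : Fin n → ℝ) (hX : ∀ u, 0 ≤ X u) (hX2 : ∑ u, X u ^ 2 ≤ n) :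
    ∑ i ∈ range n, 16^i * ((lev X i).card : ℝ) / n ≤ 2 := by
  have hn' : (0:ℝ) < n := by exact_mod_cast hn
  rw [← Finset.sum_div, div_le_iff₀ hn']
  have h : ∀ i, (16:ℝ)^i * ((lev X i).card : ℝ) = ∑ u, if (16:ℝ)^i ≤ X u ^2 then (16:ℝ)^i else 0 := by
    intro i
    rw [lev, Finset.card_filter]
    push_cast
    rw [Finset.mul_sum]
    refine Finset.sum_congr rfl fun u _ => ?_
    have : (4:ℝ)^i ≤ X u ↔ (16:ℝ)^i ≤ X u ^ 2 := by
      have : (16:ℝ)^i = (4^i)^2 := by rw [← pow_mul, mul_comm, pow_mul]; norm_num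
      rw [this, sq_le_sq₀ (by positivity) (hX u)]
    by_cases h : (4:ℝ)^i ≤ X u
    · simp [h, this.1 h]
    · simp [h, mt this.2 h]
  simp only [h]
  rw [Finset.sum_comm]
  calc _ ≤ ∑ u, 2 * X u^2 := Finset.sum_le_sum fun u _ => geo_trunc 16 _ (by norm_num) (by positivity) n
    _ ≤ 2 * n := by rw [← Finset.mul_sum]; linarith

lemma lev_card {n : ℕ} (X : Fin n → ℝ) (hX2 : ∑ u, X u ^ 2 ≤ n) (i : ℕ) :
    ((lev X i).card : ℝ) * 16^i ≤ n := by
  calc ((lev X i).card : ℝ) * 16^i = ∑ u ∈ lev X i, (16:ℝ)^i := by simp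
    _ ≤ ∑ u ∈ lev X i, X u^2 := by
      refine Finset.sum_le_sum fun u hu => ?_
      have : (4:ℝ)^i ≤ X u := by simpa [lev] using hu
      have h16 : (16:ℝ)^i = (4^i)^2 := by rw [← pow_mul, mul_comm, pow_mul]; norm_num
      rw [h16]; gcongr
    _ ≤ ∑ u, X u^2 := Finset.sum_le_univ_sum_of_nonneg fun u => sq_nonneg _
    _ ≤ n := hX2

def HasDisc {n : ℕ} (d : ℝ) (A : Fin n → Fin n → ℝ) : Prop :=
  ∀ S T : Finset (Fin n), S ⊆ T → S.Nonempty →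
    (∑ u ∈ S, ∑ v ∈ T, A u v) ≤ exp 8 * (d * S.card * T.card / n) ∨
    (∑ u ∈ S, ∑ v ∈ T, A u v) * log ((∑ u ∈ S, ∑ v ∈ T, A u v) / (d * S.card * T.card / n)) ≤
      28 * (T.card * log (exp 1 * n / T.card))

def cnd (d : ℝ) (i j : ℕ) : Prop := j ≤ i ∧ (4:ℝ)^i < 4 * √d * 4^j ∧ √d < 16 * 4^(i+j)

set_option maxHeartbeats 1000000 in
open Classical in
lemma levels_sum {n : ℕ} (hn : 0 < n) (d : ℝ) (hd : 1 ≤ d) (A : Fin n → Fin n → ℝ)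
    (hA0 : ∀ u v, 0 ≤ A u v) (X : Fin n → ℝ) (hX : ∀ u, 0 ≤ X u)
    (hX2 : ∑ u, X u ^ 2 ≤ n) (hdisc : HasDisc d A) :
    ∑ i ∈ range n, ∑ j ∈ range n, (if cnd d i j then
      4^(i+j) * ∑ u ∈ lev X i, ∑ v ∈ lev X j, A u v else 0) ≤
      n * √d * (64 * exp 8 + 10000) := by
  have hn' : (0:ℝ) < n := by exact_mod_cast hn
  have hs0 : 0 < √d := Real.sqrt_pos.2 (by linarith)
  have hδ0 : 0 < √√d := Real.sqrt_pos.2 hs0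
  have hδδ : √√d * √√d = √d := Real.mul_self_sqrt hs0.le
  set al : ℕ → ℝ := fun i => 16^i * ((lev X i).card : ℝ) / n with hal
  have hal0 : ∀ i, 0 ≤ al i := fun i => by simp only [hal]; positivity
  have hals : ∑ i ∈ range n, al i ≤ 2 := sum_alpha hn X hX hX2
  have hb : ∀ i j, (if cnd d i j then
      4^(i+j) * ∑ u ∈ lev X i, ∑ v ∈ lev X j, A u v else 0) ≤
      n * √d * (16 * exp 8 * al i * al j +
        (if (2:ℝ)^i ≤ 2 * √√d * 2^j then (2:ℝ)^i else 0) / (2^j * √√d) * (1000 * al j + (1/4)^j)) := by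
    intro i j
    have hR : 0 ≤ n * √d * (16 * exp 8 * al i * al j +
        (if (2:ℝ)^i ≤ 2 * √√d * 2^j then (2:ℝ)^i else 0) / (2^j * √√d) * (1000 * al j + (1/4)^j)) := by
      have := hal0 i; have := hal0 j
      have : (0:ℝ) ≤ if (2:ℝ)^i ≤ 2 * √√d * 2^j then (2:ℝ)^i else 0 := by split_ifs <;> positivity
      positivity
    split_ifs with h h'
    · obtain ⟨hji, h1, h2⟩ := h
      by_cases hne : (lev X i).Nonempty
      · have hsub : lev X i ⊆ lev X j := by
          intro u hu
          simp only [lev, mem_filter, mem_univ, true_and] at hu ⊢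
          exact (pow_le_pow_right₀ (by norm_num) hji).trans hu
        have hNi : (0:ℝ) < (lev X i).card := by exact_mod_cast hne.card_pos
        have hNj : (0:ℝ) < (lev X j).card := by exact_mod_cast (hne.mono hsub).card_pos
        have := level_bound n hn d hd (lev X i).card (lev X j).card
          (∑ u ∈ lev X i, ∑ v ∈ lev X j, A u v) hNi hNj
          (Finset.sum_nonneg fun u _ => Finset.sum_nonneg fun v _ => hA0 u v) i j
          (lev_card X hX2 i) h1 h2 (hdisc _ _ hsub hne)
        exact this
      · rw [Finset.not_nonempty_iff_eq_empty] at hne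
        rw [if_pos h'] at hR
        rw [hne]; simpa using hR
    · exfalso
      apply h'
      obtain ⟨hji, h1, h2⟩ := h
      have : ((2:ℝ)^i)^2 ≤ (2 * √√d * 2^j)^2 := by
        have e1 : ((2:ℝ)^i)^2 = 4^i := by rw [← pow_mul, mul_comm, pow_mul]; norm_num
        have e2 : ((2:ℝ)^j)^2 = 4^j := by rw [← pow_mul, mul_comm, pow_mul]; norm_num
        rw [mul_pow, mul_pow, e1, e2, sq √√d, hδδ]; linarith
      exact (sq_le_sq₀ (by positivity) (by positivity)).1 this
    · rw [if_pos (by assumption)] at hR; exact hR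
    · rw [if_neg (by assumption)] at hR; exact hR
  calc _ ≤ ∑ i ∈ range n, ∑ j ∈ range n, (n * √d * (16 * exp 8 * al i * al j +
        (if (2:ℝ)^i ≤ 2 * √√d * 2^j then (2:ℝ)^i else 0) / (2^j * √√d) * (1000 * al j + (1/4)^j))) :=
        Finset.sum_le_sum fun i _ => Finset.sum_le_sum fun j _ => hb i j
    _ = n * √d * (16 * exp 8 * (∑ i ∈ range n, al i) * (∑ j ∈ range n, al j) +
          ∑ j ∈ range n, (∑ i ∈ range n, (if (2:ℝ)^i ≤ 2 * √√d * 2^j then (2:ℝ)^i else 0)) / (2^j * √√d)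
            * (1000 * al j + (1/4)^j)) := by
        simp only [← Finset.mul_sum, Finset.sum_add_distrib]
        congr 2
        · rw [← Finset.sum_mul, ← Finset.mul_sum]
        · rw [Finset.sum_comm]
          refine Finset.sum_congr rfl fun j _ => ?_
          rw [Finset.sum_div, Finset.sum_mul]
    _ ≤ n * √d * (16 * exp 8 * 2 * 2 + ∑ j ∈ range n, 4 * (1000 * al j + (1/4)^j)) := by
        have h0 : 0 ≤ ∑ i ∈ range n, al i := Finset.sum_nonneg fun i _ => hal0 i
        have hcol : ∀ j ∈ range n, (∑ i ∈ range n, (if (2:ℝ)^i ≤ 2 * √√d * 2^j then (2:ℝ)^i else 0)) / (2^j * √√d)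
            * (1000 * al j + (1/4)^j) ≤ 4 * (1000 * al j + (1/4)^j) := by
          intro j _
          have hj := hal0 j
          refine mul_le_mul_of_nonneg_right ?_ (by positivity)
          rw [div_le_iff₀ (by positivity)]
          have := geo_trunc 2 (2 * √√d * 2^j) le_rfl (by positivity) n
          linarith
        have h2 := Finset.sum_le_sum hcol
        have h3 : (∑ i ∈ range n, al i) * (∑ j ∈ range n, al j) ≤ 4 := by nlinarith
        have h4 := exp_pos 8
        refine mul_le_mul_of_nonneg_left ?_ (by positivity)
        nlinarith
    _ ≤ n * √d * (64 * exp 8 + 10000) := by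
        rw [← Finset.mul_sum, Finset.sum_add_distrib, ← Finset.mul_sum]
        have hg : ∑ j ∈ range n, ((1:ℝ)/4)^j ≤ 2 := by
          have : ∀ m : ℕ, ∑ j ∈ range m, ((1:ℝ)/4)^j ≤ 2 - 2*(1/4)^m := by
            intro m
            induction m with
            | zero => norm_num
            | succ k ih =>
              rw [sum_range_succ, pow_succ]
              have : (0:ℝ) < (1/4)^k := by positivity
              linarith
          have h1 := this n
          have : (0:ℝ) < (1/4)^n := by positivity
          linarith
        refine mul_le_mul_of_nonneg_left ?_ (by positivity)
        linarith

open Classical in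
lemma heavy_bound {n : ℕ} (hn : 0 < n) (d : ℝ) (hd : 1 ≤ d) (A : Fin n → Fin n → ℝ)
    (hA0 : ∀ u v, 0 ≤ A u v) (hsymm : ∀ u v, A u v = A v u) (X : Fin n → ℝ) (hX : ∀ u, 0 ≤ X u)
    (hX2 : ∑ u, X u ^ 2 ≤ n) (hdeg : ∀ u, 0 < X u → ∑ v, A u v ≤ 3/2 * d)
    (hdisc : HasDisc d A) :
    ∑ u, ∑ v, (if √d < X u * X v then A u v * (X u * X v) else 0) ≤
      (3 + 32 * (64 * exp 8 + 10000)) * (n * √d) := by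
  have hn' : (0:ℝ) < n := by exact_mod_cast hn
  have hs0 : 0 < √d := Real.sqrt_pos.2 (by linarith)
  have hss : √d * √d = d := Real.mul_self_sqrt (by linarith)
  have hXn : ∀ u, X u < 4^n := by
    intro u
    have h1 : X u ^ 2 ≤ n := (Finset.single_le_sum (f := fun u => X u^2)
      (fun u _ => sq_nonneg _) (mem_univ u)).trans hX2
    have h2 : (n:ℝ) < 4^n := by exact_mod_cast Nat.lt_pow_self (by norm_num)
    have h3 : (1:ℝ) ≤ 4^n := one_le_pow₀ (by norm_num)
    by_contra h; push Not at h
    nlinarith [hX u]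
  set B : Fin n → Fin n → ℝ := fun u v => ∑ i ∈ range n, ∑ j ∈ range n,
    (if cnd d i j then 4^(i+j) * ((if u ∈ lev X i then 1 else 0) * (if v ∈ lev X j then 1 else 0)) else 0)
    with hB
  have hBnn : ∀ u v, 0 ≤ B u v := by
    intro u v
    refine Finset.sum_nonneg fun i _ => Finset.sum_nonneg fun j _ => ?_
    split_ifs <;> simp
  have hone : ∀ u v, X v ≤ X u → √d < X u * X v → X u * X v ≤ X u^2/√d + 16 * B u v := by
    intro u v hvu hheavy
    by_cases hbig : √d * X v < X u
    · have : X u * X v ≤ X u^2/√d := by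
        rw [le_div_iff₀ hs0]; nlinarith [hX u]
      have := hBnn u v
      linarith
    · push Not at hbig
      have hv0 : 0 ≤ X v := hX v
      have hv1 : 1 ≤ X v := by
        by_contra h; push Not at h
        have : X u * X v ≤ √d * X v * X v := by nlinarith
        nlinarith
      obtain ⟨i, hi1, hi2⟩ := exists_level (X u) (hv1.trans hvu)
      obtain ⟨j, hj1, hj2⟩ := exists_level (X v) hv1
      have hin : i < n := (pow_lt_pow_iff_right₀ (show (1:ℝ) < 4 by norm_num)).1 (hi1.trans_lt (hXn u))
      have hjn : j < n := (pow_lt_pow_iff_right₀ (show (1:ℝ) < 4 by norm_num)).1 (hj1.trans_lt (hXn v))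
      have hprod : X u * X v ≤ 16 * 4^(i+j) := by
        rw [pow_add]
        calc X u * X v ≤ (4 * 4^i) * (4 * 4^j) := by gcongr
          _ = _ := by ring
      have hc : cnd d i j := by
        refine ⟨?_, ?_, ?_⟩
        · have : (4:ℝ)^j < 4^(i+1) := by rw [pow_succ]; linarith
          have := (pow_lt_pow_iff_right₀ (show (1:ℝ) < 4 by norm_num)).1 this
          omega
        · nlinarith
        · linarith
      have hle : (4:ℝ)^(i+j) ≤ B u v := by
        have hui : u ∈ lev X i := by simpa [lev] using hi1
        have hvj : v ∈ lev X j := by simpa [lev] using hj1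
        have hnn : ∀ i j : ℕ, (0:ℝ) ≤ (if cnd d i j then 4^(i+j) * ((if u ∈ lev X i then 1 else 0) * (if v ∈ lev X j then 1 else 0)) else 0) := by
          intro i j; split_ifs <;> simp
        calc (4:ℝ)^(i+j) = (if cnd d i j then 4^(i+j) * ((if u ∈ lev X i then 1 else 0) * (if v ∈ lev X j then 1 else 0)) else 0) := by
              simp [hc, hui, hvj]
          _ ≤ ∑ j ∈ range n, (if cnd d i j then (4:ℝ)^(i+j) * ((if u ∈ lev X i then 1 else 0) * (if v ∈ lev X j then 1 else 0)) else 0) :=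
              Finset.single_le_sum (f := fun j => (if cnd d i j then (4:ℝ)^(i+j) * ((if u ∈ lev X i then 1 else 0) * (if v ∈ lev X j then 1 else 0)) else 0)) (fun j _ => hnn i j) (mem_range.2 hjn)
          _ ≤ B u v := Finset.single_le_sum (f := fun i => ∑ j ∈ range n, (if cnd d i j then (4:ℝ)^(i+j) * ((if u ∈ lev X i then 1 else 0) * (if v ∈ lev X j then 1 else 0)) else 0)) (fun i _ => Finset.sum_nonneg fun j _ => hnn i j) (mem_range.2 hin)
      have : 0 ≤ X u^2/√d := by positivity
      linarith
  have hpt : ∀ u v, (if √d < X u * X v then A u v * (X u * X v) else 0) ≤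
      (A u v * (X u^2/√d) + 16 * (A u v * B u v)) + (A v u * (X v^2/√d) + 16 * (A v u * B v u)) := by
    intro u v
    rw [hsymm v u]
    have h0 := hA0 u v
    have h1 := hBnn u v
    have h2 := hBnn v u
    have h3 : 0 ≤ X u^2/√d := by positivity
    have h4 : 0 ≤ X v^2/√d := by positivity
    split_ifs with h
    · have : X u * X v ≤ X u^2/√d + 16 * B u v + X v^2/√d + 16 * B v u := by
        rcases le_total (X v) (X u) with h' | h'
        · have := hone u v h' h; linarith
        · have := hone v u h' (by rwa [mul_comm]); linarith
      calc A u v * (X u * X v) ≤ A u v * (X u^2/√d + 16 * B u v + X v^2/√d + 16 * B v u) := by gcongr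
        _ = _ := by ring
    · positivity
  have hT : ∑ u, ∑ v, (A u v * (X u^2/√d) + 16 * (A u v * B u v)) ≤
      3/2 * (n * √d) + 16 * (n * √d * (64 * exp 8 + 10000)) := by
    simp only [Finset.sum_add_distrib]
    refine add_le_add ?_ ?_
    · calc ∑ u, ∑ v, A u v * (X u^2/√d) ≤ ∑ u, 3/2 * √d * X u^2 := by
            refine Finset.sum_le_sum fun u _ => ?_
            rw [← Finset.sum_mul]
            rcases (hX u).eq_or_lt with h | h
            · rw [← h]; simp
            · calc (∑ v, A u v) * (X u^2/√d) ≤ 3/2 * d * (X u^2/√d) := by gcongr; exact hdeg u h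
                _ = _ := by nth_rewrite 1 [← hss]; field_simp
        _ ≤ _ := by rw [← Finset.mul_sum]; nlinarith
    · simp only [← Finset.mul_sum]
      refine mul_le_mul_of_nonneg_left ?_ (by norm_num)
      refine le_trans (le_of_eq ?_) (levels_sum hn d hd A hA0 X hX hX2 hdisc)
      simp only [hB, Finset.mul_sum]
      calc ∑ u, ∑ v, ∑ i ∈ range n, ∑ j ∈ range n, (A u v * (if cnd d i j then (4:ℝ)^(i+j) * ((if u ∈ lev X i then 1 else 0) * (if v ∈ lev X j then 1 else 0)) else 0))
          = ∑ i ∈ range n, ∑ j ∈ range n, ∑ u, ∑ v, (A u v * (if cnd d i j then (4:ℝ)^(i+j) * ((if u ∈ lev X i then 1 else 0) * (if v ∈ lev X j then 1 else 0)) else 0)) := by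
            have : ∀ u, ∑ v, ∑ i ∈ range n, ∑ j ∈ range n, (A u v * (if cnd d i j then (4:ℝ)^(i+j) * ((if u ∈ lev X i then 1 else 0) * (if v ∈ lev X j then 1 else 0)) else 0)) = ∑ i ∈ range n, ∑ j ∈ range n, ∑ v, (A u v * (if cnd d i j then (4:ℝ)^(i+j) * ((if u ∈ lev X i then 1 else 0) * (if v ∈ lev X j then 1 else 0)) else 0)) := by
              intro u
              rw [Finset.sum_comm]
              refine Finset.sum_congr rfl fun i _ => Finset.sum_comm
            simp only [this]
            rw [Finset.sum_comm]
            refine Finset.sum_congr rfl fun i _ => Finset.sum_comm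
        _ = _ := by
            refine Finset.sum_congr rfl fun i _ => Finset.sum_congr rfl fun j _ => ?_
            split_ifs with h
            · rw [← Finset.sum_filter_add_sum_filter_not univ (fun u => u ∈ lev X i)]
              rw [Finset.sum_eq_zero (s := univ.filter (fun u => ¬ u ∈ lev X i)), add_zero,
                Finset.filter_univ_mem]
              · refine Finset.sum_congr rfl fun u hu => ?_
                simp only [hu, if_true, one_mul, mul_ite, mul_one, mul_zero]
                rw [← Finset.sum_filter, Finset.filter_univ_mem]
                exact Finset.sum_congr rfl fun v _ => mul_comm _ _
              · intro u hu
                have : u ∉ lev X i := by simpa using hu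
                simp [this]
            · simp
  calc _ ≤ ∑ u, ∑ v, ((A u v * (X u^2/√d) + 16 * (A u v * B u v)) + (A v u * (X v^2/√d) + 16 * (A v u * B v u))) :=
        Finset.sum_le_sum fun u _ => Finset.sum_le_sum fun v _ => hpt u v
    _ = 2 * ∑ u, ∑ v, (A u v * (X u^2/√d) + 16 * (A u v * B u v)) := by
        rw [two_mul]
        simp only [Finset.sum_add_distrib]
        rw [Finset.sum_comm (f := fun u v => A v u * (X v^2/√d)),
          Finset.sum_comm (f := fun u v => 16 * (A v u * B v u))]
    _ ≤ _ := by linarith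

lemma exists_trunc (t : ℝ) : ∃ z : ℤ, |(z:ℝ)| ≤ |t| ∧ |t - z| ≤ 1 := by
  rcases le_total 0 t with h | h
  · refine ⟨⌊t⌋, ?_, ?_⟩
    · have h0 : (0:ℝ) ≤ ⌊t⌋ := by exact_mod_cast Int.floor_nonneg.2 h
      rw [abs_of_nonneg h0, abs_of_nonneg h]; exact Int.floor_le t
    · rw [abs_le]; constructor <;> linarith [Int.floor_le t, Int.lt_floor_add_one t]
  · refine ⟨⌈t⌉, ?_, ?_⟩
    · have h0 : ((⌈t⌉:ℤ):ℝ) ≤ 0 := by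
        have : ⌈t⌉ ≤ 0 := Int.ceil_le.2 (by simpa using h)
        exact_mod_cast this
      rw [abs_of_nonpos h0, abs_of_nonpos h]; linarith [Int.le_ceil t]
    · rw [abs_le]; constructor <;> linarith [Int.le_ceil t, Int.ceil_lt_add_one t]

lemma net_bound {n : ℕ} (hn : 0 < n) (M : Matrix (Fin n) (Fin n) ℝ) (s : ℝ) (hs : 0 ≤ s)
    (h : ∀ z : Fin n → ℤ, ∑ u, (z u)^2 ≤ 64 * n → |quadForm M (fun u => z u / (8 * √n))| ≤ s)
    (x : Fin n → ℝ) (hx : ∑ u, x u ^2 ≤ 1) : |quadForm M x| ≤ 3 * s := by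
  have hn' : (0:ℝ) < n := by exact_mod_cast hn
  have hsn : 0 < √(n:ℝ) := Real.sqrt_pos.2 hn'
  have hsnn : √(n:ℝ) ^2 = n := Real.sq_sqrt hn'.le
  set K : Set (Fin n → ℝ) := {x | ∑ u, x u^2 ≤ 1} with hK
  have hcl : IsClosed K := isClosed_le (by fun_prop) continuous_const
  have hsub : K ⊆ Set.pi Set.univ (fun _ : Fin n => Set.Icc (-1:ℝ) 1) := by
    intro y hy u _
    have hy' : ∑ u, y u^2 ≤ 1 := hy
    have h1 : y u ^ 2 ≤ 1 := (Finset.single_le_sum (f := fun u => y u^2)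
      (fun u _ => sq_nonneg _) (mem_univ u)).trans hy'
    exact abs_le.1 (abs_le_one_iff_mul_self_le_one.2 (by nlinarith))
  have hcpt : IsCompact K := (isCompact_univ_pi fun _ => isCompact_Icc).of_isClosed_subset hcl hsub
  have hcont : ContinuousOn (fun x => |quadForm M x|) K := by
    unfold quadForm; fun_prop
  obtain ⟨x0, hx0, hmax⟩ := hcpt.exists_isMaxOn ⟨x, hx⟩ hcont
  have hmax' : ∀ y ∈ K, |quadForm M y| ≤ |quadForm M x0| := fun y hy => hmax hy
  have hx0' : ∑ u, x0 u^2 ≤ 1 := hx0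
  choose z hz1 hz2 using fun u => exists_trunc (8 * √n * x0 u)
  set y : Fin n → ℝ := fun u => z u / (8 * √n) with hy
  set r : Fin n → ℝ := fun u => 8 * (x0 u - y u) with hr
  have hyx : ∀ u, y u^2 ≤ x0 u^2 := by
    intro u
    have h1 := sq_le_sq.2 (hz1 u)
    simp only [hy]
    rw [div_pow, div_le_iff₀ (by positivity)]
    calc _ ≤ _ := h1
      _ = _ := by ring
  have hyK : y ∈ K := (Finset.sum_le_sum fun u _ => hyx u).trans hx0'
  have hr1 : ∀ u, r u^2 ≤ 1 / n := by
    intro u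
    have h1 : r u = (8 * √n * x0 u - z u) / √n := by
      simp only [hr, hy]; field_simp
    rw [h1, div_pow, hsnn]
    have := (sq_le_one_iff_abs_le_one _).2 (hz2 u)
    gcongr
  have hrK : r ∈ K := by
    calc ∑ u, r u^2 ≤ ∑ u : Fin n, (1:ℝ)/n := Finset.sum_le_sum fun u _ => hr1 u
      _ = 1 := by simp; field_simp
      _ ≤ 1 := le_rfl
  have hzsum : ∑ u, (z u)^2 ≤ 64 * n := by
    have : ∑ u, ((z u:ℝ))^2 ≤ 64 * n := by
      calc ∑ u, ((z u:ℝ))^2 ≤ ∑ u, 64 * n * x0 u^2 := by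
            refine Finset.sum_le_sum fun u _ => ?_
            have h1 := sq_le_sq.2 (hz1 u)
            calc _ ≤ _ := h1
              _ = _ := by rw [mul_pow, mul_pow, hsnn]; ring
        _ ≤ 64 * n := by rw [← Finset.mul_sum]; nlinarith
    exact_mod_cast this
  have hp : (fun u => (y u + r u)/2) ∈ K := by
    have h1 : ∑ u, y u^2 ≤ 1 := hyK
    have h2 : ∑ u, r u^2 ≤ 1 := hrK
    calc ∑ u, ((y u + r u)/2)^2 ≤ ∑ u, (y u^2 + r u^2)/2 := 
          Finset.sum_le_sum fun u _ => by nlinarith [sq_nonneg (y u - r u)]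
      _ ≤ 1 := by rw [← Finset.sum_div, Finset.sum_add_distrib]; linarith
  have hm : (fun u => (y u - r u)/2) ∈ K := by
    have h1 : ∑ u, y u^2 ≤ 1 := hyK
    have h2 : ∑ u, r u^2 ≤ 1 := hrK
    calc ∑ u, ((y u - r u)/2)^2 ≤ ∑ u, (y u^2 + r u^2)/2 := 
          Finset.sum_le_sum fun u _ => by nlinarith [sq_nonneg (y u + r u)]
      _ ≤ 1 := by rw [← Finset.sum_div, Finset.sum_add_distrib]; linarith
  have hid : quadForm M x0 = quadForm M y + 1/4 * (quadForm M (fun u => (y u + r u)/2)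
      - quadForm M (fun u => (y u - r u)/2)) + 1/64 * quadForm M r := by
    have hx : ∀ u, x0 u = y u + r u / 8 := fun u => by simp only [hr]; ring
    unfold quadForm
    rw [← Finset.sum_sub_distrib, Finset.mul_sum, Finset.mul_sum, ← Finset.sum_add_distrib,
      ← Finset.sum_add_distrib]
    refine Finset.sum_congr rfl fun u _ => ?_
    rw [← Finset.sum_sub_distrib, Finset.mul_sum, Finset.mul_sum, ← Finset.sum_add_distrib,
      ← Finset.sum_add_distrib]
    refine Finset.sum_congr rfl fun v _ => ?_
    rw [hx u, hx v]; ring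
  have b1 := abs_le.1 (h z hzsum)
  have b2 := abs_le.1 (hmax' _ hp)
  have b3 := abs_le.1 (hmax' _ hm)
  have b4 := abs_le.1 (hmax' _ hrK)
  have b5 : |quadForm M x0| ≤ s + 33/64 * |quadForm M x0| := by
    conv_lhs => rw [hid]
    rw [abs_le]
    constructor <;> linarith
  have := hmax' x hx
  linarith

noncomputable def netZ (n : ℕ) : Finset (Fin n → ℤ) :=
  (Fintype.piFinset fun _ : Fin n => Finset.Icc (-(64 * n : ℕ) : ℤ) ((64 * n : ℕ) : ℤ)).filter
    fun z => ∑ u, (z u)^2 ≤ 64 * n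

lemma mem_netZ {n : ℕ} (z : Fin n → ℤ) (h : ∑ u, (z u)^2 ≤ 64 * n) : z ∈ netZ n := by
  simp only [netZ, mem_filter, Fintype.mem_piFinset, Finset.mem_Icc]
  refine ⟨fun u => ?_, h⟩
  have h1 : (z u)^2 ≤ 64 * n := (Finset.single_le_sum (f := fun u => (z u)^2)
      (fun u _ => sq_nonneg _) (mem_univ u)).trans h
  push_cast
  constructor <;> nlinarith

lemma sum_gauss (m : ℕ) : ∑ k ∈ Finset.Icc (-(m:ℤ)) m, exp (-((k:ℝ)^2)) ≤ 3 - 2 * (1/2)^m := by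
  have hb : ∀ m : ℕ, exp (-((m:ℝ)^2)) ≤ (1/2)^m := by
    intro m
    have h1 : exp (-((m:ℝ)^2)) ≤ exp (-(m:ℝ)) := by
      apply exp_le_exp.2
      have : (m:ℝ) ≤ (m:ℝ)^2 := by exact_mod_cast Nat.le_self_pow (by norm_num) m
      linarith
    have h2 : exp (-(m:ℝ)) = (exp (-1))^m := by rw [← exp_nat_mul]; congr 1; ring
    rw [h2] at h1
    refine h1.trans (pow_le_pow_left₀ (exp_pos _).le ?_ m)
    rw [exp_neg, ← one_div]
    apply one_div_le_one_div_of_le (by norm_num)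
    have := add_one_le_exp (1:ℝ); linarith
  induction m with
  | zero => simp; norm_num
  | succ k ih =>
    have hset : Finset.Icc (-((k+1:ℕ):ℤ)) ((k+1:ℕ):ℤ) =
        insert ((k+1:ℕ):ℤ) (insert (-((k+1:ℕ):ℤ)) (Finset.Icc (-(k:ℤ)) k)) := by
      ext x; simp only [Finset.mem_Icc, Finset.mem_insert]; push_cast; omega
    rw [hset, Finset.sum_insert, Finset.sum_insert]
    · have := hb (k+1)
      have e : exp (-((((-((k+1:ℕ):ℤ)):ℤ):ℝ)^2)) = exp (-(((k+1:ℕ):ℝ)^2)) := by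
        push_cast; congr 1; ring
      rw [e]
      have e' : exp (-(((((k+1:ℕ):ℤ)):ℝ)^2)) = exp (-(((k+1:ℕ):ℝ)^2)) := by
        push_cast; congr 1
      rw [e']
      have e2 : ((1:ℝ)/2)^(k+1) = (1/2)^k * (1/2) := pow_succ _ _
      rw [e2] at this ⊢
      linarith
    · simp only [Finset.mem_Icc]; push_cast; omega
    · simp only [Finset.mem_Icc, Finset.mem_insert]; push_cast; omega

lemma card_netZ (n : ℕ) : ((netZ n).card : ℝ) ≤ exp (66 * n) := by
  have h := Finset.prod_univ_sum (fun _ : Fin n => Finset.Icc (-(64 * n : ℕ) : ℤ) ((64 * n : ℕ) : ℤ))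
    (fun _ k => exp (-((k:ℝ)^2)))
  calc ((netZ n).card : ℝ) = ∑ z ∈ netZ n, (1:ℝ) := by simp
    _ ≤ ∑ z ∈ netZ n, exp (64 * n) * ∏ u, exp (-((z u:ℝ)^2)) := by
      refine Finset.sum_le_sum fun z hz => ?_
      rw [← exp_sum, ← exp_add]
      apply one_le_exp
      have h1 : ∑ u, (z u)^2 ≤ 64 * n := (mem_filter.1 hz).2
      have h2 : ∑ u, ((z u:ℝ))^2 ≤ 64 * n := by exact_mod_cast h1
      rw [Finset.sum_neg_distrib]; linarith
    _ ≤ ∑ z ∈ Fintype.piFinset fun _ : Fin n => Finset.Icc (-(64 * n : ℕ) : ℤ) ((64 * n : ℕ) : ℤ),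
        exp (64 * n) * ∏ u, exp (-((z u:ℝ)^2)) :=
      Finset.sum_le_sum_of_subset_of_nonneg (Finset.filter_subset _ _) fun z _ _ => by positivity
    _ = exp (64 * n) * ∏ u : Fin n, ∑ k ∈ Finset.Icc (-(64 * n : ℕ) : ℤ) ((64 * n : ℕ) : ℤ), exp (-((k:ℝ)^2)) := by
      rw [h, Finset.mul_sum]
    _ ≤ exp (64 * n) * ∏ u : Fin n, exp 2 := by
      refine mul_le_mul_of_nonneg_left ?_ (exp_pos _).le
      refine Finset.prod_le_prod (fun u _ => Finset.sum_nonneg fun k _ => (exp_pos _).le) fun u _ => ?_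
      have h1 := sum_gauss (64 * n)
      have h2 := add_one_le_exp (2:ℝ)
      have h3 : (0:ℝ) < (1/2)^(64*n) := by positivity
      linarith
    _ = _ := by
      rw [Finset.prod_const, Finset.card_univ, Fintype.card_fin, ← exp_nat_mul, ← exp_add]; congr 1; ring

lemma sum_pairs {n : ℕ} (F : Fin n → Fin n → ℝ) :
    ∑ u, ∑ v, F u v = ∑ p : Pairs n, (F p.1.1 p.1.2 + F p.1.2 p.1.1) + ∑ u, F u u := by
  have h1 : ∀ G : Fin n → Fin n → ℝ, ∑ p : Pairs n, G p.1.1 p.1.2 =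
      ∑ u, ∑ v, if u < v then G u v else 0 := by
    intro G
    rw [← Fintype.sum_prod_type' (f := fun u v => if u < v then G u v else 0)]
    rw [← Finset.sum_filter]
    exact (Finset.sum_subtype (univ.filter fun p : Fin n × Fin n => p.1 < p.2)
      (by simp) (fun p => G p.1 p.2)).symm
  rw [Finset.sum_add_distrib, h1 F, h1 (fun u v => F v u),
    Finset.sum_comm (f := fun u v => if u < v then F v u else 0)]
  have h2 : ∑ u, F u u = ∑ u, ∑ v, if u = v then F u v else 0 := by simp
  rw [h2, ← Finset.sum_add_distrib, ← Finset.sum_add_distrib]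
  refine Finset.sum_congr rfl fun u _ => ?_
  rw [← Finset.sum_add_distrib, ← Finset.sum_add_distrib]
  refine Finset.sum_congr rfl fun v _ => ?_
  rcases lt_trichotomy u v with h | h | h
  · simp [h, h.ne, h.not_gt]
  · simp [h]
  · simp [h, h.ne', h.not_gt]

lemma getLabel_symm {L : Type*} {n : ℕ} (E : EdgeConf n L) (u v : Fin n) :
    getLabel E u v = getLabel E v u := by
  unfold getLabel
  rcases lt_trichotomy u v with h | h | h
  · simp [h, h.not_gt]
  · simp [h]
  · simp [h, h.not_gt]

lemma getLabel_pair {L : Type*} {n : ℕ} (E : EdgeConf n L) (p : Pairs n) :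
    getLabel E p.1.1 p.1.2 = E p := by
  unfold getLabel; simp [p.2]

lemma getLabel_self {L : Type*} {n : ℕ} (E : EdgeConf n L) (u : Fin n) :
    getLabel E u u = none := by
  unfold getLabel; simp

def gW {L : Type*} (w : L → ℝ) : Option L → ℝ
  | none => 0
  | some l => w l

def gA {L : Type*} : Option L → ℝ
  | none => 0
  | some _ => 1

lemma Wmat_eq {L : Type*} {n : ℕ} (w : L → ℝ) (E : EdgeConf n L) (u v : Fin n) :
    Wmat w E u v = gW w (getLabel E u v) := by
  unfold Wmat gW; cases getLabel E u v <;> rfl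

def Amat {L : Type*} {n : ℕ} (E : EdgeConf n L) (u v : Fin n) : ℝ := gA (getLabel E u v)

lemma degree_eq {L : Type*} {n : ℕ} (E : EdgeConf n L) (u : Fin n) :
    (degree E u : ℝ) = ∑ v, Amat E u v := by
  unfold degree Amat
  rw [Finset.card_filter]
  push_cast
  refine Finset.sum_congr rfl fun v _ => ?_
  cases getLabel E u v <;> simp [gA]

lemma gA_nonneg {L : Type*} (o : Option L) : 0 ≤ gA o := by cases o <;> simp [gA]

lemma gW_abs {L : Type*} (w : L → ℝ) (hw : ∀ l, -1 ≤ w l ∧ w l ≤ 1) (o : Option L) :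
    |gW w o| ≤ gA o := by
  cases o with
  | none => simp [gW, gA]
  | some l => simpa [gW, gA] using abs_le.2 (hw l)

/-- light coefficient of a pair -/
noncomputable def lc {n : ℕ} (d : ℝ) (y : Fin n → ℝ) (p : Pairs n) : ℝ :=
  if |y p.1.1 * y p.1.2| ≤ √d / n then 2 * (y p.1.1 * y p.1.2) else 0

noncomputable def Khv : ℝ := 3 + 32 * (64 * exp 8 + 10000)

open Classical in
/-- bound at net points -/
lemma net_point {L : Type*} {n : ℕ} (hn : 0 < n) (d : ℝ) (hd : 1 ≤ d) (w : L → ℝ)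
    (hw : ∀ l, -1 ≤ w l ∧ w l ≤ 1) (E : EdgeConf n L) (mm : Fin n → Fin n → ℝ)
    (hmm : ∀ u v, |mm u v| ≤ 2 * d / n) (hmms : ∀ u v, mm u v = mm v u)
    (hdisc : HasDisc d (Amat E)) (y : Fin n → ℝ) (hy : ∑ u, y u^2 ≤ 1)
    (hydeg : ∀ u, y u ≠ 0 → (degree E u : ℝ) ≤ 3/2 * d)
    (hlight : |∑ p : Pairs n, lc d y p * (gW w (E p) - mm p.1.1 p.1.2)| ≤ 300 * √d) :
    |∑ u, ∑ v, (if u = v then 0 else y u * y v * (Wmat w E u v - mm u v))| ≤ (302 + Khv) * √d := by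
  have hn' : (0:ℝ) < n := by exact_mod_cast hn
  have hs0 : 0 < √d := Real.sqrt_pos.2 (by linarith)
  have hss : √d * √d = d := Real.mul_self_sqrt (by linarith)
  have hsn : 0 < √(n:ℝ) := Real.sqrt_pos.2 hn'
  have hsnn : √(n:ℝ) * √(n:ℝ) = n := Real.mul_self_sqrt hn'.le
  have hsplit : ∑ u, ∑ v, (if u = v then 0 else y u * y v * (Wmat w E u v - mm u v)) =
      ∑ p : Pairs n, lc d y p * (gW w (E p) - mm p.1.1 p.1.2) +
      ∑ u, ∑ v, (if u = v then 0 else if |y u * y v| ≤ √d / n then 0 else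
        y u * y v * (Wmat w E u v - mm u v)) := by
    have h1 := sum_pairs (fun u v => if u = v then 0 else if |y u * y v| ≤ √d / n then
        y u * y v * (Wmat w E u v - mm u v) else 0)
    have h2 : ∑ p : Pairs n, lc d y p * (gW w (E p) - mm p.1.1 p.1.2) =
        ∑ u, ∑ v, if u = v then 0 else if |y u * y v| ≤ √d / n then
        y u * y v * (Wmat w E u v - mm u v) else 0 := by
      rw [h1]
      simp only [if_true, Finset.sum_const_zero, add_zero]
      refine Finset.sum_congr rfl fun p _ => ?_
      rw [if_neg p.2.ne, if_neg p.2.ne', Wmat_eq, Wmat_eq, getLabel_symm E p.1.2, getLabel_pair,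
        hmms p.1.2, mul_comm (y p.1.2)]
      unfold lc
      split_ifs <;> ring
    rw [h2, ← Finset.sum_add_distrib]
    refine Finset.sum_congr rfl fun u _ => ?_
    rw [← Finset.sum_add_distrib]
    refine Finset.sum_congr rfl fun v _ => ?_
    split_ifs <;> ring
  have hheavy : |∑ u, ∑ v, (if u = v then 0 else if |y u * y v| ≤ √d / n then 0 else
        y u * y v * (Wmat w E u v - mm u v))| ≤ (2 + Khv) * √d := by
    set X : Fin n → ℝ := fun u => √n * |y u| with hX
    have hXX : ∀ u v, X u * X v = n * |y u * y v| := by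
      intro u v; simp only [hX]; rw [abs_mul]; nth_rewrite 3 [← hsnn]; ring
    have hcondiff : ∀ u v, (|y u * y v| ≤ √d / n ↔ ¬ √d < X u * X v) := by
      intro u v; rw [hXX, le_div_iff₀ hn', not_lt, mul_comm]
    have hX2 : ∑ u, X u^2 ≤ n := by
      have : ∀ u, X u^2 = n * y u^2 := by
        intro u; rw [sq, hXX, ← sq, abs_of_nonneg (sq_nonneg _)]
      simp only [this, ← Finset.mul_sum]
      nlinarith
    have hb := heavy_bound hn d hd (Amat E) (fun u v => gA_nonneg _)
      (fun u v => by unfold Amat; rw [getLabel_symm]) X (fun u => by positivity) hX2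
      (fun u hu => by
        rw [← degree_eq]; apply hydeg
        intro h; simp [hX, h] at hu) hdisc
    have hpt : ∀ u v, |(if u = v then 0 else if |y u * y v| ≤ √d / n then 0 else
        y u * y v * (Wmat w E u v - mm u v))| ≤
        (1 / n) * (if √d < X u * X v then Amat E u v * (X u * X v) else 0) +
          2 * √d * (y u^2 * y v^2) := by
      intro u v
      have hA := gA_nonneg (getLabel E u v)
      by_cases h1 : √d < X u * X v
      · have h2 : ¬ |y u * y v| ≤ √d / n := by rw [hcondiff]; simpa using h1
        rw [if_pos h1, if_neg h2]
        have h3 : |y u * y v * (Wmat w E u v - mm u v)| ≤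
            (1 / n) * (Amat E u v * (X u * X v)) + 2 * √d * (y u^2 * y v^2) := by
          rw [abs_mul]
          have h4 : |Wmat w E u v - mm u v| ≤ Amat E u v + 2 * d / n := by
            have := abs_sub (Wmat w E u v) (mm u v)
            have h5 : |Wmat w E u v| ≤ Amat E u v := by rw [Wmat_eq]; exact gW_abs w hw _
            linarith [hmm u v]
          have h6 : |y u * y v| * (2 * d / n) ≤ 2 * √d * (y u^2 * y v^2) := by
            push Not at h2
            have e1 : y u^2 * y v^2 = |y u * y v| * |y u * y v| := by
              rw [← sq, sq_abs]; ring
            rw [e1]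
            have e2 : √d ≤ |y u * y v| * n := by rw [div_lt_iff₀ hn'] at h2; exact h2.le
            calc |y u * y v| * (2 * d / n) = |y u * y v| * (2 * √d / n) * √d := by
                  nth_rewrite 1 [← hss]; ring
              _ ≤ |y u * y v| * (2 * √d / n) * (|y u * y v| * n) := by gcongr
              _ = _ := by field_simp
          calc |y u * y v| * |Wmat w E u v - mm u v| ≤ |y u * y v| * (Amat E u v + 2 * d / n) := by gcongr
            _ = |y u * y v| * Amat E u v + |y u * y v| * (2 * d / n) := by ring
            _ ≤ |y u * y v| * Amat E u v + 2 * √d * (y u^2 * y v^2) := by linarith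
            _ = _ := by rw [hXX]; field_simp
        split_ifs
        · rw [abs_zero]; exact (abs_nonneg _).trans h3
        · exact h3
      · have h2 : |y u * y v| ≤ √d / n := by rw [hcondiff]; exact h1
        rw [if_neg h1, if_pos h2]
        simp; positivity
    calc _ ≤ ∑ u, ∑ v, |(if u = v then 0 else if |y u * y v| ≤ √d / n then 0 else
        y u * y v * (Wmat w E u v - mm u v))| := by
          refine (Finset.abs_sum_le_sum_abs _ _).trans (Finset.sum_le_sum fun u _ => Finset.abs_sum_le_sum_abs _ _)
      _ ≤ ∑ u, ∑ v, ((1 / n) * (if √d < X u * X v then Amat E u v * (X u * X v) else 0) +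
          2 * √d * (y u^2 * y v^2)) := Finset.sum_le_sum fun u _ => Finset.sum_le_sum fun v _ => hpt u v
      _ = (1/n) * ∑ u, ∑ v, (if √d < X u * X v then Amat E u v * (X u * X v) else 0) +
          2 * √d * ((∑ u, y u^2) * ∑ v, y v^2) := by
          simp only [Finset.sum_add_distrib, ← Finset.mul_sum, Finset.sum_mul_sum]
      _ ≤ (1/n) * (Khv * (n * √d)) + 2 * √d * 1 := by
          have h0 : 0 ≤ ∑ u, y u^2 := Finset.sum_nonneg fun u _ => sq_nonneg _
          have h1 : (∑ u, y u^2) * ∑ v, y v^2 ≤ 1 := by nlinarith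
          unfold Khv
          gcongr
      _ = _ := by field_simp; ring
  rw [hsplit]
  refine (abs_add_le _ _).trans ?_
  linarith

lemma sq_diff {n : ℕ} (hn : 0 < n) (d : ℝ) (hd : 1 ≤ d) (S : Finset (Fin n)) 
    (hS : ((Sᶜ : Finset (Fin n)).card : ℝ) ≤ 200 * n / d) (s x : Fin n → ℝ) (hs : ∀ u, |s u| ≤ 1)
    (hx : ∑ u, x u^2 = 1) :
    |(∑ u ∈ S, s u * x u)^2 - (∑ u, s u * x u)^2| ≤ 30 * n / √d := by
  have hn' : (0:ℝ) < n := by exact_mod_cast hn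
  have hs0 : 0 < √d := Real.sqrt_pos.2 (by linarith)
  have hss : √d ^2 = d := Real.sq_sqrt (by linarith)
  have cs : ∀ T : Finset (Fin n), (∑ u ∈ T, s u * x u)^2 ≤ T.card := by
    intro T
    have h1 := Finset.sum_mul_sq_le_sq_mul_sq T s x
    have h2 : ∑ u ∈ T, s u^2 ≤ T.card := by
      calc ∑ u ∈ T, s u^2 ≤ ∑ u ∈ T, (1:ℝ) := Finset.sum_le_sum fun u _ =>
            (sq_le_one_iff_abs_le_one _).2 (hs u)
        _ = _ := by simp
    have h3 : ∑ u ∈ T, x u^2 ≤ 1 := by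
      rw [← hx]; exact Finset.sum_le_univ_sum_of_nonneg fun u => sq_nonneg _
    have h4 : 0 ≤ ∑ u ∈ T, x u^2 := Finset.sum_nonneg fun u _ => sq_nonneg _
    have h5 : (0:ℝ) ≤ T.card := by positivity
    nlinarith
  have cn : ∀ T : Finset (Fin n), |∑ u ∈ T, s u * x u| ≤ √n := by
    intro T
    apply Real.abs_le_sqrt
    refine (cs T).trans ?_
    exact_mod_cast (Finset.card_le_univ T).trans (by simp)
  have h1 : ∑ u, s u * x u = ∑ u ∈ S, s u * x u + ∑ u ∈ Sᶜ, s u * x u :=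
    (Finset.sum_add_sum_compl S _).symm
  have h2 : |∑ u ∈ Sᶜ, s u * x u| ≤ 15 * √n / √d := by
    apply abs_le_of_sq_le_sq
    · refine ((cs _).trans hS).trans ?_
      rw [div_pow, mul_pow, Real.sq_sqrt hn'.le, hss]
      gcongr; norm_num
    · positivity
  have h3 : (∑ u ∈ S, s u * x u)^2 - (∑ u, s u * x u)^2 =
      -((∑ u ∈ Sᶜ, s u * x u) * (∑ u ∈ S, s u * x u + ∑ u, s u * x u)) := by rw [h1]; ring
  rw [h3, abs_neg, abs_mul]
  have h4 : |∑ u ∈ S, s u * x u + ∑ u, s u * x u| ≤ 2 * √n := by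
    have := abs_add_le (∑ u ∈ S, s u * x u) (∑ u, s u * x u)
    linarith [cn S, cn univ]
  calc _ ≤ (15 * √n / √d) * (2 * √n) := by gcongr
    _ = 30 * (√n * √n) / √d := by ring
    _ = _ := by rw [Real.mul_self_sqrt hn'.le]

noncomputable def Kst : ℝ := 3 * (302 + Khv) + 62

set_option maxHeartbeats 1000000 in
open Classical in
lemma det_bound {L : Type*} [Fintype L] {n : ℕ} (a b : ℝ) (μ ν w : L → ℝ)
    (d : ℝ) (hdd : d = (a + b) / 2) (hd : 1 ≤ d) (hn : d ≤ n)
    (hw : ∀ l, -1 ≤ w l ∧ w l ≤ 1) (E : EdgeConf n L) (al be : ℝ)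
    (hal : al = (1 / 2) * ∑ ℓ, w ℓ * (a * μ ℓ + b * ν ℓ))
    (hal1 : |al| ≤ d) (hbe1 : |be| ≤ d) (s : Fin n → ℝ) (hs : ∀ u, s u = 1 ∨ s u = -1)
    (hdisc : HasDisc d (Amat E))
    (hS : ((univ.filter fun u => ¬ (degree E u : ℝ) ≤ 3/2 * d).card : ℝ) ≤ 200 * n / d)
    (hlight : ∀ z ∈ netZ n, |∑ p : Pairs n, lc d (fun u => (z u : ℝ) / (8 * √n)) p *
      (gW w (E p) - (al + be * (s p.1.1 * s p.1.2)) / n)| ≤ 300 * √d)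
    (x : Fin n → ℝ) (hx : ∑ u, x u^2 = 1) :
    |quadForm (Dmat a b μ ν w E) x - be / n * (∑ u, s u * x u)^2| ≤ Kst * √d := by
  have hn' : (0:ℝ) < n := by linarith
  have hn0 : 0 < n := by exact_mod_cast hn'
  have hs0 : 0 < √d := Real.sqrt_pos.2 (by linarith)
  have hss : √d * √d = d := Real.mul_self_sqrt (by linarith)
  have hs1 : 1 ≤ √d := by rw [Real.one_le_sqrt]; exact hd
  have hsn : 0 < √(n:ℝ) := Real.sqrt_pos.2 hn'
  have hsnn : √(n:ℝ) * √(n:ℝ) = n := Real.mul_self_sqrt hn'.le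
  have hKhv : 0 ≤ Khv := by unfold Khv; positivity
  set mm : Fin n → Fin n → ℝ := fun u v => (al + be * (s u * s v)) / n with hmm
  set S : Finset (Fin n) := univ.filter fun u => (degree E u : ℝ) ≤ 3/2 * d with hSdef
  have hmemS : ∀ u, u ∈ S ↔ (degree E u : ℝ) ≤ 3/2 * d := by intro u; simp [hSdef]
  have hSc : ((Sᶜ : Finset (Fin n)).card : ℝ) ≤ 200 * n / d := by
    rw [hSdef, Finset.compl_filter]; exact hS
  have hss1 : ∀ u, s u * s u = 1 := by intro u; rcases hs u with h | h <;> simp [h]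
  have habs : ∀ u, |s u| ≤ 1 := by intro u; rcases hs u with h | h <;> simp [h]
  have hmmb : ∀ u v, |mm u v| ≤ 2 * d / n := by
    intro u v
    simp only [hmm]
    rw [abs_div, abs_of_pos hn']
    gcongr
    have h1 : |be * (s u * s v)| ≤ d := by
      rw [abs_mul, abs_mul]
      have := mul_le_one₀ (habs u) (abs_nonneg (s v)) (habs v)
      have h0 : 0 ≤ |s u| * |s v| := by positivity
      nlinarith [abs_nonneg be]
    have := abs_add_le al (be * (s u * s v)); linarith
  set M : Matrix (Fin n) (Fin n) ℝ := fun u v => if u ∈ S ∧ v ∈ S then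
    (if u = v then 0 else Wmat w E u v - mm u v) else 0 with hM
  have hnet : |quadForm M x| ≤ 3 * ((302 + Khv) * √d) := by
    apply net_bound hn0 M _ (by positivity) _ x hx.le
    intro z hz
    set z' : Fin n → ℤ := fun u => if u ∈ S then z u else 0 with hz'
    set y : Fin n → ℝ := fun u => (z' u : ℝ) / (8 * √n) with hy
    have hz's : ∑ u, (z' u)^2 ≤ 64 * n := by
      refine (Finset.sum_le_sum fun u _ => ?_).trans hz
      simp only [hz']; split_ifs
      · exact le_rfl
      · simp; positivity
    have hy2 : ∑ u, y u^2 ≤ 1 := by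
      have h1 : ∑ u, ((z' u : ℝ))^2 ≤ 64 * n := by exact_mod_cast hz's
      have h2 : ∀ u, y u^2 = (z' u : ℝ)^2 / (64 * n) := by
        intro u; simp only [hy]; rw [div_pow, mul_pow, Real.sq_sqrt hn'.le]; norm_num
      simp only [h2, ← Finset.sum_div]
      rw [div_le_one (by positivity)]; exact h1
    have hb := net_point hn0 d hd w hw E mm hmmb (fun u v => by simp only [hmm]; rw [mul_comm (s u)])
      hdisc y hy2 (fun u hu => by
        rw [← hmemS]; by_contra h; apply hu; simp [hy, hz', h]) (hlight z' (mem_netZ z' hz's))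
    convert hb using 2
    unfold quadForm
    refine Finset.sum_congr rfl fun u _ => Finset.sum_congr rfl fun v _ => ?_
    simp only [hM, hy, hz']
    by_cases hu : u ∈ S <;> by_cases hv : v ∈ S <;> by_cases huv : u = v <;> simp [hu, hv, huv]
    ring
  have hid : quadForm (Dmat a b μ ν w E) x - be / n * (∑ u, s u * x u)^2 =
      quadForm M x + al / n * ((∑ u ∈ S, 1 * x u)^2 - (∑ u, 1 * x u)^2)
       + be / n * ((∑ u ∈ S, s u * x u)^2 - (∑ u, s u * x u)^2) - (al + be) / n * ∑ u ∈ S, x u^2 := by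
    have e1 : ∀ t : Fin n → ℝ, (∑ u, t u * x u)^2 = ∑ u, ∑ v, (t u * x u) * (t v * x v) := by
      intro t; rw [sq, Finset.sum_mul_sum]
    have e2 : ∀ t : Fin n → ℝ, (∑ u ∈ S, t u * x u)^2 =
        ∑ u, ∑ v, if u ∈ S ∧ v ∈ S then (t u * x u) * (t v * x v) else 0 := by
      intro t
      have h0 : ∑ u ∈ S, t u * x u = ∑ u, if u ∈ S then t u * x u else 0 := by simp
      rw [h0, sq, Finset.sum_mul_sum]
      refine Finset.sum_congr rfl fun u _ => Finset.sum_congr rfl fun v _ => ?_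
      by_cases hu : u ∈ S <;> by_cases hv : v ∈ S <;> simp [hu, hv]
    have e3 : ∑ u ∈ S, x u^2 = ∑ u, ∑ v, if u ∈ S ∧ v ∈ S then (if u = v then x u * x v else 0) else 0 := by
      have h0 : ∑ u ∈ S, x u^2 = ∑ u, if u ∈ S then x u^2 else 0 := by simp
      rw [h0]
      refine Finset.sum_congr rfl fun u _ => ?_
      rw [Finset.sum_eq_single u]
      · by_cases hu : u ∈ S <;> simp [hu, sq]
      · intro v _ hv; simp [hv.symm]
      · simp
    rw [e1 s, e2 s, e1 (fun _ => 1), e2 (fun _ => 1), e3]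
    unfold quadForm
    rw [eq_sub_iff_add_eq]
    simp only [Finset.mul_sum, ← Finset.sum_sub_distrib, ← Finset.sum_add_distrib]
    refine Finset.sum_congr rfl fun u _ => Finset.sum_congr rfl fun v _ => ?_
    simp only [hM, Dmat, prunedW, ← hdd, ← hal, hmm]
    simp only [← hmemS]
    rcases eq_or_ne u v with rfl | huv
    · have h0 : Wmat w E u u = 0 := by rw [Wmat_eq, getLabel_self]; rfl
      have := hss1 u
      by_cases hu : u ∈ S
      · simp only [hu, and_self, if_true, h0]
        linear_combination (-be / n * x u * x u) * this
      · simp only [hu, and_self, if_false]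
        ring
    · by_cases hu : u ∈ S <;> by_cases hv : v ∈ S
      all_goals simp only [hu, hv, huv, and_self, and_true, and_false, if_true, if_false]
      all_goals ring
  have hA := sq_diff hn0 d hd S hSc (fun _ => 1) x (by simp) hx
  have hB := sq_diff hn0 d hd S hSc s x habs hx
  have hC : |∑ u ∈ S, x u^2| ≤ 1 := by
    rw [abs_of_nonneg (Finset.sum_nonneg fun u _ => sq_nonneg _), ← hx]
    exact Finset.sum_le_univ_sum_of_nonneg fun u => sq_nonneg _
  have key : ∀ c X : ℝ, |c| ≤ d → |X| ≤ 30 * n / √d → |c / n * X| ≤ 30 * √d := by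
    intro c X hc hX
    rw [abs_mul, abs_div, abs_of_pos hn']
    calc |c| / n * |X| ≤ d / n * (30 * n / √d) := by gcongr
      _ = 30 * (√d * √d) / √d := by rw [hss]; field_simp
      _ = _ := by field_simp
  have kA := abs_le.1 (key al _ hal1 hA)
  have kB := abs_le.1 (key be _ hbe1 hB)
  have kC : |(al + be) / n * ∑ u ∈ S, x u^2| ≤ 2 * √d := by
    rw [abs_mul, abs_div, abs_of_pos hn']
    have h1 : |al + be| ≤ 2 * d := by have := abs_add_le al be; linarith
    have h2 : |al + be| / n ≤ 2 := by rw [div_le_iff₀ hn']; linarith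
    have h3 : 0 ≤ |al + be| / n := by positivity
    nlinarith [abs_nonneg (∑ u ∈ S, x u^2)]
  have kC' := abs_le.1 kC
  have kN := abs_le.1 hnet
  rw [hid]
  unfold Kst
  rw [abs_le]
  constructor <;> nlinarith

lemma hamming_le {n : ℕ} (hn : 0 < n) (s x : Fin n → ℝ) (hs : ∀ u, s u = 1 ∨ s u = -1)
    (hx : ∑ u, x u^2 = 1) (hip : 7/8 * √n ≤ ∑ u, s u * x u) :
    (hamming s (signR x) : ℝ) ≤ n / 4 := by
  classical
  have hn' : (0:ℝ) < n := by exact_mod_cast hn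
  have hsn : 0 < √(n:ℝ) := Real.sqrt_pos.2 hn'
  have hsnn : √(n:ℝ) ^2 = n := Real.sq_sqrt hn'.le
  have hss1 : ∀ u, s u ^2 = 1 := by intro u; rcases hs u with h | h <;> simp [h]
  have h1 : ∑ u, (√n * x u - s u)^2 ≤ n / 4 := by
    have : ∀ u, (√n * x u - s u)^2 = n * x u^2 - 2 * √n * (s u * x u) + 1 := by
      intro u; rw [sub_sq, mul_pow, hsnn, hss1]; ring
    simp only [this, Finset.sum_add_distrib, Finset.sum_sub_distrib, ← Finset.mul_sum, hx]
    simp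
    nlinarith
  refine le_trans ?_ h1
  unfold hamming
  rw [Finset.card_filter]
  push_cast
  refine Finset.sum_le_sum fun u _ => ?_
  unfold signR
  rcases hs u with h | h <;> by_cases h0 : 0 ≤ x u <;> simp only [h, h0, if_true, if_false]
  · norm_num; positivity
  · norm_num; push Not at h0; rw [le_abs]; right; nlinarith [mul_pos hsn (neg_pos.2 h0)]
  · norm_num; rw [le_abs]; left; nlinarith [mul_nonneg hsn.le h0]
  · norm_num; positivity

lemma hamming_neg {n : ℕ} (s t : Fin n → ℝ) : hamming (-s) t = hamming s (-t) := by
  classical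
  unfold hamming
  congr 1
  ext u
  simp [neg_eq_iff_eq_neg]

lemma overlap_pos {n : ℕ} (hn : 0 < n) (s x : Fin n → ℝ) (hs : ∀ u, s u = 1 ∨ s u = -1)
    (Q : (Fin n → ℝ) → ℝ) (be : ℝ) (hbe : be ≠ 0)
    (hQ : ∀ y : Fin n → ℝ, ∑ u, y u^2 = 1 → |Q y - be / n * (∑ u, s u * y u)^2| ≤ |be| / 17)
    (hx : ∑ u, x u^2 = 1) (hmax : ∀ y : Fin n → ℝ, ∑ u, y u^2 = 1 → |Q y| ≤ |Q x|) :
    0 < overlap n s (signR x) := by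
  have hn' : (0:ℝ) < n := by exact_mod_cast hn
  have hsn : 0 < √(n:ℝ) := Real.sqrt_pos.2 hn'
  have hsnn : √(n:ℝ) ^2 = n := Real.sq_sqrt hn'.le
  have hss1 : ∀ u, s u ^2 = 1 := by intro u; rcases hs u with h | h <;> simp [h]
  have hz : ∑ u, (s u / √n)^2 = 1 := by
    simp only [div_pow, hss1, hsnn]; simp; field_simp
  have hz2 : ∑ u, s u * (s u / √n) = √n := by
    have : ∀ u, s u * (s u / √n) = 1 / √n := by intro u; rw [← mul_div_assoc, ← sq, hss1]
    simp only [this]; simp; rw [← div_eq_mul_inv, Real.div_sqrt]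
  have hb : 0 < |be| := abs_pos.2 hbe
  have h1 := hQ _ hz
  rw [hz2, hsnn, div_mul_cancel₀ _ hn'.ne'] at h1
  have h2 := hmax _ hz
  have h3 := hQ x hx
  set P := ∑ u, s u * x u with hP
  have h4 : |be| - |be| / 17 ≤ |Q fun u => s u / √n| := by
    have := abs_sub_abs_le_abs_sub be (Q fun u => s u / √n)
    rw [abs_sub_comm] at this; linarith
  have h5 : |Q x| ≤ |be| / 17 + |be| / n * P^2 := by
    have := abs_sub_abs_le_abs_sub (Q x) (be / n * P^2)
    rw [abs_mul, abs_div, abs_of_pos hn', abs_of_nonneg (sq_nonneg P)] at this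
    linarith
  have h6 : 15/17 * n ≤ P^2 := by
    have h7 : |be| * (15/17) ≤ |be| * (P^2 / n) := by
      have e : |be| * (P^2/n) = |be| / n * P^2 := by ring
      rw [e]; linarith
    have h8 := le_of_mul_le_mul_left h7 hb
    rwa [le_div_iff₀ hn'] at h8
  have h7 : 7/8 * √n ≤ |P| := by
    apply le_of_sq_le_sq _ (abs_nonneg P)
    rw [mul_pow, hsnn, sq_abs]; nlinarith
  have h8 : min (hamming s (signR x) : ℝ) (hamming s (-signR x) : ℝ) ≤ n / 4 := by
    rcases le_total 0 P with h | h
    · rw [abs_of_nonneg h] at h7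
      exact (min_le_left _ _).trans (hamming_le hn s x hs hx h7)
    · rw [abs_of_nonpos h] at h7
      refine (min_le_right _ _).trans ?_
      rw [← hamming_neg]
      refine hamming_le hn (-s) x (fun u => ?_) hx ?_
      · rcases hs u with h | h <;> simp [h]
      · simpa using h7
  unfold overlap
  have h9 : (1 / (n:ℝ)) * min (hamming s (signR x) : ℝ) (hamming s (-signR x) : ℝ) ≤ (1/n) * (n/4) := by
    gcongr
  have h10 : (1/(n:ℝ)) * (n/4) = 1/4 := by field_simp
  linarith

/-- parameters are admissible -/
structure Adm {L : Type*} [Fintype L] (n : ℕ) (a b d : ℝ) (μ ν : L → ℝ) : Prop where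
  hμ : IsProbVec μ
  hν : IsProbVec ν
  hdd : d = (a + b) / 2
  hb : 1 ≤ b
  hab : b ≤ a
  hn : a ≤ n

noncomputable def qs {L : Type*} (n : ℕ) (a b : ℝ) (μ ν : L → ℝ) (σ : Fin n → Bool)
    (p : Pairs n) (o : Option L) : ℝ := sbmPairMass n a b μ ν (σ p.1.1 == σ p.1.2) o

section
variable {L : Type*} [Fintype L] {n : ℕ} {a b d : ℝ} {μ ν : L → ℝ}

lemma Adm.n_pos (h : Adm n a b d μ ν) : (0:ℝ) < n := by linarith [h.hb, h.hab, h.hn]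
lemma Adm.d_one (h : Adm n a b d μ ν) : 1 ≤ d := by linarith [h.hb, h.hab, h.hdd]
lemma Adm.d_le (h : Adm n a b d μ ν) : d ≤ n := by linarith [h.hb, h.hab, h.hdd, h.hn]

lemma qs_nonneg (h : Adm n a b d μ ν) (σ : Fin n → Bool) (p : Pairs n) (o : Option L) :
    0 ≤ qs n a b μ ν σ p o := by
  have hn := h.n_pos
  have ha : 0 ≤ a := by linarith [h.hb, h.hab]
  have hb : 0 ≤ b := by linarith [h.hb]
  have h1 : a / n ≤ 1 := by rw [div_le_one hn]; exact h.hn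
  have h2 : b / n ≤ 1 := by rw [div_le_one hn]; linarith [h.hn, h.hab]
  unfold qs
  cases o with
  | none => unfold sbmPairMass; split_ifs <;> linarith
  | some l =>
    have := h.hμ.1 l
    have := h.hν.1 l
    unfold sbmPairMass; split_ifs <;> positivity

lemma qs_sum (h : Adm n a b d μ ν) (σ : Fin n → Bool) (p : Pairs n) :
    ∑ o, qs n a b μ ν σ p o = 1 := by
  rw [Fintype.sum_option]
  unfold qs sbmPairMass
  cases (σ p.1.1 == σ p.1.2) <;> simp [← Finset.mul_sum, h.hμ.2, h.hν.2]

lemma signVec_mul (σ : Fin n → Bool) (u v : Fin n) :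
    signVec σ u * signVec σ v = if (σ u == σ v) then 1 else -1 := by
  unfold signVec
  cases σ u <;> cases σ v <;> simp

lemma qs_gA (h : Adm n a b d μ ν) (σ : Fin n → Bool) (p : Pairs n) :
    ∑ o, qs n a b μ ν σ p o * gA o = (d + (a - b)/2 * (signVec σ p.1.1 * signVec σ p.1.2)) / n := by
  rw [Fintype.sum_option, signVec_mul, h.hdd]
  unfold qs sbmPairMass gA
  cases (σ p.1.1 == σ p.1.2) <;> simp [← Finset.mul_sum, h.hμ.2, h.hν.2] <;> ring

lemma qs_gW (w : L → ℝ) (σ : Fin n → Bool) (p : Pairs n) :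
    ∑ o, qs n a b μ ν σ p o * gW w o = ((1 / 2) * ∑ ℓ, w ℓ * (a * μ ℓ + b * ν ℓ) +
      (1 / 2) * (∑ ℓ, w ℓ * (a * μ ℓ - b * ν ℓ)) * (signVec σ p.1.1 * signVec σ p.1.2)) / n := by
  rw [Fintype.sum_option, signVec_mul]
  unfold qs sbmPairMass gW
  cases (σ p.1.1 == σ p.1.2)
  all_goals
    simp only [mul_zero, zero_add, if_true, if_false, Bool.false_eq_true, mul_one, mul_neg]
    simp only [← sub_eq_add_neg, ← mul_sub, ← mul_add, ← Finset.sum_sub_distrib, ← Finset.sum_add_distrib]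
    rw [Finset.mul_sum, Finset.sum_div]
    refine Finset.sum_congr rfl fun l _ => ?_
    ring

lemma qs_gA_le (h : Adm n a b d μ ν) (σ : Fin n → Bool) (p : Pairs n) :
    ∑ o, qs n a b μ ν σ p o * gA o ≤ 2 * d / n := by
  rw [qs_gA h, signVec_mul]
  have := h.n_pos
  gcongr
  have := h.hb; have := h.hab; have := h.hdd
  split_ifs <;> linarith

lemma qs_gW2_le (h : Adm n a b d μ ν) (w : L → ℝ) (hw : ∀ l, -1 ≤ w l ∧ w l ≤ 1)
    (σ : Fin n → Bool) (p : Pairs n) :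
    ∑ o, qs n a b μ ν σ p o * gW w o ^2 ≤ 2 * d / n := by
  refine le_trans (Finset.sum_le_sum fun o _ => ?_) (qs_gA_le h σ p)
  refine mul_le_mul_of_nonneg_left ?_ (qs_nonneg h σ p o)
  have h1 := gW_abs w hw o
  have h2 : gA o ≤ 1 := by cases o <;> simp [gA]
  rw [← sq_abs]
  nlinarith [abs_nonneg (gW w o)]

lemma gA01 (o : Option L) : gA o = 0 ∨ gA o = 1 := by cases o <;> simp [gA]

lemma pairs_le (F : Fin n → Fin n → ℝ) (hF : ∀ u v, 0 ≤ F u v) :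
    ∑ p : Pairs n, F p.1.1 p.1.2 ≤ ∑ u, ∑ v, F u v := by
  rw [sum_pairs F]
  have h1 : ∑ p : Pairs n, F p.1.1 p.1.2 ≤ ∑ p : Pairs n, (F p.1.1 p.1.2 + F p.1.2 p.1.1) :=
    Finset.sum_le_sum fun p _ => by linarith [hF p.1.2 p.1.1]
  have h2 : 0 ≤ ∑ u, F u u := Finset.sum_nonneg fun u _ => hF u u
  linarith

lemma light_one (h : Adm n a b d μ ν) (w : L → ℝ) (hw : ∀ l, -1 ≤ w l ∧ w l ≤ 1)
    (σ : Fin n → Bool) (y : Fin n → ℝ) (hy : ∑ u, y u^2 ≤ 1) (e : ℝ) (he : e = 1 ∨ e = -1) :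
    Pr (qs n a b μ ν σ) {E | 300 * √d ≤ ∑ p : Pairs n, e * lc d y p *
      (gW w (E p) - ∑ o, qs n a b μ ν σ p o * gW w o)} ≤ exp (-74 * n) := by
  have hn := h.n_pos
  have hd : 0 < d := by linarith [h.d_one]
  have hs0 : 0 < √d := Real.sqrt_pos.2 hd
  have hss : √d ^2 = d := Real.sq_sqrt hd.le
  have he1 : |e| = 1 := by rcases he with h | h <;> simp [h]
  have hb := bernstein (qs n a b μ ν σ) (qs_nonneg h σ) (qs_sum h σ) (gW w)
    (fun o => (gW_abs w hw o).trans (by cases o <;> simp [gA])) (2 * d / n) (qs_gW2_le h w hw σ)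
    (fun p => e * lc d y p) (n / (4 * √d)) (fun p => by
      rw [abs_mul, abs_mul, he1, one_mul, abs_of_pos (by positivity)]
      unfold lc
      split_ifs with h1
      · rw [abs_mul, abs_two]
        calc n / (4 * √d) * (2 * |y p.1.1 * y p.1.2|) ≤ n / (4 * √d) * (2 * (√d / n)) := by gcongr
          _ = 1/2 := by field_simp; norm_num
      · simp) (300 * √d) (by positivity)
  refine hb.trans (exp_le_exp.2 ?_)
  have hc : ∑ p : Pairs n, (e * lc d y p)^2 ≤ 4 := by
    calc ∑ p : Pairs n, (e * lc d y p)^2 ≤ ∑ p : Pairs n, 4 * (y p.1.1^2 * y p.1.2^2) := by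
          refine Finset.sum_le_sum fun p _ => ?_
          rw [mul_pow, ← sq_abs e, he1, one_pow, one_mul]
          unfold lc
          split_ifs
          · apply le_of_eq; ring
          · rw [zero_pow two_ne_zero]; positivity
      _ = 4 * ∑ p : Pairs n, (y p.1.1^2 * y p.1.2^2) := by rw [Finset.mul_sum]
      _ ≤ 4 * ((∑ u, y u^2) * ∑ v, y v^2) := by
          rw [Finset.sum_mul_sum]
          gcongr
          exact pairs_le (fun u v => y u^2 * y v^2) (fun u v => by positivity)
      _ ≤ 4 * (1 * 1) := by
          have h0 : 0 ≤ ∑ u, y u^2 := Finset.sum_nonneg fun u _ => sq_nonneg _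
          gcongr
      _ = 4 := by norm_num
  calc -((n:ℝ) / (4 * √d) * (300 * √d)) + (n / (4 * √d))^2 * (2 * d / n) * ∑ p : Pairs n, (e * lc d y p)^2
      ≤ -(n / (4 * √d) * (300 * √d)) + (n / (4 * √d))^2 * (2 * d / n) * 4 := by gcongr
    _ = -(75 * (n:ℝ)) + (n:ℝ) / 2 := by
        rw [div_pow, mul_pow, hss]; field_simp; ring
    _ ≤ -74 * n := by linarith

lemma light_all (h : Adm n a b d μ ν) (w : L → ℝ) (hw : ∀ l, -1 ≤ w l ∧ w l ≤ 1)
    (σ : Fin n → Bool) :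
    Pr (qs n a b μ ν σ) {E | ∃ z ∈ netZ n, ¬ |∑ p : Pairs n, lc d (fun u => (z u : ℝ) / (8 * √n)) p *
      (gW w (E p) - ∑ o, qs n a b μ ν σ p o * gW w o)| ≤ 300 * √d} ≤ 2 * exp (-8 * n) := by
  have hn := h.n_pos
  refine (Pr_biUnion_le (qs n a b μ ν σ) (qs_nonneg h σ) (netZ n) (fun z => {E | 
    ¬ |∑ p : Pairs n, lc d (fun u => (z u : ℝ) / (8 * √n)) p *
      (gW w (E p) - ∑ o, qs n a b μ ν σ p o * gW w o)| ≤ 300 * √d})).trans ?_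
  have hone : ∀ z ∈ netZ n, Pr (qs n a b μ ν σ) {E | 
    ¬ |∑ p : Pairs n, lc d (fun u => (z u : ℝ) / (8 * √n)) p *
      (gW w (E p) - ∑ o, qs n a b μ ν σ p o * gW w o)| ≤ 300 * √d} ≤ 2 * exp (-74 * n) := by
    intro z hz
    have hy2 : ∑ u, ((z u : ℝ) / (8 * √n))^2 ≤ 1 := by
      have h0 : ∑ u, (z u)^2 ≤ 64 * n := (mem_filter.1 hz).2
      have h1 : ∑ u, ((z u : ℝ))^2 ≤ 64 * n := by exact_mod_cast h0
      have h2 : ∀ u, ((z u : ℝ) / (8 * √n))^2 = (z u : ℝ)^2 / (64 * n) := by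
        intro u; rw [div_pow, mul_pow, Real.sq_sqrt hn.le]; norm_num
      simp only [h2, ← Finset.sum_div]
      rw [div_le_one (by positivity)]; exact h1
    have h1 := light_one h w hw σ _ hy2 1 (Or.inl rfl)
    have h2 := light_one h w hw σ _ hy2 (-1) (Or.inr rfl)
    refine (Pr_mono _ (qs_nonneg h σ) ?_).trans ((Pr_union_le _ (qs_nonneg h σ) _ _).trans
      ((add_le_add h1 h2).trans (by linarith)))
    intro E hE
    simp only [Set.mem_ofPred_eq, not_le, lt_abs] at hE
    simp only [Set.mem_union, Set.mem_ofPred_eq, one_mul, neg_mul, Finset.sum_neg_distrib]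
    exact hE.imp le_of_lt le_of_lt
  calc _ ≤ ∑ z ∈ netZ n, 2 * exp (-74 * n) := Finset.sum_le_sum hone
    _ = (netZ n).card * (2 * exp (-74 * n)) := by simp
    _ ≤ exp (66 * n) * (2 * exp (-74 * n)) := by gcongr; exact card_netZ n
    _ = 2 * exp (-8 * n) := by rw [mul_left_comm, ← exp_add]; congr 2; ring

end

section
variable {L : Type*} [Fintype L] {n : ℕ} {a b d : ℝ} {μ ν : L → ℝ}

/-- t log(e n / t) -/
noncomputable def tl (n t : ℕ) : ℝ := t * log (exp 1 * n / t)

lemma tl_eq (n t : ℕ) (ht : 0 < t) (htn : t ≤ n) : tl n t = t * (1 + log n - log t) := by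
  have h1 : (0:ℝ) < t := by exact_mod_cast ht
  have h2 : (0:ℝ) < n := by exact_mod_cast (ht.trans_le htn)
  unfold tl
  rw [log_div (by positivity) (by positivity), log_mul (by positivity) (by positivity), log_exp]

lemma tl_ge (n t : ℕ) (ht : 0 < t) (htn : t ≤ n) : (t:ℝ) ≤ tl n t := by
  rw [tl_eq n t ht htn]
  have h1 : (1:ℝ) ≤ t := by exact_mod_cast ht
  have h3 : log t ≤ log n := log_le_log (by linarith) (by exact_mod_cast htn)
  nlinarith

lemma tl_log (n t : ℕ) (ht : 0 < t) (htn : t ≤ n) : log n ≤ tl n t := by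
  rw [tl_eq n t ht htn]
  have h1 : (1:ℝ) ≤ t := by exact_mod_cast ht
  have h3 : log t ≤ log n := log_le_log (by linarith) (by exact_mod_cast htn)
  have h4 := log_le_sub_one_of_pos (show (0:ℝ) < t by linarith)
  nlinarith

lemma choose_tl (n t : ℕ) (ht : 0 < t) (htn : t ≤ n) : (n.choose t : ℝ) ≤ exp (tl n t) := by
  have h1 : (0:ℝ) < t := by exact_mod_cast ht
  have h2 : (0:ℝ) < n := by exact_mod_cast (ht.trans_le htn)
  have e1 : (n.choose t : ℝ) ≤ (n:ℝ)^t / t.factorial := Nat.choose_le_pow_div t n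
  have e2 := pow_div_factorial_le_exp (t:ℝ) h1.le t
  have e3 : exp (tl n t) = exp t * ((n:ℝ)^t / (t:ℝ)^t) := by
    have : exp (tl n t) = (exp 1 * n / t)^t := by
      unfold tl
      rw [exp_nat_mul, exp_log (by positivity)]
    rw [this, div_pow, mul_pow, ← exp_nat_mul, mul_one]; ring
  rw [e3]
  calc _ ≤ _ := e1
    _ = ((t:ℝ)^t / t.factorial) * ((n:ℝ)^t / (t:ℝ)^t) := by field_simp
    _ ≤ _ := by gcongr

lemma pairs_ST (E : EdgeConf n L) (S T : Finset (Fin n)) :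
    ∑ u ∈ S, ∑ v ∈ T, Amat E u v = ∑ p : Pairs n, ((if p.1.1 ∈ S ∧ p.1.2 ∈ T then 1 else 0) +
      (if p.1.2 ∈ S ∧ p.1.1 ∈ T then (1:ℝ) else 0)) * gA (E p) := by
  have h0 : ∑ u ∈ S, ∑ v ∈ T, Amat E u v = ∑ u, ∑ v, if u ∈ S ∧ v ∈ T then Amat E u v else 0 := by
    simp only [ite_and]
    have : ∀ u, (∑ v, if u ∈ S then (if v ∈ T then Amat E u v else 0) else 0) =
        if u ∈ S then ∑ v ∈ T, Amat E u v else 0 := by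
      intro u; by_cases hu : u ∈ S <;> simp [hu]
    simp only [this]
    simp
  rw [h0, sum_pairs]
  have h1 : ∀ u, Amat E u u = 0 := by intro u; unfold Amat; rw [getLabel_self]; rfl
  simp only [h1, ite_self, Finset.sum_const_zero, add_zero]
  refine Finset.sum_congr rfl fun p _ => ?_
  unfold Amat
  rw [getLabel_symm E p.1.2, getLabel_pair]
  split_ifs <;> ring

lemma pairs_ST_card (S T : Finset (Fin n)) :
    ∑ p : Pairs n, ((if p.1.1 ∈ S ∧ p.1.2 ∈ T then 1 else 0) +
      (if p.1.2 ∈ S ∧ p.1.1 ∈ T then (1:ℝ) else 0)) ≤ S.card * T.card := by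
  have h := sum_pairs (fun u v : Fin n => if u ∈ S ∧ v ∈ T then (1:ℝ) else 0)
  have h0 : ∑ u, ∑ v, (if u ∈ S ∧ v ∈ T then (1:ℝ) else 0) = S.card * T.card := by
    have : ∀ u v : Fin n, (if u ∈ S ∧ v ∈ T then (1:ℝ) else 0) =
        (if u ∈ S then 1 else 0) * (if v ∈ T then 1 else 0) := by
      intro u v; split_ifs <;> simp_all
    simp only [this]
    rw [← Finset.sum_mul_sum]; simp
  rw [h0] at h
  have h2 : 0 ≤ ∑ u : Fin n, (if u ∈ S ∧ u ∈ T then (1:ℝ) else 0) :=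
    Finset.sum_nonneg fun u _ => by positivity
  rw [h]
  linarith

lemma disc_m (h : Adm n a b d μ ν) (σ : Fin n → Bool) (S T : Finset (Fin n)) (hST : S ⊆ T)
    (hS : S.Nonempty) (m : ℕ) (hm1 : exp 8 * (d * S.card * T.card / n) < m)
    (hm2 : 28 * tl n T.card < m * log (m / (d * S.card * T.card / n))) :
    Pr (qs n a b μ ν σ) {E | (m:ℝ) ≤ ∑ u ∈ S, ∑ v ∈ T, Amat E u v} ≤ exp (-7 * tl n T.card) := by
  have hn := h.n_pos
  have hd : 0 < d := by linarith [h.d_one]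
  have hS' : (0:ℝ) < S.card := by exact_mod_cast hS.card_pos
  have hT' : (0:ℝ) < T.card := by exact_mod_cast (hS.mono hST).card_pos
  set κ := d * S.card * T.card / n with hκ
  have hκ0 : 0 < κ := by positivity
  have hm0 : (0:ℝ) < m := lt_of_le_of_lt (by positivity) hm1
  have hl8 : 8 ≤ log (m / κ) := by
    rw [le_log_iff_exp_le (by positivity), le_div_iff₀ hκ0]; exact hm1.le
  simp only [pairs_ST]
  have hc := chernoff (qs n a b μ ν σ) (qs_nonneg h σ) (qs_sum h σ) gA gA01 (2 * d / n)
    (qs_gA_le h σ) (fun p => ((if p.1.1 ∈ S ∧ p.1.2 ∈ T then 1 else 0) +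
      (if p.1.2 ∈ S ∧ p.1.1 ∈ T then (1:ℝ) else 0))) (fun p => by
        split_ifs <;> norm_num) (1/2 * log (m / κ)) (by linarith) m
  refine hc.trans (exp_le_exp.2 ?_)
  have e1 : exp (2 * (1/2 * log (m / κ))) = m / κ := by
    rw [← mul_assoc]; norm_num; rw [exp_log (by positivity)]
  rw [e1]
  have e2 : 2 * d / n * (m / κ) * ∑ p : Pairs n, ((if p.1.1 ∈ S ∧ p.1.2 ∈ T then 1 else 0) +
      (if p.1.2 ∈ S ∧ p.1.1 ∈ T then (1:ℝ) else 0)) ≤ 2 * m := by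
    calc _ ≤ 2 * d / n * (m / κ) * (S.card * T.card) := by
          gcongr
          exact pairs_ST_card S T
      _ = 2 * (m / κ) * κ := by rw [hκ]; ring
      _ = 2 * m := by field_simp
  nlinarith

lemma disc_ST (h : Adm n a b d μ ν) (σ : Fin n → Bool) (S T : Finset (Fin n)) (hST : S ⊆ T)
    (hS : S.Nonempty) :
    Pr (qs n a b μ ν σ) {E | ¬ ((∑ u ∈ S, ∑ v ∈ T, Amat E u v) ≤ exp 8 * (d * S.card * T.card / n) ∨
    (∑ u ∈ S, ∑ v ∈ T, Amat E u v) * log ((∑ u ∈ S, ∑ v ∈ T, Amat E u v) / (d * S.card * T.card / n)) ≤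
      28 * tl n T.card)} ≤ (n^2 + 1) * exp (-7 * tl n T.card) := by
  set κ := d * S.card * T.card / n with hκ
  refine (Pr_mono _ (qs_nonneg h σ) (B := {E | ∃ m ∈ range (n^2 + 1), E ∈ {E : EdgeConf n L |
    (exp 8 * κ < m ∧ 28 * tl n T.card < m * log (m / κ)) ∧
      (m:ℝ) ≤ ∑ u ∈ S, ∑ v ∈ T, Amat E u v}}) ?_).trans ?_
  · intro E hE
    simp only [Set.mem_ofPred_eq, not_or, not_le] at hE
    obtain ⟨m, hm⟩ : ∃ m : ℕ, ∑ u ∈ S, ∑ v ∈ T, Amat E u v = m := by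
      refine ⟨∑ u ∈ S, ∑ v ∈ T, if (getLabel E u v).isSome then 1 else 0, ?_⟩
      push_cast
      refine Finset.sum_congr rfl fun u _ => Finset.sum_congr rfl fun v _ => ?_
      unfold Amat; cases getLabel E u v <;> simp [gA]
    refine ⟨m, ?_, ?_⟩
    · rw [Finset.mem_range, Nat.lt_succ_iff]
      have : (m:ℝ) ≤ (n:ℝ)^2 := by
        rw [← hm]
        calc ∑ u ∈ S, ∑ v ∈ T, Amat E u v ≤ ∑ u ∈ S, ∑ v ∈ T, (1:ℝ) := by
              refine Finset.sum_le_sum fun u _ => Finset.sum_le_sum fun v _ => ?_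
              unfold Amat; rcases gA01 (getLabel E u v) with h | h <;> rw [h]; norm_num
          _ = S.card * T.card := by simp
          _ ≤ n * n := by
              gcongr
              · exact_mod_cast (Finset.card_le_univ S).trans (by simp)
              · exact_mod_cast (Finset.card_le_univ T).trans (by simp)
          _ = _ := by ring
      exact_mod_cast this
    · rw [hm] at hE
      exact ⟨hE, hm.ge⟩
  · refine (Pr_biUnion_le _ (qs_nonneg h σ) _ _).trans ?_
    calc _ ≤ ∑ m ∈ range (n^2+1), exp (-7 * tl n T.card) := by
          refine Finset.sum_le_sum fun m _ => ?_
          by_cases hc : exp 8 * κ < m ∧ 28 * tl n T.card < m * log (m / κ)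
          · refine le_trans (Pr_mono _ (qs_nonneg h σ) ?_) (disc_m h σ S T hST hS m hc.1 hc.2)
            intro E hE; exact hE.2
          · have : {E : EdgeConf n L |
              (exp 8 * κ < m ∧ 28 * tl n T.card < m * log (m / κ)) ∧
              (m:ℝ) ≤ ∑ u ∈ S, ∑ v ∈ T, Amat E u v} = ∅ := by
              ext E; simp only [Set.mem_ofPred_eq, hc, false_and, Set.mem_empty_iff_false]
            rw [this]
            have : Pr (qs n a b μ ν σ) ∅ = 0 := by simp [Pr]
            rw [this]; exact (exp_pos _).le
      _ = _ := by simp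

lemma disc_all (h : Adm n a b d μ ν) (σ : Fin n → Bool) :
    Pr (qs n a b μ ν σ) {E | ¬ HasDisc d (Amat E)} ≤ 4 / n^2 := by
  classical
  have hn := h.n_pos
  have hn1 : (1:ℝ) ≤ n := by linarith [h.d_one, h.d_le]
  refine (Pr_mono _ (qs_nonneg h σ) (B := {E | ∃ T ∈ (univ : Finset (Fin n)).powerset, E ∈ {E |
    ∃ S ∈ T.powerset.filter (fun S => S.Nonempty), E ∈ {E : EdgeConf n L |
    ¬ ((∑ u ∈ S, ∑ v ∈ T, Amat E u v) ≤ exp 8 * (d * S.card * T.card / n) ∨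
    (∑ u ∈ S, ∑ v ∈ T, Amat E u v) * log ((∑ u ∈ S, ∑ v ∈ T, Amat E u v) / (d * S.card * T.card / n)) ≤
      28 * tl n T.card)}}}) ?_).trans ?_
  · intro E hE
    have hE' : ¬ HasDisc d (Amat E) := hE
    unfold HasDisc at hE'
    push Not at hE'
    obtain ⟨S, T, hST, hS, h1, h2⟩ := hE'
    refine ⟨T, by simp, S, by simp [hST, hS], ?_⟩
    simp only [Set.mem_ofPred_eq, not_or, not_le]
    exact ⟨h1, h2⟩
  refine (Pr_biUnion_le _ (qs_nonneg h σ) _ _).trans ?_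
  have hT : ∀ T ∈ (univ : Finset (Fin n)).powerset, Pr (qs n a b μ ν σ) {E |
    ∃ S ∈ T.powerset.filter (fun S => S.Nonempty), E ∈ {E : EdgeConf n L |
    ¬ ((∑ u ∈ S, ∑ v ∈ T, Amat E u v) ≤ exp 8 * (d * S.card * T.card / n) ∨
    (∑ u ∈ S, ∑ v ∈ T, Amat E u v) * log ((∑ u ∈ S, ∑ v ∈ T, Amat E u v) / (d * S.card * T.card / n)) ≤
      28 * tl n T.card)}} ≤ (fun t : ℕ => if t = 0 then 0 else (n^2+1) * exp (-6 * tl n t)) T.card := by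
    intro T _
    refine (Pr_biUnion_le _ (qs_nonneg h σ) _ _).trans ?_
    by_cases hT0 : T.card = 0
    · rw [Finset.card_eq_zero] at hT0
      have : T.powerset.filter (fun S => S.Nonempty) = ∅ := by
        rw [hT0]; ext S; simp
      rw [this]; simp [hT0]
    · have hTn : T.card ≤ n := (Finset.card_le_univ T).trans (by simp)
      simp only [hT0, if_false]
      calc _ ≤ ∑ S ∈ T.powerset.filter (fun S => S.Nonempty), (n^2 + 1) * exp (-7 * tl n T.card) := by
            refine Finset.sum_le_sum fun S hS => ?_
            rw [Finset.mem_filter, Finset.mem_powerset] at hS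
            exact disc_ST h σ S T hS.1 hS.2
        _ = (T.powerset.filter (fun S => S.Nonempty)).card * ((n^2 + 1) * exp (-7 * tl n T.card)) := by simp
        _ ≤ exp (tl n T.card) * ((n^2 + 1) * exp (-7 * tl n T.card)) := by
            gcongr
            calc ((T.powerset.filter (fun S => S.Nonempty)).card : ℝ) ≤ (T.powerset.card : ℝ) := by
                  exact_mod_cast Finset.card_filter_le _ _
              _ = 2 ^ T.card := by rw [Finset.card_powerset]; simp
              _ ≤ (exp 1) ^ T.card := by
                  gcongr; have := add_one_le_exp (1:ℝ); linarith
              _ = exp T.card := by rw [← exp_nat_mul, mul_one]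
              _ ≤ _ := exp_le_exp.2 (tl_ge n _ (Nat.pos_of_ne_zero hT0) hTn)
        _ = _ := by rw [mul_left_comm, ← exp_add]; congr 2; ring
  refine (Finset.sum_le_sum hT).trans ?_
  rw [Finset.sum_powerset_apply_card (fun t : ℕ => if t = 0 then (0:ℝ) else (n^2+1) * exp (-6 * tl n t))]
  rw [Finset.card_univ, Fintype.card_fin]
  calc _ ≤ ∑ t ∈ range (n+1), ((n:ℝ)^2+1) * (1/(n:ℝ)^5) := by
        refine Finset.sum_le_sum fun t ht => ?_
        rw [Finset.mem_range, Nat.lt_succ_iff] at ht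
        by_cases ht0 : t = 0
        · simp [ht0]; positivity
        · have htp := Nat.pos_of_ne_zero ht0
          simp only [ht0, if_false, nsmul_eq_mul]
          calc (n.choose t : ℝ) * ((n^2+1) * exp (-6 * tl n t))
              ≤ exp (tl n t) * ((n^2+1) * exp (-6 * tl n t)) := by gcongr; exact choose_tl n t htp ht
            _ = (n^2+1) * exp (-5 * tl n t) := by rw [mul_left_comm, ← exp_add]; congr 2; ring
            _ ≤ (n^2+1) * exp (-5 * log n) := by
                have := tl_log n t htp ht
                gcongr ?_ * exp ?_
                linarith
            _ = (n^2+1) * (1/(n:ℝ)^5) := by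
                congr 1
                rw [neg_mul, exp_neg, one_div]
                congr 1
                rw [show (5:ℝ) = ((5:ℕ):ℝ) by norm_num, exp_nat_mul, exp_log hn]
    _ = (n+1) * (((n:ℝ)^2+1) * (1/(n:ℝ)^5)) := by simp
    _ ≤ (n + n) * (((n:ℝ)^2+(n:ℝ)^2) * (1/(n:ℝ)^5)) := by
        gcongr
        nlinarith
    _ = _ := by field_simp; ring

end

section
variable {L : Type*} [Fintype L] {n : ℕ} {a b d : ℝ} {μ ν : L → ℝ}

lemma prune_T (h : Adm n a b d μ ν) (σ : Fin n → Bool) (hσ : |∑ u, signVec σ u| ≤ n / 10)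
    (T : Finset (Fin n)) (hT : 200 * n / d < T.card) :
    Pr (qs n a b μ ν σ) {E | ∀ u ∈ T, ¬ (degree E u : ℝ) ≤ 3/2 * d} ≤ exp (-2 * n) := by
  have hn := h.n_pos
  have hd : 0 < d := by linarith [h.d_one]
  have hT0 : (0:ℝ) ≤ T.card := by positivity
  set c : Pairs n → ℝ := fun p => ((if p.1.1 ∈ T ∧ p.1.2 ∈ (univ : Finset (Fin n)) then 1 else 0) +
      (if p.1.2 ∈ T ∧ p.1.1 ∈ (univ : Finset (Fin n)) then (1:ℝ) else 0)) with hc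
  have hc01 : ∀ p, 0 ≤ c p ∧ c p ≤ 2 := by
    intro p; simp only [hc]; split_ifs <;> norm_num
  have hcs : ∑ p, c p ≤ T.card * n := by
    have := pairs_ST_card T (univ : Finset (Fin n))
    simpa [hc] using this
  have hc2 : ∑ p, c p^2 ≤ 2 * (T.card * n) := by
    refine le_trans (Finset.sum_le_sum fun p _ => ?_) (?_ : ∑ p, 2 * c p ≤ _)
    · have := hc01 p; nlinarith
    · rw [← Finset.mul_sum]; linarith
  have hmean : ∑ p, c p * ∑ o, qs n a b μ ν σ p o * gA o ≤ 11/10 * (d * T.card) := by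
    have hsp := sum_pairs (fun u v : Fin n => (if u ∈ T then (1:ℝ) else 0) *
      ((d + (a - b)/2 * (signVec σ u * signVec σ v)) / n))
    have hF : ∀ u v, 0 ≤ (d + (a - b)/2 * (signVec σ u * signVec σ v)) / n := by
      intro u v
      apply div_nonneg _ hn.le
      rw [signVec_mul]
      have := h.hb; have := h.hab; have := h.hdd
      split_ifs <;> linarith
    have hdiag : 0 ≤ ∑ u : Fin n, (if u ∈ T then (1:ℝ) else 0) *
      ((d + (a - b)/2 * (signVec σ u * signVec σ u)) / n) :=
      Finset.sum_nonneg fun u _ => mul_nonneg (by positivity) (hF u u)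
    have e1 : ∑ p, c p * ∑ o, qs n a b μ ν σ p o * gA o ≤ ∑ u : Fin n, ∑ v : Fin n, (if u ∈ T then (1:ℝ) else 0) *
      ((d + (a - b)/2 * (signVec σ u * signVec σ v)) / n) := by
      rw [hsp]
      refine le_trans (le_of_eq ?_) (le_add_of_nonneg_right hdiag)
      refine Finset.sum_congr rfl fun p _ => ?_
      rw [qs_gA h, mul_comm (signVec σ p.1.2)]
      simp only [hc, Finset.mem_univ, and_true]
      ring
    refine e1.trans ?_
    have e2 : ∀ u : Fin n, ∑ v : Fin n, (if u ∈ T then (1:ℝ) else 0) *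
      ((d + (a - b)/2 * (signVec σ u * signVec σ v)) / n) ≤ (if u ∈ T then (1:ℝ) else 0) * (11/10 * d) := by
      intro u
      rw [← Finset.mul_sum]
      refine mul_le_mul_of_nonneg_left ?_ (by positivity)
      rw [← Finset.sum_div, Finset.sum_add_distrib, ← Finset.mul_sum, ← Finset.mul_sum]
      simp only [Finset.sum_const, Finset.card_univ, Fintype.card_fin, nsmul_eq_mul]
      rw [div_le_iff₀ hn]
      have e3 : signVec σ u * ∑ v, signVec σ v ≤ n / 10 := by
        refine (le_abs_self _).trans ?_
        rw [abs_mul]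
        have : |signVec σ u| = 1 := by unfold signVec; split_ifs <;> simp
        rw [this, one_mul]; exact hσ
      have e4 : 0 ≤ (a - b)/2 := by linarith [h.hab]
      have e5 : (a - b)/2 ≤ d := by linarith [h.hb, h.hdd]
      calc n * d + (a - b)/2 * (signVec σ u * ∑ v, signVec σ v) ≤ n * d + (a-b)/2 * (n / 10) := by gcongr
        _ ≤ n * d + d * (n / 10) := by gcongr
        _ = _ := by ring
    refine (Finset.sum_le_sum fun u _ => e2 u).trans (le_of_eq ?_)
    rw [← Finset.sum_mul]; simp; ring
  have hb := bernstein (qs n a b μ ν σ) (qs_nonneg h σ) (qs_sum h σ) gA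
    (fun o => by rcases gA01 o with h | h <;> simp [h]) (2 * d / n)
    (fun p => by
      refine le_trans (le_of_eq ?_) (qs_gA_le h σ p)
      refine Finset.sum_congr rfl fun o _ => ?_
      rcases gA01 o with h | h <;> simp [h]) c (1/20) (fun p => by
      rw [abs_le]; have := hc01 p; constructor <;> linarith) (2/5 * (d * T.card)) (by norm_num)
  refine (Pr_mono _ (qs_nonneg h σ) ?_).trans (hb.trans (exp_le_exp.2 ?_))
  · intro E hE
    have hE' : ∀ u ∈ T, ¬ (degree E u : ℝ) ≤ 3/2 * d := hE
    have h1 : 3/2 * (d * T.card) ≤ ∑ u ∈ T, ∑ v ∈ (univ : Finset (Fin n)), Amat E u v := by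
      calc 3/2 * (d * T.card) = ∑ u ∈ T, 3/2 * d := by simp; ring
        _ ≤ _ := Finset.sum_le_sum fun u hu => by rw [← degree_eq]; exact (not_le.1 (hE' u hu)).le
    rw [pairs_ST] at h1
    rw [Set.mem_ofPred_eq]
    simp only [mul_sub, Finset.sum_sub_distrib]
    have h2 : 3/2 * (d * T.card) ≤ ∑ p, c p * gA (E p) := h1
    linarith
  · have h1 : 200 * n < d * T.card := by rw [div_lt_iff₀ hd] at hT; linarith
    calc -(1/20 * (2/5 * (d * T.card))) + (1/20)^2 * (2 * d / n) * ∑ p, c p^2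
        ≤ -(1/20 * (2/5 * (d * (T.card : ℝ)))) + (1/20)^2 * (2 * d / n) * (2 * (T.card * n)) := by gcongr
      _ = -(1/100) * (d * T.card) := by field_simp; ring
      _ ≤ _ := by linarith

open Classical in
lemma prune_all (h : Adm n a b d μ ν) (σ : Fin n → Bool) (hσ : |∑ u, signVec σ u| ≤ n / 10) :
    Pr (qs n a b μ ν σ) {E | ¬ ((univ.filter fun u => ¬ (degree E u : ℝ) ≤ 3/2 * d).card : ℝ) ≤ 200 * n / d}
      ≤ exp (-n) := by
  refine (Pr_mono _ (qs_nonneg h σ) (B := {E | ∃ T ∈ (univ : Finset (Fin n)).powerset.filter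
    (fun T => 200 * n / d < (T.card : ℝ)), E ∈ {E : EdgeConf n L | ∀ u ∈ T, ¬ (degree E u : ℝ) ≤ 3/2 * d}}) ?_).trans ?_
  · intro E hE
    refine ⟨univ.filter fun u => ¬ (degree E u : ℝ) ≤ 3/2 * d, ?_, ?_⟩
    · simp only [Finset.mem_filter, Finset.powerset_univ, Finset.mem_univ, true_and]
      exact not_le.1 hE
    · intro u hu
      exact (Finset.mem_filter.1 hu).2
  refine (Pr_biUnion_le _ (qs_nonneg h σ) _ _).trans ?_
  calc _ ≤ ∑ T ∈ (univ : Finset (Fin n)).powerset.filter (fun T => 200 * n / d < (T.card : ℝ)), exp (-2 * n) := Finset.sum_le_sum fun T hT =>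
        prune_T h σ hσ T (Finset.mem_filter.1 hT).2
    _ = (((univ : Finset (Fin n)).powerset.filter (fun T => 200 * n / d < (T.card : ℝ))).card : ℝ) * exp (-2 * n) := by
        simp
    _ ≤ exp n * exp (-2 * n) := by
        gcongr
        calc _ ≤ ((univ : Finset (Fin n)).powerset.card : ℝ) := by
              exact_mod_cast Finset.card_filter_le _ _
          _ = 2 ^ n := by rw [Finset.card_powerset]; simp
          _ ≤ (exp 1) ^ n := by
              gcongr; have := add_one_le_exp (1:ℝ); linarith
          _ = exp n := by rw [← exp_nat_mul, mul_one]
    _ = _ := by rw [← exp_add]; congr 1; ring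

/-- balance of a uniform assignment -/
lemma balance (n : ℕ) : Pr (fun (_ : Fin n) (_ : Bool) => (1/2 : ℝ)) {σ | ¬ |∑ u, signVec σ u| ≤ n / 10}
    ≤ 2 * exp (-(n / 200)) := by
  have hq : ∀ (p : Fin n) (o : Bool), (0:ℝ) ≤ 1/2 := fun _ _ => by norm_num
  have key : ∀ e : ℝ, e = 1 ∨ e = -1 → Pr (fun (_ : Fin n) (_ : Bool) => (1/2 : ℝ))
      {σ | (n:ℝ) / 100 ≤ ∑ u, (1/10 * (e * if σ u then 1 else -1))} ≤ exp (-(n / 200)) := by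
    intro e he
    have h := Pr_markov (fun (_ : Fin n) (_ : Bool) => (1/2 : ℝ)) hq
      (fun _ o => 1/10 * (e * if o then 1 else -1)) (n / 100)
    refine h.trans ?_
    have h1 : ∑ o : Bool, (1/2 : ℝ) * exp (1/10 * (e * if o then 1 else -1)) = cosh (1/10) := by
      rw [Fintype.sum_bool, cosh_eq]
      rcases he with rfl | rfl <;> simp <;> ring
    rw [Finset.prod_const, h1, Finset.card_univ, Fintype.card_fin]
    calc exp (-(n/100)) * cosh (1/10)^n ≤ exp (-(n/100)) * (exp ((1/10)^2/2))^n := by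
          gcongr
          exact cosh_le_exp_half_sq _
      _ = _ := by rw [← exp_nat_mul, ← exp_add]; congr 1; ring
  refine (Pr_mono _ hq ?_).trans ((Pr_union_le _ hq _ _).trans
    ((add_le_add (key 1 (Or.inl rfl)) (key (-1) (Or.inr rfl))).trans (by linarith)))
  intro σ hσ
  have hσ' : (n:ℝ)/10 < |∑ u, signVec σ u| := not_le.1 hσ
  rw [lt_abs] at hσ'
  rcases hσ' with h | h
  · left
    rw [Set.mem_ofPred_eq]
    rw [← Finset.mul_sum, ← Finset.mul_sum]
    unfold signVec at h; linarith
  · right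
    rw [Set.mem_ofPred_eq]
    rw [← Finset.mul_sum, ← Finset.mul_sum]
    unfold signVec at h; linarith

end

section
variable {L : Type*} [Fintype L] {n : ℕ} {a b d : ℝ} {μ ν : L → ℝ}

lemma sbmProb_eq (A : Set ((Fin n → Bool) × EdgeConf n L)) :
    sbmProb n a b μ ν A = ∑ σ : Fin n → Bool, (1/2:ℝ)^n * Pr (qs n a b μ ν σ) {E | (σ, E) ∈ A} := by
  classical
  unfold sbmProb
  rw [Fintype.sum_prod_type]
  refine Finset.sum_congr rfl fun σ _ => ?_
  unfold Pr
  rw [Finset.mul_sum]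
  refine Finset.sum_congr rfl fun E _ => ?_
  by_cases hE : (σ, E) ∈ A
  · rw [Set.indicator_of_mem hE, Set.indicator_of_mem (show E ∈ {E | (σ, E) ∈ A} from hE)]
    rfl
  · rw [Set.indicator_of_notMem hE, Set.indicator_of_notMem (show E ∉ {E | (σ, E) ∈ A} from hE),
      mul_zero]

/-- the good event of the theorem -/
def GoodEv (n : ℕ) (a b : ℝ) (μ ν w : L → ℝ) : Set ((Fin n → Bool) × EdgeConf n L) :=
  {x | ∀ xh : Fin n → ℝ, (∑ u, xh u ^ 2) = 1 →
            (∀ z : Fin n → ℝ, (∑ u, z u ^ 2) = 1 →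
              |quadForm (Dmat a b μ ν w x.2) z| ≤ |quadForm (Dmat a b μ ν w x.2) xh|) →
            0 < overlap n (signVec x.1) (signR xh)}

lemma abs_al (h : Adm n a b d μ ν) (w : L → ℝ) (hw : ∀ l, -1 ≤ w l ∧ w l ≤ 1) (e : ℝ)
    (he : e = 1 ∨ e = -1) : |(1 / 2) * ∑ ℓ, w ℓ * (a * μ ℓ + e * (b * ν ℓ))| ≤ d := by
  have ha : 0 ≤ a := by linarith [h.hb, h.hab]
  have hb : 0 ≤ b := by linarith [h.hb]
  have h1 : |∑ ℓ, w ℓ * (a * μ ℓ + e * (b * ν ℓ))| ≤ ∑ ℓ, (a * μ ℓ + b * ν ℓ) := by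
    refine (Finset.abs_sum_le_sum_abs _ _).trans (Finset.sum_le_sum fun l _ => ?_)
    have h2 : 0 ≤ a * μ l := mul_nonneg ha (h.hμ.1 l)
    have h3 : 0 ≤ b * ν l := mul_nonneg hb (h.hν.1 l)
    rw [abs_mul]
    have h4 : |w l| ≤ 1 := abs_le.2 (hw l)
    have h5 : |a * μ l + e * (b * ν l)| ≤ a * μ l + b * ν l := by
      rw [abs_le]; rcases he with rfl | rfl <;> constructor <;> linarith
    nlinarith [abs_nonneg (w l), abs_nonneg (a * μ l + e * (b * ν l))]
  rw [Finset.sum_add_distrib, ← Finset.mul_sum, ← Finset.mul_sum, h.hμ.2, h.hν.2] at h1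
  rw [abs_mul, abs_of_pos (by norm_num : (0:ℝ) < 1/2), h.hdd]
  linarith

open Classical in
lemma good_sigma (h : Adm n a b d μ ν) (w : L → ℝ) (hw : ∀ l, -1 ≤ w l ∧ w l ≤ 1)
    (hC : 289 * Kst^2 * (a + b) < ((1 / 2) * ∑ ℓ, w ℓ * (a * μ ℓ - b * ν ℓ)) ^ 2)
    (σ : Fin n → Bool) (hσ : |∑ u, signVec σ u| ≤ n / 10) :
    1 - (2 * exp (-8 * n) + 4 / n^2 + exp (-n)) ≤
      Pr (qs n a b μ ν σ) {E | (σ, E) ∈ GoodEv n a b μ ν w} := by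
  rw [Pr_compl _ (qs_sum h σ)]
  have hd1 := h.d_one
  have hn := h.n_pos
  set al := (1 / 2) * ∑ ℓ, w ℓ * (a * μ ℓ + b * ν ℓ) with hal
  set be := (1 / 2) * ∑ ℓ, w ℓ * (a * μ ℓ - b * ν ℓ) with hbe
  have hal1 : |al| ≤ d := by
    have := abs_al h w hw 1 (Or.inl rfl)
    simp only [one_mul] at this
    exact this
  have hbe1 : |be| ≤ d := by
    have := abs_al h w hw (-1) (Or.inr rfl)
    simp only [neg_one_mul, ← sub_eq_add_neg] at this
    exact this
  have hK0 : 0 ≤ Kst := by unfold Kst Khv; positivity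
  have hdd := h.hdd
  have hK : Kst * √d ≤ |be| / 17 := by
    have : 17 * (Kst * √d) ≤ |be| := by
      apply le_of_sq_le_sq _ (abs_nonneg be)
      rw [sq_abs, mul_pow, mul_pow, Real.sq_sqrt (by linarith)]
      have : 0 ≤ Kst^2 * d := by positivity
      rw [show a + b = 2 * d by linarith] at hC
      nlinarith
    linarith
  have hbe0 : be ≠ 0 := by
    intro h0
    rw [h0] at hC
    have : 0 ≤ 289 * Kst^2 * (a + b) := by
      have : 0 ≤ a + b := by linarith
      positivity
    norm_num at hC; linarith
  have hsub : {E | (σ, E) ∈ GoodEv n a b μ ν w}ᶜ ⊆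
      ({E | ∃ z ∈ netZ n, ¬ |∑ p : Pairs n, lc d (fun u => (z u : ℝ) / (8 * √n)) p *
      (gW w (E p) - ∑ o, qs n a b μ ν σ p o * gW w o)| ≤ 300 * √d} ∪
      {E | ¬ HasDisc d (Amat E)}) ∪
      {E | ¬ ((univ.filter fun u => ¬ (degree E u : ℝ) ≤ 3/2 * d).card : ℝ) ≤ 200 * n / d} := by
    intro E hE
    by_contra hcon
    simp only [Set.mem_union, Set.mem_ofPred_eq, not_or, not_not, not_exists, not_and] at hcon
    obtain ⟨⟨h1, h2⟩, h3⟩ := hcon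
    apply hE
    intro xh hxh hmax
    have hsv : ∀ u, signVec σ u = 1 ∨ signVec σ u = -1 := by
      intro u; unfold signVec; split_ifs <;> simp
    refine overlap_pos (by exact_mod_cast hn) (signVec σ) xh hsv (quadForm (Dmat a b μ ν w E)) be hbe0 ?_ hxh hmax
    intro y hy
    refine le_trans ?_ hK
    refine det_bound a b μ ν w d hdd hd1 h.d_le hw E al be hal hal1 hbe1 (signVec σ) hsv h2 h3 ?_ y hy
    intro z hz
    have := h1 z hz
    simp only [qs_gW] at this
    exact this
  have hb := (Pr_mono _ (qs_nonneg h σ) hsub).trans ((Pr_union_le _ (qs_nonneg h σ) _ _).trans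
    (add_le_add (Pr_union_le _ (qs_nonneg h σ) _ _) le_rfl))
  have b1 := light_all h w hw σ
  have b2 := disc_all h σ
  have b3 := prune_all h σ hσ
  linarith

lemma good_all (h : Adm n a b d μ ν) (w : L → ℝ) (hw : ∀ l, -1 ≤ w l ∧ w l ≤ 1)
    (hC : 289 * Kst^2 * (a + b) < ((1 / 2) * ∑ ℓ, w ℓ * (a * μ ℓ - b * ν ℓ)) ^ 2) :
    1 - 2 * exp (-(n / 200)) - (2 * exp (-8 * n) + 4 / n^2 + exp (-n)) ≤
      sbmProb n a b μ ν (GoodEv n a b μ ν w) ∧ sbmProb n a b μ ν (GoodEv n a b μ ν w) ≤ 1 := by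
  classical
  rw [sbmProb_eq]
  have hq : ∀ (p : Fin n) (o : Bool), (0:ℝ) ≤ 1/2 := fun _ _ => by norm_num
  have hs : ∀ p : Fin n, ∑ o : Bool, (1/2:ℝ) = 1 := fun _ => by simp
  have hone : ∑ σ : Fin n → Bool, (1/2:ℝ)^n = 1 := by simp
  set δ := 2 * exp (-8 * n) + 4 / (n:ℝ)^2 + exp (-n) with hδ
  constructor
  · have hbal := balance n
    have hB := Pr_compl (fun (_ : Fin n) (_ : Bool) => (1/2 : ℝ)) hs {σ | ¬ |∑ u, signVec σ u| ≤ n / 10}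
    have hB2 : Pr (fun (_ : Fin n) (_ : Bool) => (1/2 : ℝ)) {σ | ¬ |∑ u, signVec σ u| ≤ n / 10}ᶜ =
        ∑ σ : Fin n → Bool, (1/2:ℝ)^n * (if |∑ u, signVec σ u| ≤ n / 10 then 1 else 0) := by
      unfold Pr
      refine Finset.sum_congr rfl fun σ _ => ?_
      by_cases hσ : |∑ u, signVec σ u| ≤ n / 10 <;> simp [Set.indicator, hσ]
    calc _ ≤ ∑ σ : Fin n → Bool, (1/2:ℝ)^n * (if |∑ u, signVec σ u| ≤ n / 10 then 1 else 0) -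
          ∑ σ : Fin n → Bool, (1/2:ℝ)^n * δ := by
          rw [← Finset.sum_mul, hone, ← hB2]; linarith
      _ = ∑ σ : Fin n → Bool, (1/2:ℝ)^n * ((if |∑ u, signVec σ u| ≤ n / 10 then 1 else 0) - δ) := by
          rw [← Finset.sum_sub_distrib]
          refine Finset.sum_congr rfl fun σ _ => by ring
      _ ≤ _ := by
          refine Finset.sum_le_sum fun σ _ => mul_le_mul_of_nonneg_left ?_ (by positivity)
          split_ifs with hσ
          · exact good_sigma h w hw hC σ hσ
          · have h1 := Pr_nonneg _ (qs_nonneg h σ) {E | (σ, E) ∈ GoodEv n a b μ ν w}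
            have h2 : 0 ≤ δ := by positivity
            linarith
  · calc _ ≤ ∑ σ : Fin n → Bool, (1/2:ℝ)^n * 1 := by
          refine Finset.sum_le_sum fun σ _ => mul_le_mul_of_nonneg_left ?_ (by positivity)
          rw [← Pr_univ _ (qs_sum h σ)]
          exact Pr_mono _ (qs_nonneg h σ) (Set.subset_univ _)
      _ = 1 := by simp

lemma bound_tendsto : Tendsto (fun n : ℕ => 1 - 2 * exp (-((n:ℝ) / 200)) -
    (2 * exp (-8 * (n:ℝ)) + 4 / (n:ℝ)^2 + exp (-(n:ℝ)))) atTop (nhds 1) := by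
  have hc : Tendsto (fun n : ℕ => (n:ℝ)) atTop atTop := tendsto_natCast_atTop_atTop
  have h1 : Tendsto (fun n : ℕ => exp (-((n:ℝ) / 200))) atTop (nhds 0) :=
    tendsto_exp_neg_atTop_nhds_zero.comp (hc.atTop_div_const (by norm_num))
  have h2 : Tendsto (fun n : ℕ => exp (-8 * (n:ℝ))) atTop (nhds 0) := by
    have := tendsto_exp_neg_atTop_nhds_zero.comp (hc.const_mul_atTop (show (0:ℝ) < 8 by norm_num))
    refine this.congr fun n => ?_
    simp
  have h3 : Tendsto (fun n : ℕ => exp (-(n:ℝ))) atTop (nhds 0) :=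
    tendsto_exp_neg_atTop_nhds_zero.comp hc
  have h4 : Tendsto (fun n : ℕ => 4 / (n:ℝ)^2) atTop (nhds 0) :=
    Tendsto.const_div_atTop ((tendsto_pow_atTop two_ne_zero).comp hc) 4
  have := ((tendsto_const_nhds (x := (1:ℝ))).sub (h1.const_mul 2)).sub (((h2.const_mul 2).add h4).add h3)
  simpa using this

end

/-- **Theorem (Spectral method, Theorem 3).**
There exist universal constants `C₀`, `C` (not depending on `a`, `b`, `μ`, `ν`) such
that under the labeled SBM with `a > b > C₀` and `β² > C (a+b)`, where
`β = (1/2)·∑_ℓ w(ℓ)(aμ(ℓ) - bν(ℓ))`, a.a.s. every maximizer `x̂` of `|xᵀ D' x|` over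
unit vectors (with `D' = W' - (α/n)J` built from the degree-pruned weighted graph)
yields an assignment `sign(x̂)` with positive overlap with the truth. -/
theorem spectral_correlated
    {L : Type*} [Fintype L] :
    ∃ C₀ C : ℝ, ∀ (a b : ℝ) (μ ν w : L → ℝ),
      IsProbVec μ → IsProbVec ν → (∀ ℓ, -1 ≤ w ℓ ∧ w ℓ ≤ 1) →
      b < a → C₀ < b →
      C * (a + b) < ((1 / 2) * ∑ ℓ, w ℓ * (a * μ ℓ - b * ν ℓ)) ^ 2 →
      Filter.Tendsto (fun n : ℕ =>
        sbmProb n a b μ ν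
          {x | ∀ xh : Fin n → ℝ, (∑ u, xh u ^ 2) = 1 →
            (∀ z : Fin n → ℝ, (∑ u, z u ^ 2) = 1 →
              |quadForm (Dmat a b μ ν w x.2) z| ≤ |quadForm (Dmat a b μ ν w x.2) xh|) →
            0 < overlap n (signVec x.1) (signR xh)})
        Filter.atTop (nhds 1) := by
  refine ⟨1, 289 * Kst^2, fun a b μ ν w hμ hν hw hab hb hC => ?_⟩
  have hev : ∀ᶠ n : ℕ in atTop, a ≤ (n:ℝ) := tendsto_natCast_atTop_atTop.eventually_ge_atTop a
  have hadm : ∀ n : ℕ, a ≤ (n:ℝ) → Adm n a b ((a + b) / 2) μ ν := fun n hn =>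
    ⟨hμ, hν, rfl, hb.le, hab.le, hn⟩
  refine tendsto_of_tendsto_of_tendsto_of_le_of_le' bound_tendsto tendsto_const_nhds ?_ ?_
  · filter_upwards [hev] with n hn
    exact (good_all (hadm n hn) w hw hC).1
  · filter_upwards [hev] with n hn
    exact (good_all (hadm n hn) w hw hC).2

end LSBM
end

section
/- Consider the labeled stochastic block model 𝒢(n, a/n, b/n, μ, ν) and suppose τ < 1. Then for any two fixed distinct vertices ρ and v, the conditional probability ℙ_n(σ_ρ = +1 | G, L, σ_v = +1), viewed as a random variable of the observed labeled graph (G, L), converges in probability to 1/2 as n → ∞. -/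
open Finset Filter Real

namespace LSBM

variable {L : Type*}

open Classical in
/-- The conditional probability `ℙ_n(σ_ρ = +1 | G, L, σ_v = +1)`, as a function of the
observed labeled graph. -/
noncomputable def condTypeProb [Fintype L] (n : ℕ) (a b : ℝ) (μ ν : L → ℝ)
    (ρ v : Fin n) (E : EdgeConf n L) : ℝ :=
  (∑ σ : Fin n → Bool, if σ ρ = true ∧ σ v = true then sbmMass n a b μ ν (σ, E) else 0) /
  (∑ σ : Fin n → Bool, if σ v = true then sbmMass n a b μ ν (σ, E) else 0)

/-- sign of a Boolean -/
def sg (s : Bool) : ℝ := if s then 1 else -1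

lemma sg_true : sg true = 1 := rfl
lemma sg_false : sg false = -1 := rfl

lemma sg_beq (s s' : Bool) : sg (s == s') = sg s * sg s' := by
  cases s <;> cases s' <;> simp [sg]

lemma sg_abs (s : Bool) : |sg s| = 1 := by cases s <;> simp [sg]

lemma sg_sq (s : Bool) : sg s * sg s = 1 := by cases s <;> simp [sg]

lemma sg_not (s : Bool) : sg (!s) = - sg s := by cases s <;> simp [sg]

/-- difference mass -/
noncomputable def dMass (n : ℕ) (a b : ℝ) (μ ν : L → ℝ) : Option L → ℝ
  | none => -(a - b) / (2 * n)
  | some ℓ => (a * μ ℓ - b * ν ℓ) / (2 * n)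

lemma er_some (n : ℕ) (a b : ℝ) (hab : 0 < a + b) (μ ν : L → ℝ) (ℓ : L) :
    erPairMass n a b μ ν (some ℓ) = (a * μ ℓ + b * ν ℓ) / (2 * n) := by
  simp only [erPairMass]
  field_simp

lemma sbm_eq (n : ℕ) (a b : ℝ) (hab : 0 < a + b) (μ ν : L → ℝ) (s : Bool) (o : Option L) :
    sbmPairMass n a b μ ν s o = erPairMass n a b μ ν o + sg s * dMass n a b μ ν o := by
  cases o with
  | none => cases s <;> simp [sbmPairMass, erPairMass, dMass, sg] <;> ring
  | some ℓ =>
    rw [er_some n a b hab]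
    cases s <;> simp [sbmPairMass, dMass, sg] <;> ring

lemma er_sum [Fintype L] (n : ℕ) (a b : ℝ) (hab : 0 < a + b) (μ ν : L → ℝ)
    (hμ : IsProbVec μ) (hν : IsProbVec ν) : ∑ o, erPairMass n a b μ ν o = 1 := by
  rw [Fintype.sum_option]
  simp only [er_some n a b hab, ← Finset.sum_div, Finset.sum_add_distrib, ← Finset.mul_sum,
    hμ.2, hν.2]
  simp [erPairMass]

lemma d_sum [Fintype L] (n : ℕ) (a b : ℝ) (μ ν : L → ℝ)
    (hμ : IsProbVec μ) (hν : IsProbVec ν) : ∑ o, dMass n a b μ ν o = 0 := by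
  rw [Fintype.sum_option]
  simp only [dMass, ← Finset.sum_div, Finset.sum_sub_distrib, ← Finset.mul_sum,
    hμ.2, hν.2]
  ring

lemma sbm_sum [Fintype L] (n : ℕ) (a b : ℝ) (hab : 0 < a + b) (μ ν : L → ℝ)
    (hμ : IsProbVec μ) (hν : IsProbVec ν) (s : Bool) :
    ∑ o, sbmPairMass n a b μ ν s o = 1 := by
  simp only [sbm_eq n a b hab, Finset.sum_add_distrib, ← Finset.mul_sum,
    er_sum n a b hab μ ν hμ hν, d_sum n a b μ ν hμ hν]
  ring

/-- pair correlation -/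
noncomputable def tpar [Fintype L] (n : ℕ) (a b : ℝ) (μ ν : L → ℝ) : ℝ :=
  ∑ o, dMass n a b μ ν o ^ 2 / erPairMass n a b μ ν o

lemma d_zero (n : ℕ) (a b : ℝ) (ha : 0 < a) (hb : 0 < b) (μ ν : L → ℝ)
    (hμ : ∀ ℓ, 0 ≤ μ ℓ) (hν : ∀ ℓ, 0 ≤ ν ℓ) (hn : 1 - (a + b) / (2 * n) ≠ 0) (o : Option L)
    (h : erPairMass n a b μ ν o = 0) : dMass n a b μ ν o = 0 := by
  cases o with
  | none => exact absurd h hn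
  | some ℓ =>
    rw [er_some n a b (by positivity)] at h
    rw [div_eq_zero_iff] at h
    simp only [dMass]
    rcases h with h | h
    · have h1 := mul_nonneg ha.le (hμ ℓ)
      have h2 := mul_nonneg hb.le (hν ℓ)
      have h3 : a * μ ℓ = 0 := by linarith
      have h4 : b * ν ℓ = 0 := by linarith
      simp [h3, h4]
    · rw [h]; simp

lemma pair_sum [Fintype L] (n : ℕ) (a b : ℝ) (ha : 0 < a) (hb : 0 < b) (μ ν : L → ℝ)
    (hμ : IsProbVec μ) (hν : IsProbVec ν) (hn : 1 - (a + b) / (2 * n) ≠ 0) (s s' : Bool) :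
    ∑ o, sbmPairMass n a b μ ν s o * sbmPairMass n a b μ ν s' o / erPairMass n a b μ ν o
      = 1 + tpar n a b μ ν * (sg s * sg s') := by
  have hab : 0 < a + b := by positivity
  have key : ∀ o, sbmPairMass n a b μ ν s o * sbmPairMass n a b μ ν s' o / erPairMass n a b μ ν o
      = erPairMass n a b μ ν o + (sg s + sg s') * dMass n a b μ ν o
        + (dMass n a b μ ν o ^ 2 / erPairMass n a b μ ν o) * (sg s * sg s') := by
    intro o
    rw [sbm_eq n a b hab, sbm_eq n a b hab]
    by_cases h : erPairMass n a b μ ν o = 0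
    · rw [d_zero n a b ha hb μ ν hμ.1 hν.1 hn o h, h]; simp
    · field_simp; ring
  simp only [key, Finset.sum_add_distrib, ← Finset.mul_sum, ← Finset.sum_mul,
    er_sum n a b hab μ ν hμ hν, d_sum n a b μ ν hμ hν, tpar]
  ring

lemma tpar_eq [Fintype L] (n : ℕ) (hn0 : 0 < n) (a b : ℝ) (hab : 0 < a + b) (μ ν : L → ℝ) :
    n * tpar n a b μ ν = tau a b μ ν + (a - b) ^ 2 / 4 * (n : ℝ)⁻¹ / (1 - (a + b) / 2 * (n : ℝ)⁻¹) := by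
  have hn : (n : ℝ) ≠ 0 := by positivity
  rw [tpar, Fintype.sum_option, mul_add, tau, Finset.mul_sum]
  rw [add_comm]
  congr 1
  · apply Finset.sum_congr rfl
    intro ℓ _
    rw [er_some n a b hab]
    simp only [dMass]
    by_cases h : a * μ ℓ + b * ν ℓ = 0
    · rw [h]; simp
    · field_simp
      try ring
  · simp only [dMass, erPairMass]
    rw [show (a + b) / (2 * (n:ℝ)) = (a + b) / 2 * (n : ℝ)⁻¹ by field_simp, ← mul_div_assoc]
    congr 1
    field_simp
    ring

lemma tpar_tendsto [Fintype L] (a b : ℝ) (hab : 0 < a + b) (μ ν : L → ℝ) :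
    Tendsto (fun n : ℕ => n * tpar n a b μ ν) atTop (nhds (tau a b μ ν)) := by
  have h0 : Tendsto (fun n : ℕ => (n : ℝ)⁻¹) atTop (nhds 0) := tendsto_inv_atTop_nhds_zero_nat
  have h : Tendsto (fun n : ℕ => tau a b μ ν +
      (a - b) ^ 2 / 4 * (n : ℝ)⁻¹ / (1 - (a + b) / 2 * (n : ℝ)⁻¹)) atTop
      (nhds (tau a b μ ν + (a - b) ^ 2 / 4 * 0 / (1 - (a + b) / 2 * 0))) := by
    refine Tendsto.add tendsto_const_nhds (Tendsto.div (Tendsto.mul tendsto_const_nhds h0)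
      (Tendsto.sub tendsto_const_nhds (Tendsto.mul tendsto_const_nhds h0)) (by simp))
  simp only [mul_zero, zero_div, add_zero] at h
  refine h.congr' ?_
  filter_upwards [eventually_gt_atTop 0] with n hn
  exact (tpar_eq n hn a b hab μ ν).symm

/-- spin sum -/
def spin {n : ℕ} (x : Fin n → Bool) : ℝ := ∑ u, sg (x u)

lemma cosh_sum (n : ℕ) (c : ℝ) :
    (1 / 2 : ℝ) ^ n * ∑ x : Fin n → Bool, Real.exp (c * spin x) = Real.cosh c ^ n := by
  have h : ∀ x : Fin n → Bool, Real.exp (c * spin x) = ∏ u, Real.exp (c * sg (x u)) := by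
    intro x
    rw [spin, Finset.mul_sum, Real.exp_sum]
  simp only [h]
  have := Finset.prod_univ_sum (fun _ : Fin n => (univ : Finset Bool))
    (fun _ s => Real.exp (c * sg s))
  rw [Fintype.piFinset_univ] at this
  rw [← this]
  rw [Finset.prod_const, Finset.card_univ, Fintype.card_fin, ← mul_pow]
  simp [sg, Real.cosh_eq]
  ring

lemma gauss_shift (c : ℝ) :
    ∫ x : ℝ, Real.exp (-(1/2) * x ^ 2 + c * x) = √(2 * π) * Real.exp (c ^ 2 / 2) := by
  have h : ∀ x : ℝ, Real.exp (-(1/2) * x ^ 2 + c * x)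
      = Real.exp (-(1/2) * (x - c) ^ 2) * Real.exp (c ^ 2 / 2) := by
    intro x
    rw [← Real.exp_add]; congr 1; ring
  simp only [h]
  rw [MeasureTheory.integral_mul_const,
    MeasureTheory.integral_sub_right_eq_self (fun x => Real.exp (-(1/2) * x ^ 2)) c,
    integral_gaussian]
  congr 2
  ring

lemma gauss_shift_int (c : ℝ) :
    MeasureTheory.Integrable (fun x : ℝ => Real.exp (-(1/2) * x ^ 2 + c * x)) := by
  have h : ∀ x : ℝ, Real.exp (-(1/2) * x ^ 2 + c * x)
      = Real.exp (-(1/2) * (x - c) ^ 2) * Real.exp (c ^ 2 / 2) := by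
    intro x
    rw [← Real.exp_add]; congr 1; ring
  simp only [h]
  exact ((integrable_exp_neg_mul_sq (by norm_num : (0:ℝ) < 1/2)).comp_sub_right c).mul_const _

lemma gauss_bound (θ : ℝ) (h0 : 0 ≤ θ) (h1 : θ < 1) (n : ℕ) (hn : 0 < n) :
    (1 / 2 : ℝ) ^ n * ∑ x : Fin n → Bool, Real.exp (θ * spin x ^ 2 / (2 * n))
      ≤ √(π / ((1 - θ) / 2)) / √(2 * π) := by
  rw [le_div_iff₀ (by positivity)]
  have hn' : (0:ℝ) < n := by positivity
  set c := √(θ / n) with hc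
  have hc2 : c ^ 2 = θ / n := Real.sq_sqrt (by positivity)
  have e1 : ∀ x : Fin n → Bool, Real.exp (θ * spin x ^ 2 / (2 * n)) * √(2 * π)
      = ∫ g : ℝ, Real.exp (-(1/2) * g ^ 2 + (c * spin x) * g) := by
    intro x
    rw [gauss_shift, mul_comm, mul_pow, hc2]
    congr 2
    field_simp
  rw [mul_assoc, Finset.sum_mul, Finset.sum_congr rfl (fun x _ => e1 x),
    ← MeasureTheory.integral_finsetSum _ (fun x _ => gauss_shift_int _),
    ← MeasureTheory.integral_const_mul, ← integral_gaussian]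
  apply MeasureTheory.integral_mono
  · exact (MeasureTheory.integrable_finsetSum _ (fun x _ => gauss_shift_int _)).const_mul _
  · exact integrable_exp_neg_mul_sq (by linarith)
  · intro g
    have e2 : ∀ x : Fin n → Bool, Real.exp (-(1/2) * g ^ 2 + (c * spin x) * g)
        = Real.exp (-(1/2) * g ^ 2) * Real.exp ((c * g) * spin x) := by
      intro x; rw [← Real.exp_add]; congr 1; ring
    simp only [e2, ← Finset.mul_sum]
    rw [mul_left_comm, cosh_sum]
    calc Real.exp (-(1/2) * g ^ 2) * Real.cosh (c * g) ^ n
        ≤ Real.exp (-(1/2) * g ^ 2) * Real.exp ((c * g) ^ 2 / 2) ^ n := by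
          gcongr
          exact Real.cosh_le_exp_half_sq _
      _ = Real.exp (-((1 - θ) / 2) * g ^ 2) := by
          rw [← Real.exp_nat_mul, ← Real.exp_add, mul_pow, hc2]
          congr 1
          field_simp
          ring

lemma offdiag_prod {n : ℕ} (f : Fin n → Fin n → ℝ) (hf : ∀ u v, f u v = f v u) :
    (∏ p : Pairs n, f p.1.1 p.1.2) ^ 2
      = ∏ q ∈ (univ : Finset (Fin n × Fin n)) with q.1 ≠ q.2, f q.1 q.2 := by
  have h1 : ∏ p : Pairs n, f p.1.1 p.1.2
      = ∏ q ∈ (univ : Finset (Fin n × Fin n)) with q.1 < q.2, f q.1 q.2 := by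
    rw [Finset.prod_subtype (p := fun q : Fin n × Fin n => q.1 < q.2)]
    intro x; simp
  have h2 : ∏ q ∈ (univ : Finset (Fin n × Fin n)) with q.2 < q.1, f q.1 q.2
      = ∏ q ∈ (univ : Finset (Fin n × Fin n)) with q.1 < q.2, f q.1 q.2 := by
    refine Finset.prod_bij' (fun q _ => q.swap) (fun q _ => q.swap) ?_ ?_ ?_ ?_ ?_ <;> simp
    intro u v _; exact hf _ _
  rw [sq, h1]
  nth_rewrite 2 [← h2]
  rw [← Finset.prod_union]
  · apply Finset.prod_congr _ (fun _ _ => rfl)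
    ext q
    simp [lt_or_lt_iff_ne]
  · rw [Finset.disjoint_filter]
    intro q _ h h'
    exact absurd h (not_lt.mpr h'.le)

/-- symmetric weight -/
noncomputable def Fw {n : ℕ} (t : ℝ) (x : Fin n → Bool) : ℝ :=
  ∏ p : Pairs n, (1 + t * (sg (x p.1.1) * sg (x p.1.2)))

lemma one_add_nonneg (t : ℝ) (h0 : 0 ≤ t) (h1 : t ≤ 1) (s s' : Bool) :
    0 ≤ 1 + t * (sg s * sg s') := by
  cases s <;> cases s' <;> simp [sg] <;> linarith

lemma Fw_nonneg {n : ℕ} (t : ℝ) (h0 : 0 ≤ t) (h1 : t ≤ 1) (x : Fin n → Bool) : 0 ≤ Fw t x :=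
  Finset.prod_nonneg fun _ _ => one_add_nonneg t h0 h1 _ _

lemma Fw_perm {n : ℕ} (t : ℝ) (h0 : 0 ≤ t) (h1 : t ≤ 1) (x : Fin n → Bool)
    (ψ : Equiv.Perm (Fin n)) : Fw t (x ∘ ψ) = Fw t x := by
  have h : Fw t (x ∘ ψ) ^ 2 = Fw t x ^ 2 := by
    rw [Fw, Fw, offdiag_prod (fun u v => 1 + t * (sg ((x ∘ ψ) u) * sg ((x ∘ ψ) v)))
      (fun u v => by ring), offdiag_prod (fun u v => 1 + t * (sg (x u) * sg (x v)))
      (fun u v => by ring)]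
    refine Finset.prod_equiv (Equiv.prodCongr ψ ψ) ?_ ?_ <;> simp
  exact (sq_eq_sq₀ (Fw_nonneg t h0 h1 _) (Fw_nonneg t h0 h1 _)).1 h

lemma Fw_le {n : ℕ} (t : ℝ) (h0 : 0 ≤ t) (h1 : t ≤ 1) (x : Fin n → Bool) :
    Fw t x ≤ Real.exp (t * spin x ^ 2 / 2) := by
  have h : Fw t x ^ 2 ≤ Real.exp (t * spin x ^ 2 / 2) ^ 2 := by
    rw [Fw, offdiag_prod (fun u v => 1 + t * (sg (x u) * sg (x v))) (fun u v => by ring)]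
    calc ∏ q ∈ (univ : Finset (Fin n × Fin n)) with q.1 ≠ q.2, (1 + t * (sg (x q.1) * sg (x q.2)))
        ≤ ∏ q ∈ (univ : Finset (Fin n × Fin n)) with q.1 ≠ q.2,
            Real.exp (t * (sg (x q.1) * sg (x q.2))) := by
          apply Finset.prod_le_prod
          · intro q _; exact one_add_nonneg t h0 h1 _ _
          · intro q _
            have := Real.add_one_le_exp (t * (sg (x q.1) * sg (x q.2)))
            linarith
      _ ≤ ∏ q : Fin n × Fin n, Real.exp (t * (sg (x q.1) * sg (x q.2))) := by
          rw [← Finset.prod_filter_mul_prod_filter_not univ (fun q : Fin n × Fin n => q.1 ≠ q.2)]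
          apply le_mul_of_one_le_right (Finset.prod_nonneg fun _ _ => (Real.exp_pos _).le)
          rw [← Real.exp_sum]
          apply Real.one_le_exp
          apply Finset.sum_nonneg
          intro q hq
          simp only [ne_eq, not_not, Finset.mem_filter, Finset.mem_univ, true_and] at hq
          rw [hq, sg_sq]; linarith
      _ = Real.exp (t * spin x ^ 2 / 2) ^ 2 := by
          rw [← Real.exp_sum, ← Real.exp_nat_mul]
          congr 1
          rw [← Finset.mul_sum, Fintype.sum_prod_type, spin, sq, Finset.sum_mul_sum]
          push_cast; ring
  exact (sq_le_sq₀ (Fw_nonneg t h0 h1 _) (Real.exp_pos _).le).1 h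

lemma corr_le {n : ℕ} (hn : 2 ≤ n) (t : ℝ) (h0 : 0 ≤ t) (h1 : t ≤ 1) (ρ v : Fin n) (h : ρ ≠ v) :
    ((n : ℝ) - 1) * ∑ x : Fin n → Bool, sg (x ρ) * sg (x v) * Fw t x
      ≤ ∑ x : Fin n → Bool, |spin x| * Fw t x := by
  have hsw : ∀ w, w ≠ ρ → ∑ x : Fin n → Bool, sg (x ρ) * sg (x w) * Fw t x
      = ∑ x : Fin n → Bool, sg (x ρ) * sg (x v) * Fw t x := by
    intro w hw
    refine Fintype.sum_equiv (Equiv.arrowCongr (Equiv.swap v w) (Equiv.refl Bool)) _ _ ?_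
    intro x
    have e : (Equiv.arrowCongr (Equiv.swap v w) (Equiv.refl Bool)) x = x ∘ (Equiv.swap v w) := by
      ext u; simp [Equiv.arrowCongr]
    rw [e, Fw_perm t h0 h1]
    simp [Equiv.swap_apply_of_ne_of_ne h hw.symm]
  have hcard : ∑ w ∈ univ.erase ρ, ∑ x : Fin n → Bool, sg (x ρ) * sg (x w) * Fw t x
      = ((n : ℝ) - 1) * ∑ x : Fin n → Bool, sg (x ρ) * sg (x v) * Fw t x := by
    rw [Finset.sum_congr rfl (fun w hw => hsw w (Finset.ne_of_mem_erase hw)), Finset.sum_const,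
      Finset.card_erase_of_mem (Finset.mem_univ _), Finset.card_univ, Fintype.card_fin,
      nsmul_eq_mul, Nat.cast_sub (by omega)]
    simp
  rw [← hcard, Finset.sum_comm]
  apply Finset.sum_le_sum
  intro x _
  have hF := Fw_nonneg t h0 h1 x
  rw [← Finset.sum_mul, ← Finset.mul_sum]
  gcongr
  have : ∑ w ∈ univ.erase ρ, sg (x w) = spin x - sg (x ρ) := by
    rw [spin, ← Finset.add_sum_erase _ _ (Finset.mem_univ ρ)]; ring
  rw [this, mul_sub, sg_sq]
  have : sg (x ρ) * spin x ≤ |spin x| := by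
    calc _ ≤ |sg (x ρ) * spin x| := le_abs_self _
      _ = _ := by rw [abs_mul, sg_abs, one_mul]
  linarith

lemma spin_F_le {n : ℕ} (hn : 0 < n) (t θ δ : ℝ) (h0 : 0 ≤ t) (h1 : t ≤ 1) (hδ : 0 < δ)
    (ht : n * t ≤ θ) (x : Fin n → Bool) :
    |spin x| * Fw t x ≤ √n * (1 + 2 / δ) * Real.exp ((θ + δ) * spin x ^ 2 / (2 * n)) := by
  have hn' : (0:ℝ) < n := by positivity
  set z := |spin x| / √n with hz
  have hsn : 0 < √(n:ℝ) := Real.sqrt_pos.2 hn'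
  have hz2 : z ^ 2 = spin x ^ 2 / n := by
    rw [hz, div_pow, sq_abs, Real.sq_sqrt hn'.le]
  have hS : |spin x| = √n * z := by rw [hz]; field_simp
  have hF : Fw t x ≤ Real.exp (θ * z ^ 2 / 2) := by
    refine (Fw_le t h0 h1 x).trans (Real.exp_le_exp.2 ?_)
    rw [hz2]
    have : t * spin x ^ 2 = n * t * (spin x ^ 2 / n) := by field_simp
    rw [this]
    gcongr
  have hzb : z ≤ (1 + 2 / δ) * Real.exp (δ * z ^ 2 / 2) := by
    have e1 := Real.add_one_le_exp (δ * z ^ 2 / 2)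
    have e2 : z ^ 2 ≤ 2 / δ * Real.exp (δ * z ^ 2 / 2) := by
      have : z ^ 2 = 2 / δ * (δ * z ^ 2 / 2) := by field_simp
      nth_rewrite 1 [this]
      gcongr
      linarith
    have e3 : 1 ≤ Real.exp (δ * z ^ 2 / 2) := Real.one_le_exp (by positivity)
    nlinarith [sq_nonneg (z - 1)]
  have hz0 : 0 ≤ z := by positivity
  calc |spin x| * Fw t x ≤ (√n * ((1 + 2 / δ) * Real.exp (δ * z ^ 2 / 2))) *
        Real.exp (θ * z ^ 2 / 2) := by
        rw [hS]
        apply mul_le_mul _ hF (Fw_nonneg t h0 h1 x) (by positivity)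
        gcongr
    _ = √n * (1 + 2 / δ) * (Real.exp (δ * z ^ 2 / 2) * Real.exp (θ * z ^ 2 / 2)) := by ring
    _ = _ := by
        rw [← Real.exp_add, hz2]
        congr 2
        field_simp
        ring

lemma corr_bound {n : ℕ} (hn : 2 ≤ n) (t θ δ : ℝ) (h0 : 0 ≤ t) (h1 : t ≤ 1) (hδ : 0 < δ)
    (hθ : 0 ≤ θ) (hθδ : θ + δ < 1)
    (ht : n * t ≤ θ) (ρ v : Fin n) (h : ρ ≠ v) :
    (1 / 2 : ℝ) ^ n * ∑ x : Fin n → Bool, sg (x ρ) * sg (x v) * Fw t x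
      ≤ √n / ((n : ℝ) - 1) * ((1 + 2 / δ) * (√(π / ((1 - (θ + δ)) / 2)) / √(2 * π))) := by
  have hn2 : (2:ℝ) ≤ n := by exact_mod_cast hn
  have hn1 : (0:ℝ) < n - 1 := by linarith
  rw [div_mul_eq_mul_div, le_div_iff₀ hn1]
  calc (1 / 2 : ℝ) ^ n * (∑ x : Fin n → Bool, sg (x ρ) * sg (x v) * Fw t x) * ((n : ℝ) - 1)
      = (1 / 2 : ℝ) ^ n * (((n : ℝ) - 1) *
          ∑ x : Fin n → Bool, sg (x ρ) * sg (x v) * Fw t x) := by ring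
    _ ≤ (1 / 2 : ℝ) ^ n * ∑ x : Fin n → Bool,
          √n * (1 + 2 / δ) * Real.exp ((θ + δ) * spin x ^ 2 / (2 * n)) := by
        gcongr
        refine (corr_le hn t h0 h1 ρ v h).trans (Finset.sum_le_sum fun x _ => ?_)
        exact spin_F_le (by omega) t θ δ h0 h1 hδ ht x
    _ = √n * (1 + 2 / δ) * ((1 / 2 : ℝ) ^ n * ∑ x : Fin n → Bool,
          Real.exp ((θ + δ) * spin x ^ 2 / (2 * n))) := by
        rw [← Finset.mul_sum]; ring
    _ ≤ √n * (1 + 2 / δ) * (√(π / ((1 - (θ + δ)) / 2)) / √(2 * π)) := by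
        gcongr
        exact gauss_bound (θ + δ) (by linarith) hθδ n (by omega)
    _ = _ := by ring

/-- unnormalised posterior mass -/
noncomputable def Yt [Fintype L] (n : ℕ) (a b : ℝ) (μ ν : L → ℝ) (E : EdgeConf n L) : ℝ :=
  ∑ σ : Fin n → Bool, sbmMass n a b μ ν (σ, E)

/-- unnormalised posterior correlation -/
noncomputable def Zt [Fintype L] (n : ℕ) (a b : ℝ) (μ ν : L → ℝ) (ρ v : Fin n)
    (E : EdgeConf n L) : ℝ :=
  ∑ σ : Fin n → Bool, sg (σ ρ) * sg (σ v) * sbmMass n a b μ ν (σ, E)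

lemma sum_conf_prod [Fintype L] (n : ℕ) (f : Pairs n → Option L → ℝ) :
    ∑ E : EdgeConf n L, ∏ p, f p (E p) = ∏ p, ∑ o, f p o := by
  have := Finset.prod_univ_sum (fun _ : Pairs n => (univ : Finset (Option L))) f
  rw [Fintype.piFinset_univ] at this
  exact this.symm

lemma er_total [Fintype L] (n : ℕ) (a b : ℝ) (hab : 0 < a + b) (μ ν : L → ℝ)
    (hμ : IsProbVec μ) (hν : IsProbVec ν) : ∑ E, erMass n a b μ ν E = 1 := by
  simp only [erMass]
  rw [sum_conf_prod n (fun _ o => erPairMass n a b μ ν o)]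
  simp [er_sum n a b hab μ ν hμ hν]

lemma Yt_total [Fintype L] (n : ℕ) (a b : ℝ) (hab : 0 < a + b) (μ ν : L → ℝ)
    (hμ : IsProbVec μ) (hν : IsProbVec ν) : ∑ E, Yt n a b μ ν E = 1 := by
  simp only [Yt, sbmMass]
  rw [Finset.sum_comm]
  simp only [← Finset.mul_sum]
  have : ∀ σ : Fin n → Bool, ∑ E : EdgeConf n L,
      ∏ p : Pairs n, sbmPairMass n a b μ ν (σ p.1.1 == σ p.1.2) (E p) = 1 := by
    intro σ
    rw [sum_conf_prod n (fun p o => sbmPairMass n a b μ ν (σ p.1.1 == σ p.1.2) o)]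
    simp [sbm_sum n a b hab μ ν hμ hν]
  simp [this]

lemma er_nonneg [Fintype L] (n : ℕ) (a b : ℝ) (ha : 0 < a) (hb : 0 < b) (μ ν : L → ℝ)
    (hμ : IsProbVec μ) (hν : IsProbVec ν) (hn : 0 < 1 - (a + b) / (2 * n)) (E : EdgeConf n L) :
    0 ≤ erMass n a b μ ν E := by
  apply Finset.prod_nonneg
  intro p _
  cases h : E p with
  | none => exact hn.le
  | some ℓ =>
    have := hμ.1 ℓ
    have := hν.1 ℓ
    simp only [erPairMass]; positivity

lemma sbm_nonneg [Fintype L] (n : ℕ) (a b : ℝ) (ha : 0 < a) (hb : 0 < b) (μ ν : L → ℝ)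
    (hμ : IsProbVec μ) (hν : IsProbVec ν) (hna : a / n ≤ 1) (hnb : b / n ≤ 1)
    (x : (Fin n → Bool) × EdgeConf n L) :
    0 ≤ sbmMass n a b μ ν x := by
  apply mul_nonneg (by positivity)
  apply Finset.prod_nonneg
  intro p _
  cases h : x.2 p with
  | none => simp only [sbmPairMass]; split_ifs <;> linarith
  | some ℓ =>
    have := hμ.1 ℓ
    have := hν.1 ℓ
    simp only [sbmPairMass]; split_ifs <;> positivity

lemma sbm_zero [Fintype L] (n : ℕ) (a b : ℝ) (ha : 0 < a) (hb : 0 < b) (μ ν : L → ℝ)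
    (hμ : IsProbVec μ) (hν : IsProbVec ν) (hn : 1 - (a + b) / (2 * n) ≠ 0)
    (σ : Fin n → Bool) (E : EdgeConf n L)
    (h : erMass n a b μ ν E = 0) : sbmMass n a b μ ν (σ, E) = 0 := by
  rw [erMass, Finset.prod_eq_zero_iff] at h
  obtain ⟨p, _, hp⟩ := h
  rw [sbmMass, Finset.prod_eq_zero (Finset.mem_univ p), mul_zero]
  rw [sbm_eq n a b (by positivity), hp, d_zero n a b ha hb μ ν hμ.1 hν.1 hn _ hp]
  simp

/-- second moment -/
lemma second_moment [Fintype L] (n : ℕ) (a b : ℝ) (ha : 0 < a) (hb : 0 < b) (μ ν : L → ℝ)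
    (hμ : IsProbVec μ) (hν : IsProbVec ν) (hn : 1 - (a + b) / (2 * n) ≠ 0) (ρ v : Fin n) :
    ∑ E, Zt n a b μ ν ρ v E ^ 2 / erMass n a b μ ν E
      = (1 / 2 : ℝ) ^ n * ∑ x : Fin n → Bool, sg (x ρ) * sg (x v) * Fw (tpar n a b μ ν) x := by
  set t := tpar n a b μ ν with ht
  have e1 : ∀ E, Zt n a b μ ν ρ v E ^ 2 / erMass n a b μ ν E
      = ∑ σ : Fin n → Bool, ∑ σ' : Fin n → Bool, (1 / 2 : ℝ) ^ n * (1 / 2 : ℝ) ^ n *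
        (sg (σ ρ) * sg (σ v) * (sg (σ' ρ) * sg (σ' v))) *
        ∏ p : Pairs n, (sbmPairMass n a b μ ν (σ p.1.1 == σ p.1.2) (E p) *
          sbmPairMass n a b μ ν (σ' p.1.1 == σ' p.1.2) (E p) / erPairMass n a b μ ν (E p)) := by
    intro E
    rw [Zt, sq, Finset.sum_mul_sum, Finset.sum_div]
    refine Finset.sum_congr rfl fun σ _ => ?_
    rw [Finset.sum_div]
    refine Finset.sum_congr rfl fun σ' _ => ?_
    rw [Finset.prod_div_distrib, Finset.prod_mul_distrib, sbmMass, sbmMass, erMass]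
    ring
  have e2 : ∀ σ σ' : Fin n → Bool, ∑ E : EdgeConf n L, (1 / 2 : ℝ) ^ n * (1 / 2 : ℝ) ^ n *
        (sg (σ ρ) * sg (σ v) * (sg (σ' ρ) * sg (σ' v))) *
        ∏ p : Pairs n, (sbmPairMass n a b μ ν (σ p.1.1 == σ p.1.2) (E p) *
          sbmPairMass n a b μ ν (σ' p.1.1 == σ' p.1.2) (E p) / erPairMass n a b μ ν (E p))
      = (1 / 2 : ℝ) ^ n * (1 / 2 : ℝ) ^ n * (sg (σ ρ == σ' ρ) * sg (σ v == σ' v)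
          * Fw t (fun u => σ u == σ' u)) := by
    intro σ σ'
    rw [← Finset.mul_sum, sum_conf_prod n (fun p o =>
      sbmPairMass n a b μ ν (σ p.1.1 == σ p.1.2) o *
          sbmPairMass n a b μ ν (σ' p.1.1 == σ' p.1.2) o / erPairMass n a b μ ν o)]
    have : ∏ p : Pairs n, ∑ o, (sbmPairMass n a b μ ν (σ p.1.1 == σ p.1.2) o *
          sbmPairMass n a b μ ν (σ' p.1.1 == σ' p.1.2) o / erPairMass n a b μ ν o)
        = Fw t (fun u => σ u == σ' u) := by
      rw [Fw]
      refine Finset.prod_congr rfl fun p _ => ?_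
      rw [pair_sum n a b ha hb μ ν hμ hν hn]
      simp only [sg_beq, ← ht]
      ring
    rw [this]
    simp only [sg_beq]
    ring
  have e3 : ∀ σ : Fin n → Bool, ∑ σ' : Fin n → Bool, (sg (σ ρ == σ' ρ) * sg (σ v == σ' v)
          * Fw t (fun u => σ u == σ' u))
      = ∑ x : Fin n → Bool, sg (x ρ) * sg (x v) * Fw t x := by
    intro σ
    have hinv : Function.Involutive (fun (σ' : Fin n → Bool) (u : Fin n) => σ u == σ' u) := by
      intro σ'
      funext u
      show (σ u == (σ u == σ' u)) = σ' u
      cases σ u <;> cases σ' u <;> rfl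
    exact Fintype.sum_equiv hinv.toPerm _ _ (fun _ => rfl)
  simp only [e1]
  rw [Finset.sum_comm]
  have e4 : ∀ σ : Fin n → Bool, ∑ E : EdgeConf n L, ∑ σ' : Fin n → Bool,
      (1 / 2 : ℝ) ^ n * (1 / 2 : ℝ) ^ n *
        (sg (σ ρ) * sg (σ v) * (sg (σ' ρ) * sg (σ' v))) *
        ∏ p : Pairs n, (sbmPairMass n a b μ ν (σ p.1.1 == σ p.1.2) (E p) *
          sbmPairMass n a b μ ν (σ' p.1.1 == σ' p.1.2) (E p) / erPairMass n a b μ ν (E p))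
      = (1 / 2 : ℝ) ^ n * (1 / 2 : ℝ) ^ n *
        ∑ x : Fin n → Bool, sg (x ρ) * sg (x v) * Fw t x := by
    intro σ
    rw [Finset.sum_comm, Finset.sum_congr rfl (fun σ' _ => e2 σ σ'), ← Finset.mul_sum, e3]
  rw [Finset.sum_congr rfl (fun σ _ => e4 σ), Finset.sum_const, Finset.card_univ]
  simp only [Fintype.card_fun, Fintype.card_bool, Fintype.card_fin, nsmul_eq_mul]
  push_cast
  have : (2:ℝ) ^ n * (1 / 2 : ℝ) ^ n = 1 := by rw [← mul_pow]; norm_num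
  rw [← mul_assoc, ← mul_assoc, this, one_mul]

lemma flip_mass (n : ℕ) (a b : ℝ) (μ ν : L → ℝ) (σ : Fin n → Bool) (E : EdgeConf n L) :
    sbmMass n a b μ ν (fun u => !σ u, E) = sbmMass n a b μ ν (σ, E) := by
  simp only [sbmMass]
  congr 1
  refine Finset.prod_congr rfl fun p _ => ?_
  congr 1
  cases σ p.1.1 <;> cases σ p.1.2 <;> rfl

lemma flip_sum {n : ℕ} (f : (Fin n → Bool) → ℝ) :
    ∑ σ : Fin n → Bool, f (fun u => !σ u) = ∑ σ, f σ := by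
  have hinv : Function.Involutive (fun (σ : Fin n → Bool) (u : Fin n) => !σ u) := by
    intro σ; funext u; simp
  exact Fintype.sum_equiv hinv.toPerm _ _ (fun _ => rfl)

open Classical in
lemma half_sum {n : ℕ} (v : Fin n) (f : (Fin n → Bool) → ℝ) (hf : ∀ σ, f (fun u => !σ u) = f σ) :
    ∑ σ : Fin n → Bool, (if σ v = true then f σ else 0) = (∑ σ, f σ) / 2 := by
  have h1 := flip_sum (fun σ : Fin n → Bool => if σ v = true then f σ else 0)
  simp only [hf] at h1
  have h2 : ∑ σ : Fin n → Bool, f σ = ∑ σ : Fin n → Bool, (if σ v = true then f σ else 0)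
      + ∑ σ : Fin n → Bool, (if (!σ v) = true then f σ else 0) := by
    rw [← Finset.sum_add_distrib]
    refine Finset.sum_congr rfl fun σ _ => ?_
    cases σ v <;> simp
  rw [h2, h1]; ring

lemma cond_eq [Fintype L] (n : ℕ) (a b : ℝ) (μ ν : L → ℝ) (ρ v : Fin n) (E : EdgeConf n L)
    (hY : Yt n a b μ ν E ≠ 0) :
    condTypeProb n a b μ ν ρ v E - 1 / 2 = Zt n a b μ ν ρ v E / (2 * Yt n a b μ ν E) := by
  classical
  have hD := half_sum v (fun σ => sbmMass n a b μ ν (σ, E))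
    (fun σ => flip_mass n a b μ ν σ E)
  have hZ := half_sum v (fun σ => sg (σ ρ) * sg (σ v) * sbmMass n a b μ ν (σ, E))
    (fun σ => by simp only [flip_mass, sg_not]; ring)
  have hN : ∑ σ : Fin n → Bool,
        (if σ v = true then sg (σ ρ) * sg (σ v) * sbmMass n a b μ ν (σ, E) else 0)
      = 2 * (∑ σ : Fin n → Bool,
          if σ ρ = true ∧ σ v = true then sbmMass n a b μ ν (σ, E) else 0)
        - ∑ σ : Fin n → Bool, if σ v = true then sbmMass n a b μ ν (σ, E) else 0 := by
    rw [Finset.mul_sum, ← Finset.sum_sub_distrib]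
    refine Finset.sum_congr rfl fun σ _ => ?_
    cases σ v <;> cases σ ρ <;> simp [sg] <;> ring
  rw [hN] at hZ
  have hZ' : 2 * (∑ σ : Fin n → Bool,
          if σ ρ = true ∧ σ v = true then sbmMass n a b μ ν (σ, E) else 0)
        - Yt n a b μ ν E / 2 = Zt n a b μ ν ρ v E / 2 := by
    rw [Yt, ← hD, Zt, ← hZ]
  have hc : condTypeProb n a b μ ν ρ v E = (∑ σ : Fin n → Bool,
          if σ ρ = true ∧ σ v = true then sbmMass n a b μ ν (σ, E) else 0)
        / (Yt n a b μ ν E / 2) := by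
    rw [Yt, ← hD, condTypeProb]
  rw [hc]
  field_simp
  linarith

lemma graphProb_eq [Fintype L] (n : ℕ) (a b : ℝ) (μ ν : L → ℝ) (A : Set (EdgeConf n L)) :
    sbmGraphProb n a b μ ν A = ∑ E, A.indicator (Yt n a b μ ν) E := by
  classical
  rw [sbmGraphProb, sbmProb, Fintype.sum_prod_type, Finset.sum_comm]
  refine Finset.sum_congr rfl fun E _ => ?_
  by_cases h : E ∈ A
  · simp [Set.indicator, h, Yt]
  · simp [Set.indicator, h]

lemma prob_lower [Fintype L] (n : ℕ) (a b : ℝ) (ha : 0 < a) (hb : 0 < b) (μ ν : L → ℝ)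
    (hμ : IsProbVec μ) (hν : IsProbVec ν) (hn : 0 < 1 - (a + b) / (2 * n))
    (hna : a / n ≤ 1) (hnb : b / n ≤ 1) (ρ v : Fin n) (ε : ℝ) (hε : 0 < ε)
    (A : Set (EdgeConf n L))
    (hA : ∀ E, |condTypeProb n a b μ ν ρ v E - 1 / 2| ≤ ε → E ∈ A) :
    1 - √((1 / 2 : ℝ) ^ n * ∑ x : Fin n → Bool, sg (x ρ) * sg (x v) * Fw (tpar n a b μ ν) x)
        / (2 * ε) ≤ sbmGraphProb n a b μ ν A ∧ sbmGraphProb n a b μ ν A ≤ 1 := by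
  classical
  have hab : 0 < a + b := by positivity
  have hY0 : ∀ E, 0 ≤ Yt n a b μ ν E := fun E =>
    Finset.sum_nonneg fun σ _ => sbm_nonneg n a b ha hb μ ν hμ hν hna hnb _
  have hCS : ∑ E, |Zt n a b μ ν ρ v E| ≤
      √((1 / 2 : ℝ) ^ n * ∑ x : Fin n → Bool, sg (x ρ) * sg (x v) * Fw (tpar n a b μ ν) x) := by
    apply Real.le_sqrt_of_sq_le
    rw [← second_moment n a b ha hb μ ν hμ hν hn.ne' ρ v]
    have := Finset.sum_sq_le_sum_mul_sum_of_sq_eq_mul (univ : Finset (EdgeConf n L))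
      (r := fun E => |Zt n a b μ ν ρ v E|) (f := fun E => erMass n a b μ ν E)
      (g := fun E => Zt n a b μ ν ρ v E ^ 2 / erMass n a b μ ν E)
      (fun E _ => er_nonneg n a b ha hb μ ν hμ hν hn E)
      (fun E _ => div_nonneg (sq_nonneg _) (er_nonneg n a b ha hb μ ν hμ hν hn E))
      (fun E _ => by
        rw [sq_abs]
        by_cases h : erMass n a b μ ν E = 0
        · have : Zt n a b μ ν ρ v E = 0 := by
            rw [Zt]
            exact Finset.sum_eq_zero fun σ _ => by
              rw [sbm_zero n a b ha hb μ ν hμ hν hn.ne' σ E h, mul_zero]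
          rw [this, h]; simp
        · field_simp)
    rwa [er_total n a b hab μ ν hμ hν, one_mul] at this
  have hpt : ∀ E, Yt n a b μ ν E - |Zt n a b μ ν ρ v E| / (2 * ε)
      ≤ A.indicator (Yt n a b μ ν) E := by
    intro E
    by_cases h : E ∈ A
    · rw [Set.indicator_of_mem h]
      have : 0 ≤ |Zt n a b μ ν ρ v E| / (2 * ε) := by positivity
      linarith
    · rw [Set.indicator_of_notMem h]
      rcases (hY0 E).eq_or_lt with h0 | h0
      · rw [← h0]
        have : 0 ≤ |Zt n a b μ ν ρ v E| / (2 * ε) := by positivity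
        linarith
      · have h1 : ε < |condTypeProb n a b μ ν ρ v E - 1 / 2| := by
          by_contra h2
          exact h (hA E (not_lt.1 h2))
        rw [cond_eq n a b μ ν ρ v E h0.ne', abs_div, abs_of_pos (by linarith : 0 < 2 * Yt n a b μ ν E),
          lt_div_iff₀ (by linarith)] at h1
        rw [sub_nonpos, le_div_iff₀ (by linarith)]
        linarith
  rw [graphProb_eq]
  constructor
  · calc _ ≤ 1 - (∑ E, |Zt n a b μ ν ρ v E|) / (2 * ε) := by gcongr
      _ = ∑ E, (Yt n a b μ ν E - |Zt n a b μ ν ρ v E| / (2 * ε)) := by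
        rw [Finset.sum_sub_distrib, Yt_total n a b hab μ ν hμ hν, Finset.sum_div]
      _ ≤ _ := Finset.sum_le_sum fun E _ => hpt E
  · rw [← Yt_total n a b hab μ ν hμ hν]
    exact Finset.sum_le_sum fun E _ => Set.indicator_le_self' (fun _ _ => hY0 _) E

lemma tpar_nonneg [Fintype L] (n : ℕ) (a b : ℝ) (ha : 0 < a) (hb : 0 < b) (μ ν : L → ℝ)
    (hμ : IsProbVec μ) (hν : IsProbVec ν) (hn : 0 < 1 - (a + b) / (2 * n)) :
    0 ≤ tpar n a b μ ν := by
  apply Finset.sum_nonneg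
  intro o _
  apply div_nonneg (sq_nonneg _)
  cases o with
  | none => exact hn.le
  | some ℓ =>
    have := hμ.1 ℓ
    have := hν.1 ℓ
    simp only [erPairMass]; positivity

lemma ratio_tendsto (K ε : ℝ) :
    Tendsto (fun n : ℕ => 1 - √(√(n:ℝ) / ((n : ℝ) - 1) * K) / (2 * ε)) atTop (nhds 1) := by
  have h1 : Tendsto (fun n : ℕ => 2 * (√(n:ℝ))⁻¹) atTop (nhds 0) := by
    have := (tendsto_inv_atTop_zero.comp (Real.tendsto_sqrt_atTop.comp
      (tendsto_natCast_atTop_atTop (R := ℝ)))).const_mul 2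
    simpa using this
  have h2 : Tendsto (fun n : ℕ => √(n:ℝ) / ((n : ℝ) - 1)) atTop (nhds 0) := by
    refine tendsto_of_tendsto_of_tendsto_of_le_of_le' tendsto_const_nhds h1 ?_ ?_
    · filter_upwards [eventually_ge_atTop 2] with n hn
      have : (2:ℝ) ≤ n := by exact_mod_cast hn
      exact div_nonneg (Real.sqrt_nonneg _) (by linarith)
    · filter_upwards [eventually_ge_atTop 2] with n hn
      have h2 : (2:ℝ) ≤ n := by exact_mod_cast hn
      have hs : 0 < √(n:ℝ) := Real.sqrt_pos.2 (by linarith)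
      rw [div_le_iff₀ (by linarith), ← div_eq_mul_inv, div_mul_eq_mul_div, le_div_iff₀ hs,
        Real.mul_self_sqrt (by linarith)]
      linarith
  have h3 : Tendsto (fun n : ℕ => 1 - √(√(n:ℝ) / ((n : ℝ) - 1) * K) / (2 * ε)) atTop
      (nhds (1 - √(0 * K) / (2 * ε))) :=
    tendsto_const_nhds.sub (((Real.continuous_sqrt.tendsto _).comp (h2.mul_const K)).div_const _)
  simpa using h3

/-- **Theorem (Non-reconstruction, Theorem 5).**
If `τ < 1`, then for any two fixed distinct vertices `ρ` and `v`, the conditional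
probability `ℙ_n(σ_ρ = +1 | G, L, σ_v = +1)`, viewed as a random variable of the
observed labeled graph, converges in probability to `1/2` as `n → ∞`. -/
theorem non_reconstruction
    {L : Type*} [Fintype L] (a b : ℝ) (ha : 0 < a) (hb : 0 < b)
    (μ ν : L → ℝ) (hμ : IsProbVec μ) (hν : IsProbVec ν)
    (htau : tau a b μ ν < 1) (ρ v : ℕ) (hρv : ρ ≠ v) :
    ∀ ε : ℝ, 0 < ε →
      Filter.Tendsto (fun n : ℕ =>
        sbmGraphProb n a b μ ν
          {E | ∀ (hρ : ρ < n) (hv : v < n),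
            |condTypeProb n a b μ ν ⟨ρ, hρ⟩ ⟨v, hv⟩ E - 1 / 2| ≤ ε})
        Filter.atTop (nhds 1) := by

  intro ε hε
  have hab : 0 < a + b := by positivity
  have hτ0 : 0 ≤ tau a b μ ν := by
    apply Finset.sum_nonneg
    intro ℓ _
    have := hμ.1 ℓ
    have := hν.1 ℓ
    positivity
  set τ := tau a b μ ν with hτ
  obtain ⟨θ, hθ1, hθ2⟩ := exists_between htau
  obtain ⟨θ', hθ3, hθ4⟩ := exists_between hθ2
  set K := (1 + 2 / (θ' - θ)) * (√(π / ((1 - (θ + (θ' - θ))) / 2)) / √(2 * π)) with hK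
  have hinv : ∀ c : ℝ, Tendsto (fun n : ℕ => c / (n : ℝ)) atTop (nhds 0) := fun c =>
    tendsto_const_div_atTop_nhds_zero_nat c
  have hev : ∀ᶠ n : ℕ in atTop,
      1 - √(√(n:ℝ) / ((n : ℝ) - 1) * K) / (2 * ε) ≤ sbmGraphProb n a b μ ν
          {E | ∀ (hρ : ρ < n) (hv : v < n),
            |condTypeProb n a b μ ν ⟨ρ, hρ⟩ ⟨v, hv⟩ E - 1 / 2| ≤ ε} ∧
      sbmGraphProb n a b μ ν
          {E | ∀ (hρ : ρ < n) (hv : v < n),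
            |condTypeProb n a b μ ν ⟨ρ, hρ⟩ ⟨v, hv⟩ E - 1 / 2| ≤ ε} ≤ 1 := by
    filter_upwards [eventually_gt_atTop ρ, eventually_gt_atTop v, eventually_ge_atTop 2,
      (hinv a).eventually_lt_const one_pos, (hinv b).eventually_lt_const one_pos,
      (hinv ((a + b) / 2)).eventually_lt_const one_pos,
      (tpar_tendsto a b hab μ ν).eventually_lt_const hθ1] with n hρ hv hn hna hnb hnab ht
    have hn' : 0 < 1 - (a + b) / (2 * (n:ℝ)) := by
      rw [← div_div]; linarith
    have ht0 := tpar_nonneg n a b ha hb μ ν hμ hν hn'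
    have hn2 : (2:ℝ) ≤ n := by exact_mod_cast hn
    have ht1 : tpar n a b μ ν ≤ 1 := by nlinarith
    have hne : (⟨ρ, hρ⟩ : Fin n) ≠ ⟨v, hv⟩ := by simpa using hρv
    obtain ⟨h1, h2⟩ := prob_lower n a b ha hb μ ν hμ hν hn' hna.le hnb.le ⟨ρ, hρ⟩ ⟨v, hv⟩ ε hε
      {E | ∀ (hρ : ρ < n) (hv : v < n),
            |condTypeProb n a b μ ν ⟨ρ, hρ⟩ ⟨v, hv⟩ E - 1 / 2| ≤ ε} (fun E hE _ _ => hE)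
    refine ⟨le_trans ?_ h1, h2⟩
    have hb := corr_bound hn (tpar n a b μ ν) θ (θ' - θ) ht0 ht1 (by linarith) (by linarith)
      (by linarith) ht.le ⟨ρ, hρ⟩ ⟨v, hv⟩ hne
    have := Real.sqrt_le_sqrt hb
    gcongr
  exact tendsto_of_tendsto_of_tendsto_of_le_of_le' (ratio_tendsto K ε) tendsto_const_nhds
    (hev.mono fun _ h => h.1) (hev.mono fun _ h => h.2)

end LSBM
end
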